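/- arXiv:1801.10493 — 2 statements merged into one kernel-verified Lean document; each statement's English description precedes it below -/
import Mathlib

section
/- Let N ≥ 3, 0 ≤ k ≤ N−1 and 0 ≤ σ ≤ 2 (with k ≠ N−2 when σ = 2). Then there exists a constant C > 0, depending only on N, k and σ, such that for every v ∈ D^{1,2}(ℝ^N) one has ∫_{ℝ^N} |∇v|² dx ≥ C (∫_{ℝ^N} |z|^{−σ} |v|^{2*_σ} dx)^{2/2*_σ}. -/
open MeasureTheory Filter Metric Set Bornology

noncomputable section

abbrev Euc (N : ℕ) := EuclideanSpace ℝ (Fin N)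

/-- Euclidean norm of the `z`-component (the last `N - k` coordinates) of `x ∈ ℝ^N`. -/
def zNorm (N k : ℕ) (x : Euc N) : ℝ :=
  Real.sqrt (∑ i : Fin N, if k ≤ (i : ℕ) then (x i) ^ 2 else 0)

/-- Euclidean norm of the `t`-component (the first `k` coordinates) of `x ∈ ℝ^N`. -/
def tNorm (N k : ℕ) (x : Euc N) : ℝ :=
  Real.sqrt (∑ i : Fin N, if (i : ℕ) < k then (x i) ^ 2 else 0)

/-- The critical Hardy–Sobolev exponent `2*_σ = 2(N-σ)/(N-2)`. -/
def twoStar (N : ℕ) (σ : ℝ) : ℝ := 2 * ((N : ℝ) - σ) / ((N : ℝ) - 2)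

/-- Dirichlet energy `∫ |∇v|²`. -/
def gradL2 (N : ℕ) (v : Euc N → ℝ) : ℝ := ∫ x, ‖fderiv ℝ v x‖ ^ 2

/-- Hardy–Sobolev integral `∫ |z|^{-σ} |v|^{2*_σ}`. -/
def hsInt (N k : ℕ) (σ : ℝ) (v : Euc N → ℝ) : ℝ :=
  ∫ x, zNorm N k x ^ (-σ) * |v x| ^ twoStar N σ

/-- Membership in `D^{1,2}(ℝ^N)`, the completion of `C_c^∞(ℝ^N)` for the norm
`v ↦ (∫ |∇v|²)^{1/2}`: `v` is a limit of smooth compactly supported functions, with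
gradients converging in `L²` (and, via the Sobolev embedding of the completion,
the functions converging in `L^{2N/(N-2)}`). -/
def MemD12 (N : ℕ) (v : Euc N → ℝ) : Prop :=
  ∃ φ : ℕ → Euc N → ℝ,
    (∀ n, ContDiff ℝ (⊤ : ℕ∞) (φ n) ∧ HasCompactSupport (φ n)) ∧
    Tendsto (fun n => eLpNorm (fun x => v x - φ n x)
      (ENNReal.ofReal (2 * (N : ℝ) / ((N : ℝ) - 2))) volume) atTop (nhds 0) ∧
    Tendsto (fun n => eLpNorm (fun x => fderiv ℝ v x - fderiv ℝ (φ n) x) 2 volume)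
      atTop (nhds 0)

/-- The best constant `S_{N,σ}` in the cylindrical Hardy–Sobolev inequality. -/
def Sconst (N k : ℕ) (σ : ℝ) : ℝ :=
  sInf {s : ℝ | ∃ v, MemD12 N v ∧ hsInt N k σ v = 1 ∧ s = gradL2 N v}

/-- A (positive) ground state for `S_{N,σ}`. -/
def GroundState (N k : ℕ) (σ : ℝ) (w : Euc N → ℝ) : Prop :=
  MemD12 N w ∧ (∀ x, 0 < w x) ∧ hsInt N k σ w = 1 ∧ gradL2 N w = Sconst N k σ

/-- Membership in `H¹₀(Ω)`: limit of smooth functions compactly supported in `Ω`,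
in the `H¹` norm. -/
def MemH10 (N : ℕ) (Ω : Set (Euc N)) (u : Euc N → ℝ) : Prop :=
  ∃ φ : ℕ → Euc N → ℝ,
    (∀ n, ContDiff ℝ (⊤ : ℕ∞) (φ n) ∧ HasCompactSupport (φ n) ∧ tsupport (φ n) ⊆ Ω) ∧
    Tendsto (fun n => eLpNorm (fun x => u x - φ n x) 2 volume) atTop (nhds 0) ∧
    Tendsto (fun n => eLpNorm (fun x => fderiv ℝ u x - fderiv ℝ (φ n) x) 2 volume)
      atTop (nhds 0)

/-- Coercivity of the operator `-Δ + h` on `H¹₀(Ω)`. -/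
def CoerciveOp (N : ℕ) (Ω : Set (Euc N)) (h : Euc N → ℝ) : Prop :=
  ∃ c > 0, ∀ u, MemH10 N Ω u →
    c * ∫ x in Ω, (‖fderiv ℝ u x‖ ^ 2 + u x ^ 2) ≤
      ∫ x in Ω, (‖fderiv ℝ u x‖ ^ 2 + h x * u x ^ 2)

/-- The Hardy–Sobolev quotient of `u` on `Ω` with singularity `Γ` and potential `h`. -/
def hsQuot (N : ℕ) (σ : ℝ) (Ω Γ : Set (Euc N)) (h : Euc N → ℝ) (u : Euc N → ℝ) : ℝ :=
  ((∫ x in Ω, ‖fderiv ℝ u x‖ ^ 2) + ∫ x in Ω, h x * u x ^ 2) /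
    (∫ x in Ω, infDist x Γ ^ (-σ) * |u x| ^ twoStar N σ) ^ (2 / twoStar N σ)

/-- The best constant `μ_{h,σ}(Ω,Γ)`. -/
def muHS (N : ℕ) (σ : ℝ) (Ω Γ : Set (Euc N)) (h : Euc N → ℝ) : ℝ :=
  sInf {m : ℝ | ∃ u, MemH10 N Ω u ∧ ¬ (u =ᵐ[volume.restrict Ω] (0 : Euc N → ℝ)) ∧
    m = hsQuot N σ Ω Γ h u}

/-- The pointwise Laplacian of `f : ℝ^N → ℝ`. -/
def lapl (N : ℕ) (f : Euc N → ℝ) (x : Euc N) : ℝ :=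
  ∑ i : Fin N, fderiv ℝ (fun y => fderiv ℝ f y (EuclideanSpace.single i 1)) x
    (EuclideanSpace.single i 1)

open scoped ENNReal NNReal

lemma aux_lint_small {ρ σ : ℝ} (hρ : 0 < ρ) (hσ : σ < 1) :
    ∫⁻ s in Ioo 0 ρ, ENNReal.ofReal (s ^ (-σ)) = ENNReal.ofReal (ρ ^ (1 - σ) / (1 - σ)) := by
  rw [← setLIntegral_congr Ioo_ae_eq_Ioc.symm, ← ofReal_integral_eq_lintegral_ofReal]
  · rw [← intervalIntegral.integral_of_le hρ.le, integral_rpow (Or.inl (by linarith))]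
    rw [show -σ + 1 = 1 - σ by ring, Real.zero_rpow (by linarith)]
    simp
  · refine (intervalIntegrable_iff_integrableOn_Ioc_of_le hρ.le).1 ?_
    exact intervalIntegral.intervalIntegrable_rpow' (by linarith)
  · filter_upwards [ae_restrict_mem measurableSet_Ioc] with s hs
    exact Real.rpow_nonneg hs.1.le _

lemma aux_lint_large {ρ b : ℝ} (hρ : 0 < ρ) (hb : 1 < b) :
    ∫⁻ s in Ioi ρ, ENNReal.ofReal (s ^ (-b)) = ENNReal.ofReal (ρ ^ (1 - b) / (b - 1)) := by
  rw [← ofReal_integral_eq_lintegral_ofReal]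
  · rw [integral_Ioi_rpow_of_lt (by linarith) hρ]
    congr 1
    rw [show -b + 1 = 1 - b by ring, neg_div, ← div_neg]; congr 1; ring
  · exact integrableOn_Ioi_rpow_of_lt (by linarith) hρ
  · filter_upwards [ae_restrict_mem measurableSet_Ioi] with s hs
    exact Real.rpow_nonneg (hρ.trans hs).le _

lemma aux_lint_symm (f : ℝ → ℝ≥0∞) :
    ∫⁻ s, f s = (∫⁻ s in Ioi 0, f s) + ∫⁻ s in Ioi 0, f (-s) := by
  have h1 : ∫⁻ s, f s = (∫⁻ s in Ioi 0, f s) + ∫⁻ s in (Ioi 0)ᶜ, f s :=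
    (lintegral_add_compl f measurableSet_Ioi).symm
  rw [h1]; congr 1
  rw [compl_Ioi, ← setLIntegral_congr Iio_ae_eq_Iic]
  have := (Measure.measurePreserving_neg (volume : Measure ℝ)).setLIntegral_comp_preimage_emb
    (MeasurableEquiv.neg ℝ).measurableEmbedding f (Iio 0)
  rw [← this]
  simp

/-- One-dimensional Hardy inequality in integrated form. -/
lemma aux_hardy1 (G : ℝ → ℝ≥0∞) (hG : Measurable G) :
    ∫⁻ s in Ioi (0:ℝ), ENNReal.ofReal (s ^ (-2:ℝ)) * (∫⁻ r in Ioo 0 s, G r) ^ (2:ℝ) ≤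
      4 * ∫⁻ r in Ioi (0:ℝ), G r ^ (2:ℝ) := by
  have h1 : ∀ s ∈ Ioi (0:ℝ), ENNReal.ofReal (s ^ (-2:ℝ)) * (∫⁻ r in Ioo 0 s, G r) ^ (2:ℝ) ≤
      ∫⁻ r in Ioi (0:ℝ), (Ioi r).indicator (fun s => ENNReal.ofReal (2 * s ^ (-(3/2:ℝ)))) s *
        (G r ^ (2:ℝ) * ENNReal.ofReal (r ^ (1/2:ℝ))) := by
    intro s hs
    have hs : 0 < s := hs
    have hh : (∫⁻ r in Ioo 0 s, G r) ^ (2:ℝ) ≤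
        (∫⁻ r in Ioo 0 s, G r ^ (2:ℝ) * ENNReal.ofReal (r ^ (1/2:ℝ))) *
          (∫⁻ r in Ioo 0 s, ENNReal.ofReal (r ^ (-(1/2:ℝ)))) := by
      have := ENNReal.lintegral_mul_norm_pow_le (μ := volume.restrict (Ioo 0 s))
        (f := fun r => G r ^ (2:ℝ) * ENNReal.ofReal (r ^ (1/2:ℝ)))
        (g := fun r => ENNReal.ofReal (r ^ (-(1/2:ℝ)))) (by fun_prop) (by fun_prop)
        (p := 1/2) (q := 1/2) (by norm_num) (by norm_num) (by norm_num)
      have h2 : ∫⁻ r in Ioo 0 s, G r = ∫⁻ r in Ioo 0 s,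
          (G r ^ (2:ℝ) * ENNReal.ofReal (r ^ (1/2:ℝ))) ^ (1/2:ℝ) *
            (ENNReal.ofReal (r ^ (-(1/2:ℝ)))) ^ (1/2:ℝ) := by
        refine setLIntegral_congr_fun measurableSet_Ioo fun r hr => ?_
        rw [← ENNReal.mul_rpow_of_nonneg _ _ (by norm_num), mul_assoc, 
          ← ENNReal.ofReal_mul (Real.rpow_nonneg hr.1.le _), ← Real.rpow_add hr.1]
        norm_num
        rw [← ENNReal.rpow_natCast, ← ENNReal.rpow_mul]; norm_num
      rw [h2]
      refine (ENNReal.rpow_le_rpow this (by norm_num)).trans_eq ?_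
      rw [ENNReal.mul_rpow_of_nonneg _ _ (by norm_num), ← ENNReal.rpow_mul, ← ENNReal.rpow_mul]
      norm_num
    have hi : ∫⁻ r in Ioi (0:ℝ), (Ioi r).indicator (fun s => ENNReal.ofReal (2 * s ^ (-(3/2:ℝ)))) s *
        (G r ^ (2:ℝ) * ENNReal.ofReal (r ^ (1/2:ℝ))) =
        ENNReal.ofReal (2 * s ^ (-(3/2:ℝ))) *
          ∫⁻ r in Ioo 0 s, (G r ^ (2:ℝ) * ENNReal.ofReal (r ^ (1/2:ℝ))) := by
      rw [← lintegral_const_mul _ (by fun_prop), ← Ioi_inter_Iio, inter_comm,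
        ← setLIntegral_indicator measurableSet_Iio]
      refine lintegral_congr fun r => ?_
      by_cases h : r < s <;> simp [indicator, h]
    rw [hi]
    rw [aux_lint_small hs (by norm_num)] at hh
    calc _ ≤ ENNReal.ofReal (s ^ (-2:ℝ)) * ((∫⁻ r in Ioo 0 s, G r ^ (2:ℝ) * ENNReal.ofReal (r ^ (1/2:ℝ))) * ENNReal.ofReal (s ^ (1 - 1/2:ℝ) / (1 - 1/2))) := by
            gcongr
      _ = (ENNReal.ofReal (s ^ (-2:ℝ)) * ENNReal.ofReal (s ^ (1 - 1/2:ℝ) / (1 - 1/2))) * (∫⁻ r in Ioo 0 s, G r ^ (2:ℝ) * ENNReal.ofReal (r ^ (1/2:ℝ))) := by ring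
      _ = _ := by
        congr 1
        rw [← ENNReal.ofReal_mul (by positivity)]
        congr 1
        rw [mul_div_assoc', ← Real.rpow_add hs]; norm_num; ring
  refine (setLIntegral_mono' measurableSet_Ioi h1).trans ?_
  have hmeas : Measurable (Function.uncurry fun (s r : ℝ) =>
      (Ioi r).indicator (fun s => ENNReal.ofReal (2 * s ^ (-(3/2:ℝ)))) s *
        (G r ^ (2:ℝ) * ENNReal.ofReal (r ^ (1/2:ℝ)))) := by
    have : Measurable (fun z : ℝ × ℝ => {z : ℝ × ℝ | z.2 < z.1}.indicator
        (fun z => ENNReal.ofReal (2 * z.1 ^ (-(3/2:ℝ)))) z) :=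
      Measurable.indicator (by fun_prop) (measurableSet_lt measurable_snd measurable_fst)
    exact this.mul (by fun_prop)
  rw [lintegral_lintegral_swap hmeas.aemeasurable, ← lintegral_const_mul _ (by fun_prop)]
  refine setLIntegral_mono' measurableSet_Ioi fun r hr => ?_
  have hr : 0 < r := hr
  rw [lintegral_mul_const _ (Measurable.indicator (by fun_prop) measurableSet_Ioi),
    setLIntegral_indicator measurableSet_Ioi,
    inter_eq_left.2 (Ioi_subset_Ioi hr.le)]
  simp_rw [ENNReal.ofReal_mul (zero_le_two (α := ℝ))]
  rw [lintegral_const_mul _ (by fun_prop), aux_lint_large hr (by norm_num),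
    mul_comm (G r ^ _), ← mul_assoc, ← ENNReal.ofReal_mul (by norm_num),
    ← ENNReal.ofReal_mul (by positivity)]
  gcongr
  rw [mul_assoc, div_mul_eq_mul_div, ← Real.rpow_add hr]
  norm_num

/-- vanishing at zero from weighted integrability -/
lemma aux_trace (w G : ℝ → ℝ≥0∞) {σ p : ℝ} (hσ : 1 ≤ σ) (hp : 0 < p)
    (T : Set ℝ) (hT : ∀ᵐ s, s ∈ T)
    (hw : ∀ s' ∈ T, ∀ s ∈ T, 0 < s' → s' < s → w s ≤ w s' + ∫⁻ r in Ioo 0 s, G r)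
    (hfin : ∫⁻ s in Ioi (0:ℝ), ENNReal.ofReal (s ^ (-σ)) * w s ^ p ≠ ∞) :
    ∀ᵐ s, 0 < s → w s ≤ ∫⁻ r in Ioo 0 s, G r := by
  filter_upwards [hT] with s hsT hs
  by_contra hcon
  push Not at hcon
  apply hfin
  set δ := w s - ∫⁻ r in Ioo 0 s, G r with hδ
  have hδ0 : δ ≠ 0 := (tsub_pos_of_lt hcon).ne'
  have h1 : ∀ s' ∈ T, 0 < s' → s' < s → δ ≤ w s' := fun s' h h' h'' =>
    tsub_le_iff_right.2 (hw s' h s hsT h' h'')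
  set m := min s 1 with hm
  have hm0 : 0 < m := lt_min hs one_pos
  have h2 : ∫⁻ s in Ioo (0:ℝ) m, ENNReal.ofReal (s ^ (-1:ℝ)) = ∞ := by
    by_contra hne
    have : IntegrableOn (fun s : ℝ => s ^ (-1:ℝ)) (Ioo 0 m) := by
      refine ⟨by fun_prop, ?_⟩
      rw [hasFiniteIntegral_iff_ofReal]
      · exact lt_top_iff_ne_top.2 hne
      · filter_upwards [ae_restrict_mem measurableSet_Ioo] with x hx
        exact Real.rpow_nonneg hx.1.le _
    rw [intervalIntegral.integrableOn_Ioo_rpow_iff hm0] at this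
    norm_num at this
  rw [eq_top_iff]
  calc ∞ = (∫⁻ s in Ioo (0:ℝ) m, ENNReal.ofReal (s ^ (-1:ℝ))) * δ ^ p := by
        rw [h2, ENNReal.top_mul]
        simp [hδ0, hp.le]
    _ = ∫⁻ s in Ioo (0:ℝ) m, ENNReal.ofReal (s ^ (-1:ℝ)) * δ ^ p := by
        rw [lintegral_mul_const _ (by fun_prop)]
    _ ≤ ∫⁻ s in Ioo (0:ℝ) m, ENNReal.ofReal (s ^ (-σ)) * w s ^ p := by
        refine lintegral_mono_ae ?_
        filter_upwards [ae_restrict_mem measurableSet_Ioo, ae_restrict_of_ae hT] with x hx hxT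
        gcongr ENNReal.ofReal ?_ * ?_ ^ p
        · exact Real.rpow_le_rpow_of_exponent_ge hx.1 (hx.2.le.trans (min_le_right _ _)) (by linarith)
        · exact h1 x hxT hx.1 (hx.2.trans_le (min_le_left _ _))
    _ ≤ _ := lintegral_mono_set Ioo_subset_Ioi_self

lemma ts_two_le {N : ℕ} (hN : 3 ≤ N) {σ : ℝ} (hσ : σ ≤ 2) : 2 ≤ twoStar N σ := by
  have : (3:ℝ) ≤ N := by exact_mod_cast hN
  unfold twoStar
  rw [le_div_iff₀ (by linarith)]; linarith

lemma aux_enorm_rpow (a : ℝ) {p : ℝ} (hp : 0 ≤ p) : ‖a‖ₑ ^ p = ENNReal.ofReal (|a| ^ p) := by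
  rw [← ofReal_norm, ENNReal.ofReal_rpow_of_nonneg (norm_nonneg _) hp, Real.norm_eq_abs]

lemma aux_L1_real {N : ℕ} (hN : 3 ≤ N) {σ : ℝ} (h0 : 0 ≤ σ) (h1 : σ < 1) {a M s ρ : ℝ} (ha : 0 ≤ a)
    (haM : a ≤ M) (hM : 0 < M) (hs : 0 < s) (hρ : ρ = M ^ (-(2 / ((N:ℝ) - 2)))) :
    s ^ (-σ) * a ^ twoStar N σ ≤ a ^ twoStar N 0 + (if s ≤ ρ then s ^ (-σ) * M ^ twoStar N σ else s ^ (-(N:ℝ))) := by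
  have hN' : (3:ℝ) ≤ N := by exact_mod_cast hN
  have hX : (0:ℝ) < (N:ℝ) - 2 := by linarith
  have hp := ts_two_le hN (σ := σ) (by linarith)
  split_ifs with h
  · have : s ^ (-σ) * a ^ twoStar N σ ≤ s ^ (-σ) * M ^ twoStar N σ := by gcongr
    have : 0 ≤ a ^ twoStar N 0 := by positivity
    linarith
  · set b := s ^ (-(((N:ℝ) - 2)/2)) with hb
    have hb0 : 0 < b := by positivity
    rcases le_total b a with hba | hba
    · have e1 : s ^ (-σ) = b ^ (2 * σ / ((N:ℝ) - 2)) := by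
        rw [hb, ← Real.rpow_mul hs.le]; congr 1; field_simp
      have ha0 : 0 < a := hb0.trans_le hba
      have : s ^ (-σ) * a ^ twoStar N σ ≤ a ^ twoStar N 0 := by
        calc _ ≤ a ^ (2 * σ / ((N:ℝ) - 2)) * a ^ twoStar N σ := by rw [e1]; gcongr
          _ = _ := by rw [← Real.rpow_add ha0]; congr 1; unfold twoStar; field_simp; ring
      have : 0 ≤ s ^ (-(N:ℝ)) := by positivity
      linarith
    · have : s ^ (-σ) * a ^ twoStar N σ ≤ s ^ (-(N:ℝ)) := by
        calc _ ≤ s ^ (-σ) * b ^ twoStar N σ := by gcongr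
          _ = _ := by
            rw [hb, ← Real.rpow_mul hs.le, ← Real.rpow_add hs]; congr 1; unfold twoStar
            field_simp; ring
      have : 0 ≤ a ^ twoStar N 0 := by positivity
      linarith

lemma aux_L1_half {N : ℕ} (hN : 3 ≤ N) {σ : ℝ} (h0 : 0 ≤ σ) (h1 : σ < 1) (f : ℝ → ℝ) (hf : Measurable f)
    {M : ℝ} (hM : 0 < M) (hfM : ∀ s, |f s| ≤ M) :
    ∫⁻ s in Ioi (0:ℝ), ENNReal.ofReal (s ^ (-σ)) * ‖f s‖ₑ ^ twoStar N σ ≤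
      (∫⁻ s in Ioi (0:ℝ), ‖f s‖ₑ ^ twoStar N 0) +
        ENNReal.ofReal ((1 / (1 - σ) + 1 / ((N:ℝ) - 1)) * M ^ twoStar N 1) := by
  have hN' : (3:ℝ) ≤ N := by exact_mod_cast hN
  have hX : (0:ℝ) < (N:ℝ) - 2 := by linarith
  have hp := ts_two_le hN (σ := σ) (by linarith)
  have hp0 := ts_two_le hN (σ := 0) (by linarith)
  obtain ⟨ρ, hρ⟩ : ∃ ρ, ρ = M ^ (-(2 / ((N:ℝ) - 2))) := ⟨_, rfl⟩
  have hρ0 : 0 < ρ := by rw [hρ]; positivity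
  have hpt : ∀ s ∈ Ioi (0:ℝ), ENNReal.ofReal (s ^ (-σ)) * ‖f s‖ₑ ^ twoStar N σ ≤
      ‖f s‖ₑ ^ twoStar N 0 + ((Iic ρ).indicator (fun s => ENNReal.ofReal (s ^ (-σ)) * ENNReal.ofReal (M ^ twoStar N σ)) s +
        (Ioi ρ).indicator (fun s => ENNReal.ofReal (s ^ (-(N:ℝ)))) s) := by
    intro s hs
    have hs : 0 < s := hs
    have := aux_L1_real hN h0 h1 (abs_nonneg (f s)) (hfM s) hM hs hρ
    rw [aux_enorm_rpow _ (by linarith), aux_enorm_rpow _ (by linarith),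
      ← ENNReal.ofReal_mul (by positivity)]
    refine (ENNReal.ofReal_le_ofReal this).trans ?_
    rw [ENNReal.ofReal_add (by positivity) (by split_ifs <;> positivity)]
    gcongr
    split_ifs with h
    · simp [indicator, h, not_lt.2 h, ENNReal.ofReal_mul (Real.rpow_nonneg hs.le (-σ))]
    · simp [indicator, h, not_le.1 h]
  refine (setLIntegral_mono' measurableSet_Ioi hpt).trans ?_
  rw [lintegral_add_left (by fun_prop)]
  gcongr
  rw [lintegral_add_left (Measurable.indicator (by fun_prop) measurableSet_Iic),
    setLIntegral_indicator measurableSet_Iic, setLIntegral_indicator measurableSet_Ioi,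
    inter_eq_left.2 (Ioi_subset_Ioi hρ0.le), aux_lint_large hρ0 (by linarith), inter_comm,
    Ioi_inter_Iic, ← setLIntegral_congr Ioo_ae_eq_Ioc, lintegral_mul_const _ (by fun_prop),
    aux_lint_small hρ0 h1, ← ENNReal.ofReal_mul (by have : 0 < 1 - σ := by linarith
                                                    positivity),
    ← ENNReal.ofReal_add]
  · apply le_of_eq; congr 1
    have e1 : ρ ^ (1 - σ) * M ^ twoStar N σ = M ^ twoStar N 1 := by
      rw [hρ, ← Real.rpow_mul hM.le, ← Real.rpow_add hM]; congr 1; unfold twoStar; field_simp; ring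
    have e2 : ρ ^ (1 - (N:ℝ)) = M ^ twoStar N 1 := by
      rw [hρ, ← Real.rpow_mul hM.le]; congr 1; unfold twoStar; field_simp; ring
    rw [div_mul_eq_mul_div, e1, e2]; ring
  · have : 0 < 1 - σ := by linarith
    positivity
  · have : 0 < (N:ℝ) - 1 := by linarith
    positivity

lemma aux_L1 {N : ℕ} (hN : 3 ≤ N) {σ : ℝ} (h0 : 0 ≤ σ) (h1 : σ < 1) (f : ℝ → ℝ) (hf : Measurable f)
    (B : ℝ≥0∞) (hB : ∀ s, ‖f s‖ₑ ^ twoStar N 1 ≤ B) :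
    ∫⁻ s, ENNReal.ofReal (|s| ^ (-σ)) * ‖f s‖ₑ ^ twoStar N σ ≤
      (∫⁻ s, ‖f s‖ₑ ^ twoStar N 0) +
        ENNReal.ofReal (2 * (1 / (1 - σ) + 1 / ((N:ℝ) - 1))) * B := by
  have hN' : (3:ℝ) ≤ N := by exact_mod_cast hN
  have hp := ts_two_le hN (σ := σ) (by linarith)
  have hq := ts_two_le hN (σ := 1) (by linarith)
  have hC : 0 < 2 * (1 / (1 - σ) + 1 / ((N:ℝ) - 1)) := by
    have : 0 < 1 - σ := by linarith
    have : 0 < (N:ℝ) - 1 := by linarith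
    positivity
  rcases eq_or_ne B ∞ with rfl | hBt
  · rw [ENNReal.mul_top (by simpa using hC)]; simp
  rcases eq_or_ne B 0 with rfl | hB0
  · have : ∀ s, ‖f s‖ₑ = 0 := fun s => by
      have := hB s
      rw [nonpos_iff_eq_zero, ENNReal.rpow_eq_zero_iff] at this
      rcases this with h | h
      · exact h.1
      · linarith [h.2]
    simp [this, ENNReal.zero_rpow_of_pos (show 0 < twoStar N σ by linarith)]
  set M := B.toReal ^ (1 / twoStar N 1) with hM
  have hBp : 0 < B.toReal := ENNReal.toReal_pos hB0 hBt
  have hM0 : 0 < M := by positivity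
  have hMq : M ^ twoStar N 1 = B.toReal := by
    rw [hM, ← Real.rpow_mul hBp.le, one_div_mul_cancel (by linarith), Real.rpow_one]
  have hfM : ∀ s, |f s| ≤ M := fun s => by
    have := hB s
    rw [aux_enorm_rpow _ (by linarith), ENNReal.ofReal_le_iff_le_toReal hBt, ← hMq] at this
    exact (Real.rpow_le_rpow_iff (abs_nonneg _) hM0.le (by linarith)).1 this
  have H1 := aux_L1_half hN h0 h1 f hf hM0 hfM
  have H2 := aux_L1_half hN h0 h1 (fun s => f (-s)) (by fun_prop) hM0 (fun s => hfM (-s))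
  rw [hMq, ENNReal.ofReal_mul (by linarith), ENNReal.ofReal_toReal hBt] at H1 H2
  rw [aux_lint_symm, aux_lint_symm (fun s => ‖f s‖ₑ ^ twoStar N 0)]
  have e1 : ∫⁻ s in Ioi (0:ℝ), ENNReal.ofReal (|s| ^ (-σ)) * ‖f s‖ₑ ^ twoStar N σ =
     ∫⁻ s in Ioi (0:ℝ), ENNReal.ofReal (s ^ (-σ)) * ‖f s‖ₑ ^ twoStar N σ :=
    setLIntegral_congr_fun measurableSet_Ioi fun s hs => by
      simp only [abs_of_pos (show 0 < s from hs)]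
  have e2 : ∫⁻ s in Ioi (0:ℝ), ENNReal.ofReal (|-s| ^ (-σ)) * ‖f (-s)‖ₑ ^ twoStar N σ =
     ∫⁻ s in Ioi (0:ℝ), ENNReal.ofReal (s ^ (-σ)) * ‖f (-s)‖ₑ ^ twoStar N σ :=
    setLIntegral_congr_fun measurableSet_Ioi fun s hs => by
      simp only [abs_neg, abs_of_pos (show 0 < s from hs)]
  rw [e1, e2]
  refine (add_le_add H1 H2).trans_eq ?_
  rw [ENNReal.ofReal_mul (by norm_num), ENNReal.ofReal_ofNat]
  ring

/-! ### product decomposition -/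

def mkPt (n : ℕ) (y : Fin n → ℝ) (s : ℝ) : Euc (n+1) :=
  WithLp.toLp 2 (Fin.insertNth (Fin.last n) s y)

lemma mkPt_mp (n : ℕ) : MeasurePreserving (fun z : (Fin n → ℝ) × ℝ => mkPt n z.1 z.2)
    (volume.prod volume) volume := by
  have h1 := (volume_preserving_piFinSuccAbove (fun _ : Fin (n+1) => ℝ) (Fin.last n)).symm
  have h2 := PiLp.volume_preserving_toLp (Fin (n+1))
  have h3 := Measure.measurePreserving_swap (μ := (volume : Measure (Fin n → ℝ))) (ν := (volume : Measure ℝ))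
  exact h2.comp (h1.comp h3)

lemma mkPt_lintegral (n : ℕ) (f : Euc (n+1) → ℝ≥0∞) (hf : AEMeasurable f) :
    ∫⁻ x, f x = ∫⁻ y : Fin n → ℝ, ∫⁻ s : ℝ, f (mkPt n y s) := by
  have h := mkPt_mp n
  rw [← h.map_eq] at hf ⊢
  rw [lintegral_map' hf h.measurable.aemeasurable]
  exact lintegral_prod _ (hf.comp_measurable h.measurable)

lemma mkPt_ae (n : ℕ) {P : Euc (n+1) → Prop} (hP : ∀ᵐ x, P x) :
    ∀ᵐ y : Fin n → ℝ, ∀ᵐ s : ℝ, P (mkPt n y s) :=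
  Measure.ae_ae_of_ae_prod ((mkPt_mp n).quasiMeasurePreserving.ae hP)

lemma mkPt_eq (n : ℕ) (y : Fin n → ℝ) (s : ℝ) :
    mkPt n y s = mkPt n y 0 + s • EuclideanSpace.single (Fin.last n) (1:ℝ) := by
  ext i
  refine Fin.lastCases ?_ (fun j => ?_) i
  · simp [mkPt]
  · simp [mkPt]

lemma mkPt_last (n : ℕ) (y : Fin n → ℝ) (s : ℝ) : mkPt n y s (Fin.last n) = s := by
  simp [mkPt]

lemma mkPt_measurable (n : ℕ) : Measurable (fun z : (Fin n → ℝ) × ℝ => mkPt n z.1 z.2) :=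
  (mkPt_mp n).measurable

lemma mkPt_hasDerivAt (n : ℕ) (y : Fin n → ℝ) (s : ℝ) :
    HasDerivAt (mkPt n y) (EuclideanSpace.single (Fin.last n) (1:ℝ)) s := by
  have : mkPt n y = fun s => mkPt n y 0 + s • EuclideanSpace.single (Fin.last n) (1:ℝ) :=
    funext (mkPt_eq n y)
  rw [this]
  simpa using ((hasDerivAt_id s).smul_const (EuclideanSpace.single (Fin.last n) (1:ℝ))).const_add (mkPt n y 0)

lemma mkPt_contDiff (n : ℕ) (y : Fin n → ℝ) {m} : ContDiff ℝ m (mkPt n y) := by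
  have : mkPt n y = fun s => mkPt n y 0 + s • EuclideanSpace.single (Fin.last n) (1:ℝ) :=
    funext (mkPt_eq n y)
  rw [this]; fun_prop

lemma mkPt_isometry (n : ℕ) (y : Fin n → ℝ) : Isometry (mkPt n y) := by
  refine Isometry.of_dist_eq fun s s' => ?_
  rw [mkPt_eq, mkPt_eq n y s', dist_add_left, dist_eq_norm, ← sub_smul, norm_smul]
  simp [Real.dist_eq]

lemma mkPt_deriv (n : ℕ) (y : Fin n → ℝ) (s : ℝ) {φ : Euc (n+1) → ℝ} (hφ : Differentiable ℝ φ) :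
    ‖deriv (fun s => φ (mkPt n y s)) s‖ₑ ≤ ‖fderiv ℝ φ (mkPt n y s)‖ₑ := by
  have h : HasDerivAt (fun s => φ (mkPt n y s)) _ s :=
    (hφ (mkPt n y s)).hasFDerivAt.comp_hasDerivAt s (mkPt_hasDerivAt n y s)
  rw [h.deriv]
  refine (ContinuousLinearMap.le_opENorm _ _).trans ?_
  have h1 : ‖EuclideanSpace.single (Fin.last n) (1:ℝ)‖ₑ = 1 := by
    rw [← ofReal_norm]; simp
  rw [h1, mul_one]

lemma zNorm_ge (n k : ℕ) (hk : k ≤ n) (x : Euc (n+1)) : |x (Fin.last n)| ≤ zNorm (n+1) k x := by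
  unfold zNorm
  apply Real.abs_le_sqrt
  have := Finset.single_le_sum (f := fun i : Fin (n+1) => if k ≤ (i:ℕ) then (x i)^2 else 0)
    (fun i _ => by split_ifs <;> positivity) (Finset.mem_univ (Fin.last n))
  simpa [hk] using this

lemma zNorm_cont (N k : ℕ) : Continuous (zNorm N k) := by
  unfold zNorm
  refine Continuous.sqrt (continuous_finsetSum _ fun i _ => ?_)
  split_ifs <;> fun_prop

def En (N : ℕ) (φ : Euc N → ℝ) : ℝ≥0∞ := ∫⁻ x, ‖fderiv ℝ φ x‖ₑ ^ (2:ℝ)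

/-- regularised Hardy–Sobolev integral -/
def Ie (N k : ℕ) (σ ε : ℝ) (φ : Euc N → ℝ) : ℝ≥0∞ :=
  ∫⁻ x, ENNReal.ofReal ((zNorm N k x ^ 2 + ε ^ 2) ^ (-σ / 2)) * ‖φ x‖ₑ ^ twoStar N σ

def RegHS (N k : ℕ) (σ : ℝ) : Prop :=
  ∃ K : ℝ≥0, ∀ ε : ℝ, 0 < ε → ∀ φ : Euc N → ℝ, ContDiff ℝ 1 φ → HasCompactSupport φ →
    Ie N k σ ε φ ≤ K * En N φ ^ (twoStar N σ / 2)

lemma sobolev0 {N : ℕ} (hN : 3 ≤ N) : ∃ K : ℝ≥0, ∀ φ : Euc N → ℝ, ContDiff ℝ 1 φ →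
    HasCompactSupport φ →
    ∫⁻ x, ‖φ x‖ₑ ^ twoStar N 0 ≤ K * En N φ ^ (twoStar N 0 / 2) := by
  have hN' : (3:ℝ) ≤ N := by exact_mod_cast hN
  have hp := ts_two_le hN (σ := 0) (by linarith)
  set Q : ℝ≥0 := ⟨twoStar N 0, by linarith⟩ with hQ
  have hQ' : (Q:ℝ) = twoStar N 0 := rfl
  refine ⟨(SNormLESNormFDerivOfEqConst ℝ (volume : Measure (Euc N)) 2) ^ (twoStar N 0), fun φ h1 h2 => ?_⟩
  have h := eLpNorm_le_eLpNorm_fderiv_of_eq (F := ℝ) (μ := (volume : Measure (Euc N))) h1 h2 (p := 2) (p' := Q)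
    (by norm_num) (by rw [finrank_euclideanSpace_fin]; omega) (by
      rw [finrank_euclideanSpace_fin, hQ']; unfold twoStar
      have : (N:ℝ) - 2 ≠ 0 := by linarith
      have : (N:ℝ) ≠ 0 := by linarith
      simp; field_simp)
  rw [eLpNorm_nnreal_eq_lintegral (by intro h; rw [h] at hQ'; simp at hQ'; linarith),
    eLpNorm_nnreal_eq_lintegral (by norm_num), hQ'] at h
  have h' := ENNReal.rpow_le_rpow h (show 0 ≤ twoStar N 0 by linarith)
  rw [← ENNReal.rpow_mul, one_div_mul_cancel (by linarith), ENNReal.rpow_one,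
    ENNReal.mul_rpow_of_nonneg _ _ (by linarith), ← ENNReal.rpow_mul] at h'
  refine h'.trans_eq ?_
  rw [← ENNReal.coe_rpow_of_nonneg _ (by linarith)]
  unfold En
  congr 2
  simp; ring

lemma grad_cs {N : ℕ} {φ : Euc N → ℝ} (hφ : ContDiff ℝ 1 φ) {p : ℝ} (hp : 1 < p)
    (W : Euc N → ℝ≥0∞) (hW : Measurable W) :
    ∫⁻ x, W x * ‖fderiv ℝ (fun x => ‖φ x‖ ^ p) x‖ₑ ≤
      ENNReal.ofReal p * ((∫⁻ x, W x ^ (2:ℝ) * ‖φ x‖ₑ ^ (2 * p - 2)) ^ (1/2:ℝ) * En N φ ^ (1/2:ℝ)) := by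
  have hφm : Measurable φ := hφ.continuous.measurable
  have hgm : Measurable (fderiv ℝ φ) := measurable_fderiv ℝ φ
  have h1 : ∀ x, W x * ‖fderiv ℝ (fun x => ‖φ x‖ ^ p) x‖ₑ ≤
      ENNReal.ofReal p * ((W x ^ (2:ℝ) * ‖φ x‖ₑ ^ (2 * p - 2)) ^ (1/2:ℝ) *
        (‖fderiv ℝ φ x‖ₑ ^ (2:ℝ)) ^ (1/2:ℝ)) := by
    intro x
    have := enorm_fderiv_norm_rpow_le (hφ.differentiable one_ne_zero) (x := x)
      (p := p.toNNReal) (by simpa using hp)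
    rw [Real.coe_toNNReal p (by linarith)] at this
    change _ ≤ ENNReal.ofReal p * _ * _ at this
    refine (mul_le_mul_right this (W x)).trans_eq ?_
    rw [ENNReal.mul_rpow_of_nonneg _ _ (by norm_num), ← ENNReal.rpow_mul, ← ENNReal.rpow_mul,
      ← ENNReal.rpow_mul]
    norm_num
    rw [show (2 * p - 2) * (1/2) = p - 1 by ring]
    ring
  refine (lintegral_mono h1).trans ?_
  rw [lintegral_const_mul _ (by fun_prop)]
  gcongr
  exact ENNReal.lintegral_mul_norm_pow_le (by fun_prop) (by fun_prop) (by norm_num) (by norm_num) (by norm_num)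

lemma hcs_rpow {N : ℕ} {φ : Euc N → ℝ} (h : HasCompactSupport φ) {p : ℝ} (hp : 0 < p) :
    HasCompactSupport (fun x => ‖φ x‖ ^ p) :=
  h.comp_left (g := fun a : ℝ => ‖a‖ ^ p) (by simp [hp.ne'])

lemma caseC_raw {n k : ℕ} (hn : 2 ≤ n) (hk : k ≤ n) {σ ε : ℝ} (h0 : 0 ≤ σ) (h1 : σ < 1) (hε : 0 < ε)
    {φ : Euc (n+1) → ℝ} (hφ : ContDiff ℝ 1 φ) (hcs : HasCompactSupport φ) :
    Ie (n+1) k σ ε φ ≤ (∫⁻ x, ‖φ x‖ₑ ^ twoStar (n+1) 0) +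
      ENNReal.ofReal (2 * (1 / (1 - σ) + 1 / (((n+1:ℕ):ℝ) - 1))) * (ENNReal.ofReal (twoStar (n+1) 1) *
        ((∫⁻ x, ‖φ x‖ₑ ^ twoStar (n+1) 0) ^ (1/2:ℝ) * En (n+1) φ ^ (1/2:ℝ))) := by
  have hN : 3 ≤ n + 1 := by omega
  have hp := ts_two_le hN (σ := σ) (by linarith)
  have hq := ts_two_le hN (σ := 1) (by linarith)
  have hφm : Measurable φ := hφ.continuous.measurable
  have hzm : Measurable (zNorm (n+1) k) := (zNorm_cont _ _).measurable
  set ψ : Euc (n+1) → ℝ := fun x => ‖φ x‖ ^ twoStar (n+1) 1 with hψ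
  have hψ1 : ContDiff ℝ 1 ψ := hφ.norm_rpow (by linarith)
  have hψ2 : HasCompactSupport ψ := hcs_rpow hcs (by linarith)
  have hψm : Measurable (fderiv ℝ ψ) := measurable_fderiv ℝ ψ
  have hmk := mkPt_measurable n
  set B : (Fin n → ℝ) → ℝ≥0∞ := fun y => ∫⁻ s, ‖fderiv ℝ ψ (mkPt n y s)‖ₑ with hB
  have hBm : Measurable B := by
    refine Measurable.lintegral_prod_right (f := fun y s => ‖fderiv ℝ ψ (mkPt n y s)‖ₑ) ?_
    exact (hψm.comp hmk).enorm
  have hBb : ∀ y s, ‖φ (mkPt n y s)‖ₑ ^ twoStar (n+1) 1 ≤ B y := by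
    intro y s
    have := HasCompactSupport.enorm_le_lintegral_Ici_deriv (f := fun s => ψ (mkPt n y s))
      (hψ1.comp (mkPt_contDiff n y))
      (hψ2.comp_isClosedEmbedding (mkPt_isometry n y).isClosedEmbedding) s
    have e : ‖ψ (mkPt n y s)‖ₑ = ‖φ (mkPt n y s)‖ₑ ^ twoStar (n+1) 1 := by
      rw [aux_enorm_rpow _ (by linarith), ← ofReal_norm, Real.norm_of_nonneg (show 0 ≤ ψ _ by positivity)]
      rfl
    rw [← e]
    refine this.trans ((setLIntegral_le_lintegral _ _).trans (lintegral_mono fun s => ?_))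
    exact mkPt_deriv n y s (hψ1.differentiable one_ne_zero)
  have hBint : ∫⁻ y, B y = ∫⁻ x, ‖fderiv ℝ ψ x‖ₑ :=
    (mkPt_lintegral n _ hψm.enorm.aemeasurable).symm
  have hcs2 := grad_cs hφ (p := twoStar (n+1) 1) (by linarith) (fun _ => 1) measurable_const
  simp only [one_mul, ENNReal.one_rpow] at hcs2
  have hexp : 2 * twoStar (n+1) 1 - 2 = twoStar (n+1) 0 := by
    have : (3:ℝ) ≤ ((n+1:ℕ):ℝ) := by exact_mod_cast hN
    have : ((n+1:ℕ):ℝ) - 2 ≠ 0 := by linarith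
    unfold twoStar; field_simp; ring
  rw [hexp, ← hBint] at hcs2
  refine le_trans ?_ (add_le_add_right (mul_le_mul_right hcs2 _) _)
  unfold Ie
  rw [mkPt_lintegral n _ (by fun_prop), mkPt_lintegral n (fun x => ‖φ x‖ₑ ^ twoStar (n+1) 0) (by fun_prop),
    ← lintegral_const_mul _ hBm, ← lintegral_add_right _ (by fun_prop)]
  refine lintegral_mono fun y => ?_
  have hmy : Measurable (mkPt n y) := (mkPt_isometry n y).continuous.measurable
  refine le_trans (lintegral_mono_ae ?_) (aux_L1 hN h0 h1 (fun s => φ (mkPt n y s)) (by fun_prop) (B y) (hBb y))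
  have : ∀ᵐ s : ℝ, s ≠ 0 := by simp [ae_iff]
  filter_upwards [this] with s hs
  gcongr
  have hz := zNorm_ge n k hk (mkPt n y s)
  rw [mkPt_last] at hz
  have hs' : 0 < |s| := abs_pos.2 hs
  calc _ ≤ (|s| ^ 2) ^ (-σ/2) := by
        apply Real.rpow_le_rpow_of_nonpos (by positivity) _ (by linarith)
        nlinarith [sq_nonneg ε]
    _ = |s| ^ (-σ) := by
        rw [← Real.rpow_natCast, ← Real.rpow_mul hs'.le]; congr 1; push_cast; ring

lemma En_smul {N : ℕ} (c : ℝ) (φ : Euc N → ℝ) (h : ContDiff ℝ 1 φ) :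
    En N (fun x => c * φ x) = ‖c‖ₑ ^ (2:ℝ) * En N φ := by
  unfold En
  have hgm : Measurable (fderiv ℝ φ) := measurable_fderiv ℝ φ
  rw [← lintegral_const_mul _ (by fun_prop)]
  refine lintegral_congr fun x => ?_
  rw [fderiv_const_mul (h.differentiable one_ne_zero x), enorm_smul, ENNReal.mul_rpow_of_nonneg _ _ (by norm_num)]

lemma Ie_smul {N k : ℕ} {σ ε : ℝ} (c : ℝ) (φ : Euc N → ℝ) (h : ContDiff ℝ 1 φ) (hp : 0 ≤ twoStar N σ) :
    Ie N k σ ε (fun x => c * φ x) = ‖c‖ₑ ^ twoStar N σ * Ie N k σ ε φ := by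
  unfold Ie
  have hφm : Measurable φ := h.continuous.measurable
  have hzm : Measurable (zNorm N k) := (zNorm_cont _ _).measurable
  rw [← lintegral_const_mul _ (by fun_prop)]
  refine lintegral_congr fun x => ?_
  rw [enorm_mul, ENNReal.mul_rpow_of_nonneg _ _ hp]; ring

lemma En_ne_top {N : ℕ} {φ : Euc N → ℝ} (hφ : ContDiff ℝ 1 φ) (hcs : HasCompactSupport φ) :
    En N φ ≠ ∞ := by
  have h : MemLp (fderiv ℝ φ) 2 (volume : Measure (Euc N)) :=
    (hφ.continuous_fderiv one_ne_zero).memLp_of_hasCompactSupport (hcs.fderiv (𝕜 := ℝ))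
  have := lintegral_rpow_enorm_lt_top_of_eLpNorm_lt_top (by norm_num) (by norm_num) h.2
  simpa [En] using this.ne

lemma caseC {n k : ℕ} (hn : 2 ≤ n) (hk : k ≤ n) {σ : ℝ} (h0 : 0 ≤ σ) (h1 : σ < 1) :
    RegHS (n+1) k σ := by
  have hN : 3 ≤ n + 1 := by omega
  have hp := ts_two_le hN (σ := σ) (by linarith)
  have hQ := ts_two_le hN (σ := 0) (by linarith)
  obtain ⟨K, hK⟩ := sobolev0 hN
  set C1 : ℝ≥0 := (2 * (1 / (1 - σ) + 1 / (((n+1:ℕ):ℝ) - 1))).toNNReal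
  set C2 : ℝ≥0 := (twoStar (n+1) 1).toNNReal
  refine ⟨K + C1 * (C2 * K ^ (1/2:ℝ)), fun ε hε φ hφ hcs => ?_⟩
  have hraw : ∀ φ : Euc (n+1) → ℝ, ContDiff ℝ 1 φ → HasCompactSupport φ →
      Ie (n+1) k σ ε φ ≤ (K * En (n+1) φ ^ (twoStar (n+1) 0 / 2)) +
      C1 * (C2 * ((K * En (n+1) φ ^ (twoStar (n+1) 0 / 2)) ^ (1/2:ℝ) * En (n+1) φ ^ (1/2:ℝ))) := by
    intro φ hφ hcs
    refine (caseC_raw hn hk h0 h1 hε hφ hcs).trans ?_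
    gcongr
    · exact hK φ hφ hcs
    · exact le_rfl
    · exact le_rfl
    · exact hK φ hφ hcs
  rcases eq_or_ne (En (n+1) φ) 0 with hE | hE
  · have := hraw φ hφ hcs
    rw [hE] at this ⊢
    rw [ENNReal.zero_rpow_of_pos (by linarith), ENNReal.zero_rpow_of_pos (by norm_num)] at this
    exact (this.trans_eq (by simp)).trans (zero_le)
  have hEt := En_ne_top hφ hcs
  set e := (En (n+1) φ).toReal with he
  have he0 : 0 < e := ENNReal.toReal_pos hE hEt
  set c := e ^ (-(1/2):ℝ) with hc
  have hc0 : 0 < c := by positivity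
  have hEe : En (n+1) φ = ENNReal.ofReal e := (ENNReal.ofReal_toReal hEt).symm
  have hce : ‖c‖ₑ = ENNReal.ofReal e ^ (-(1/2):ℝ) := by
    rw [← ofReal_norm, Real.norm_of_nonneg hc0.le, hc, ENNReal.ofReal_rpow_of_pos he0]
  have hE1 : En (n+1) (fun x => c * φ x) = 1 := by
    rw [En_smul c φ hφ, hce, hEe, ← ENNReal.rpow_mul]
    norm_num
    rw [ENNReal.rpow_neg_one, ENNReal.inv_mul_cancel (by simpa using he0) (by simp)]
  have := hraw (fun x => c * φ x) (contDiff_const.mul hφ) hcs.mul_left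
  rw [hE1, Ie_smul c φ hφ (by linarith), hce, ← ENNReal.rpow_mul] at this
  simp only [ENNReal.one_rpow, mul_one] at this
  have h2 := mul_le_mul_left this (ENNReal.ofReal e ^ (twoStar (n+1) σ / 2))
  rw [mul_right_comm, ← ENNReal.rpow_add _ _ (by simpa using he0) (by simp)] at h2
  rw [show -(1/2) * twoStar (n+1) σ + twoStar (n+1) σ / 2 = 0 by ring, ENNReal.rpow_zero, one_mul] at h2
  rw [hEe]
  refine h2.trans_eq ?_
  push_cast
  rw [ENNReal.coe_rpow_of_nonneg _ (by norm_num)]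

def zIdx (N k : ℕ) : Finset (Fin N) := Finset.univ.filter (fun i => k ≤ (i:ℕ))

def Ae (N k : ℕ) (ε : ℝ) (x : Euc N) : ℝ := (∑ i ∈ zIdx N k, (x i) ^ 2) + ε ^ 2

lemma zNorm_sq (N k : ℕ) (x : Euc N) : zNorm N k x ^ 2 = ∑ i ∈ zIdx N k, (x i) ^ 2 := by
  unfold zNorm zIdx
  rw [Real.sq_sqrt (Finset.sum_nonneg fun i _ => by split_ifs <;> positivity), Finset.sum_filter]

lemma Ae_eq (N k : ℕ) (ε : ℝ) (x : Euc N) : Ae N k ε x = zNorm N k x ^ 2 + ε ^ 2 := by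
  rw [zNorm_sq]; rfl

lemma Ae_pos (N k : ℕ) {ε : ℝ} (hε : 0 < ε) (x : Euc N) : 0 < Ae N k ε x := by
  rw [Ae_eq]; positivity

lemma zIdx_card (N k : ℕ) : (zIdx N k).card = N - k := by
  unfold zIdx
  rw [Finset.card_filter, Fin.sum_univ_eq_sum_range (fun i => if k ≤ i then 1 else 0) N,
    ← Finset.card_filter]
  have : Finset.filter (fun i => k ≤ i) (Finset.range N) = Finset.Ico k N := by
    ext i; simp [and_comm]
  rw [this, Nat.card_Ico]

lemma Ae_contDiff (N k : ℕ) (ε : ℝ) {m} : ContDiff ℝ m (Ae N k ε) := by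
  unfold Ae; fun_prop

lemma Fi_contDiff (N k : ℕ) {ε : ℝ} (hε : 0 < ε) (τ : ℝ) (i : Fin N) :
    ContDiff ℝ 1 (fun x : Euc N => x i * Ae N k ε x ^ τ) :=
  ContDiff.mul (by fun_prop) ((Ae_contDiff N k ε).rpow_const_of_ne fun x => (Ae_pos N k hε x).ne')

lemma Ae_fderiv (N k : ℕ) (ε : ℝ) (x : Euc N) {i : Fin N} (hi : i ∈ zIdx N k) :
    fderiv ℝ (Ae N k ε) x (EuclideanSpace.single i 1) = 2 * x i := by
  have h : HasFDerivAt (Ae N k ε) (∑ j ∈ zIdx N k, (2 * x j) • (EuclideanSpace.proj j : Euc N →L[ℝ] ℝ)) x := by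
    unfold Ae
    refine HasFDerivAt.add_const _ (HasFDerivAt.fun_sum fun j _ => ?_)
    have := ((EuclideanSpace.proj j : Euc N →L[ℝ] ℝ).hasFDerivAt (x := x)).pow 2
    simpa using this
  rw [h.fderiv]
  simp [hi]

lemma Fi_fderiv (N k : ℕ) {ε : ℝ} (hε : 0 < ε) (τ : ℝ) (x : Euc N) {i : Fin N} (hi : i ∈ zIdx N k) :
    fderiv ℝ (fun x : Euc N => x i * Ae N k ε x ^ τ) x (EuclideanSpace.single i 1) =
      Ae N k ε x ^ τ + 2 * τ * (x i)^2 * Ae N k ε x ^ (τ - 1) := by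
  have h1 : HasFDerivAt (fun x : Euc N => x i) (EuclideanSpace.proj i : Euc N →L[ℝ] ℝ) x :=
    (EuclideanSpace.proj i : Euc N →L[ℝ] ℝ).hasFDerivAt
  have h2 := (((Ae_contDiff N k ε (m := 1)).differentiable one_ne_zero x).hasFDerivAt).rpow_const (p := τ)
    (Or.inl (Ae_pos N k hε x).ne')
  rw [(h1.fun_mul h2).fderiv]
  simp [Ae_fderiv N k ε x hi]
  ring

lemma ibp_real {N k : ℕ} {σ ε : ℝ} (h0 : 0 ≤ σ) (hε : 0 < ε) {ψ : Euc N → ℝ} (hψ : ContDiff ℝ 1 ψ)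
    (hcs : HasCompactSupport ψ) (hpos : ∀ x, 0 ≤ ψ x) :
    (((N - k : ℕ) : ℝ) - σ) * ∫ x, Ae N k ε x ^ (-σ/2) * ψ x ≤
      ∫ x, Ae N k ε x ^ ((1-σ)/2) * ‖fderiv ℝ ψ x‖ := by
  have hAc : Continuous (Ae N k ε) := (Ae_contDiff N k ε (m := 1)).continuous
  have hAr : ∀ τ : ℝ, Continuous (fun x => Ae N k ε x ^ τ) := fun τ =>
    hAc.rpow_const fun x => Or.inl (Ae_pos N k hε x).ne'
  have hψ' : Continuous (fderiv ℝ ψ) := hψ.continuous_fderiv one_ne_zero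
  have hcs' : HasCompactSupport (fderiv ℝ ψ) := hcs.fderiv (𝕜 := ℝ)
  have hcsv : ∀ v, HasCompactSupport (fun x => fderiv ℝ ψ x v) := fun v =>
    hcs'.comp_left (g := fun L : Euc N →L[ℝ] ℝ => L v) (by simp)
  have hIi : ∀ i : Fin N, Integrable (fun x : Euc N => (x i * Ae N k ε x ^ (-σ/2)) *
      fderiv ℝ ψ x (EuclideanSpace.single i 1)) := fun i =>
    Continuous.integrable_of_hasCompactSupport
      (((Fi_contDiff N k hε _ i).continuous).mul (by fun_prop)) (hcsv _).mul_left
  have hIj : ∀ i : Fin N, Integrable (fun x : Euc N =>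
      fderiv ℝ (fun x : Euc N => x i * Ae N k ε x ^ (-σ/2)) x (EuclideanSpace.single i 1) * ψ x) := fun i =>
    Continuous.integrable_of_hasCompactSupport
      ((((Fi_contDiff N k hε _ i).continuous_fderiv one_ne_zero).clm_apply continuous_const).mul
        hψ.continuous) hcs.mul_left
  have hibp : ∀ i : Fin N, ∫ x : Euc N, (x i * Ae N k ε x ^ (-σ/2)) *
      fderiv ℝ ψ x (EuclideanSpace.single i 1) = - ∫ x : Euc N,
      fderiv ℝ (fun x : Euc N => x i * Ae N k ε x ^ (-σ/2)) x (EuclideanSpace.single i 1) * ψ x := by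
    intro i
    refine integral_mul_fderiv_eq_neg_fderiv_mul_of_integrable (hIj i) (hIi i) ?_ ?_ ?_
    · exact Continuous.integrable_of_hasCompactSupport
        (((Fi_contDiff N k hε _ i).continuous).mul hψ.continuous) hcs.mul_left
    · exact fun x _ => (Fi_contDiff N k hε _ i).differentiable one_ne_zero x
    · exact fun x _ => hψ.differentiable one_ne_zero x
  have hsum : ∫ x : Euc N, ∑ i ∈ zIdx N k, (fderiv ℝ (fun x : Euc N => x i * Ae N k ε x ^ (-σ/2)) x
        (EuclideanSpace.single i 1) * ψ x) =
      - ∫ x : Euc N, ∑ i ∈ zIdx N k, ((x i * Ae N k ε x ^ (-σ/2)) *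
      fderiv ℝ ψ x (EuclideanSpace.single i 1)) := by
    rw [integral_finsetSum _ (fun i _ => hIj i), integral_finsetSum _ (fun i _ => hIi i),
      ← Finset.sum_neg_distrib]
    refine Finset.sum_congr rfl fun i _ => ?_
    rw [hibp i, neg_neg]
  have hL : (((N - k : ℕ) : ℝ) - σ) * ∫ x, Ae N k ε x ^ (-σ/2) * ψ x ≤
      ∫ x : Euc N, ∑ i ∈ zIdx N k, (fderiv ℝ (fun x : Euc N => x i * Ae N k ε x ^ (-σ/2)) x
        (EuclideanSpace.single i 1) * ψ x) := by
    rw [← integral_const_mul]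
    refine integral_mono ?_ (integrable_finsetSum _ fun i _ => hIj i) fun x => ?_
    · exact (Continuous.integrable_of_hasCompactSupport ((hAr _).mul hψ.continuous) hcs.mul_left).const_mul _
    · change _ ≤ ∑ i ∈ zIdx N k, (fderiv ℝ (fun x : Euc N => x i * Ae N k ε x ^ (-σ/2)) x
        (EuclideanSpace.single i 1) * ψ x)
      rw [← Finset.sum_mul, ← mul_assoc]
      refine mul_le_mul_of_nonneg_right ?_ (hpos x)
      rw [Finset.sum_congr (s₁ := zIdx N k) rfl fun i hi => Fi_fderiv N k hε (-σ/2) x (i := i) hi, Finset.sum_add_distrib,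
        ← Finset.sum_mul, ← Finset.mul_sum, Finset.sum_const, zIdx_card, nsmul_eq_mul]
      have hA := Ae_pos N k hε x
      have e : Ae N k ε x ^ (-σ/2) = Ae N k ε x * Ae N k ε x ^ (-σ/2 - 1) := by
        rw [Real.rpow_sub_one hA.ne']; field_simp
      have hz : ∑ i ∈ zIdx N k, (x i)^2 ≤ Ae N k ε x := by unfold Ae; nlinarith [sq_nonneg ε]
      have hp : 0 ≤ Ae N k ε x ^ (-σ/2 - 1) := by positivity
      have : σ * (∑ i ∈ zIdx N k, (x i)^2) * Ae N k ε x ^ (-σ/2 - 1) ≤ σ * Ae N k ε x ^ (-σ/2) := by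
        rw [e, ← mul_assoc]; gcongr
      nlinarith
  refine hL.trans (hsum.trans_le ?_)
  rw [← integral_neg]
  refine integral_mono (integrable_finsetSum _ fun i _ => hIi i).neg ?_ fun x => ?_
  · exact Continuous.integrable_of_hasCompactSupport ((hAr _).mul hψ'.norm) hcs'.norm.mul_left
  · set F : Euc N := ∑ i ∈ zIdx N k, (x i * Ae N k ε x ^ (-σ/2)) • EuclideanSpace.single i (1:ℝ) with hF
    have e1 : ∑ i ∈ zIdx N k, ((x i * Ae N k ε x ^ (-σ/2)) *
      fderiv ℝ ψ x (EuclideanSpace.single i 1)) = fderiv ℝ ψ x F := by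
      simp [hF, map_sum]
    have hA := Ae_pos N k hε x
    have e2 : ‖F‖ ≤ Ae N k ε x ^ ((1-σ)/2) := by
      have e3 : ‖F‖ ^ 2 = (∑ i ∈ zIdx N k, (x i) ^ 2) * (Ae N k ε x ^ (-σ/2)) ^ 2 := by
        have hc : ∀ j, F j = if j ∈ zIdx N k then x j * Ae N k ε x ^ (-σ/2) else 0 := by
          intro j; simp [hF, Pi.single_apply]
        rw [EuclideanSpace.norm_sq_eq, Finset.sum_mul]
        simp_rw [hc]
        rw [← Finset.sum_subset (Finset.subset_univ (zIdx N k))]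
        · refine Finset.sum_congr rfl fun i hi => ?_
          simp [hi, mul_pow]
        · intro i _ hi; simp [hi]
      refine abs_le_of_sq_le_sq' ?_ (by positivity) |>.2
      rw [e3]
      calc _ ≤ Ae N k ε x * (Ae N k ε x ^ (-σ/2)) ^ 2 := by
            gcongr; unfold Ae; nlinarith [sq_nonneg ε]
        _ = _ := by
          rw [← Real.rpow_natCast, ← Real.rpow_natCast, ← Real.rpow_mul hA.le, ← Real.rpow_mul hA.le]
          nth_rewrite 1 [← Real.rpow_one (Ae N k ε x)]
          rw [← Real.rpow_add hA]; congr 1; push_cast; ring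
    change - (∑ i ∈ zIdx N k, ((x i * Ae N k ε x ^ (-σ/2)) *
      fderiv ℝ ψ x (EuclideanSpace.single i 1))) ≤ _
    rw [e1]
    calc _ ≤ ‖fderiv ℝ ψ x F‖ := neg_le_abs _
      _ ≤ ‖fderiv ℝ ψ x‖ * ‖F‖ := ContinuousLinearMap.le_opNorm _ _
      _ ≤ _ := by rw [mul_comm]; gcongr

lemma ibp_step {N k : ℕ} (hN : 3 ≤ N) {σ ε : ℝ} (h1 : 1 ≤ σ) (h2 : σ ≤ 2) (hd : σ < ((N - k : ℕ) : ℝ))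
    (hε : 0 < ε) {φ : Euc N → ℝ} (hφ : ContDiff ℝ 1 φ) (hcs : HasCompactSupport φ) :
    Ie N k σ ε φ ≠ ∞ ∧
    ENNReal.ofReal (((N - k : ℕ) : ℝ) - σ) * Ie N k σ ε φ ≤
      ENNReal.ofReal (twoStar N σ) * (Ie N k (2 * σ - 2) ε φ ^ (1/2:ℝ) * En N φ ^ (1/2:ℝ)) := by
  have hp := ts_two_le hN (σ := σ) (by linarith)
  have hψ1 : ContDiff ℝ 1 (fun x => ‖φ x‖ ^ twoStar N σ) := hφ.norm_rpow (by linarith)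
  have hψ2 : HasCompactSupport (fun x => ‖φ x‖ ^ twoStar N σ) := hcs_rpow hcs (by linarith)
  have hAc : Continuous (Ae N k ε) := (Ae_contDiff N k ε (m := 1)).continuous
  have hAr : ∀ τ : ℝ, Continuous (fun x => Ae N k ε x ^ τ) := fun τ =>
    hAc.rpow_const fun x => Or.inl (Ae_pos N k hε x).ne'
  have hint1 : Integrable (fun x => Ae N k ε x ^ (-σ/2) * ‖φ x‖ ^ twoStar N σ) :=
    Continuous.integrable_of_hasCompactSupport ((hAr _).mul hψ1.continuous) hψ2.mul_left
  have hint2 : Integrable (fun x => Ae N k ε x ^ ((1-σ)/2) * ‖fderiv ℝ (fun x => ‖φ x‖ ^ twoStar N σ) x‖) :=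
    Continuous.integrable_of_hasCompactSupport
      ((hAr _).mul (hψ1.continuous_fderiv one_ne_zero).norm) (hψ2.fderiv (𝕜 := ℝ)).norm.mul_left
  have hA := Ae_pos N k hε
  have e1 : Ie N k σ ε φ = ENNReal.ofReal (∫ x, Ae N k ε x ^ (-σ/2) * ‖φ x‖ ^ twoStar N σ) := by
    rw [ofReal_integral_eq_lintegral_ofReal hint1 (Eventually.of_forall fun x => by
      have := hA x; positivity)]
    unfold Ie
    refine lintegral_congr fun x => ?_
    have := hA x
    rw [aux_enorm_rpow _ (by linarith), ← ENNReal.ofReal_mul (by positivity), ← Ae_eq]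
    rfl
  refine ⟨by rw [e1]; simp, ?_⟩
  have := ENNReal.ofReal_le_ofReal (ibp_real (k := k) (σ := σ) (by linarith) hε hψ1 hψ2 (fun x => by positivity))
  rw [ENNReal.ofReal_mul (by linarith), ← e1] at this
  refine this.trans ?_
  rw [ofReal_integral_eq_lintegral_ofReal hint2 (Eventually.of_forall fun x => by
      have := hA x; positivity)]
  have hcs2 := grad_cs hφ (p := twoStar N σ) (by linarith) (fun x => ENNReal.ofReal (Ae N k ε x ^ ((1-σ)/2)))
    (by have := (hAr ((1-σ)/2)).measurable; fun_prop)
  have e2 : ∀ x, ENNReal.ofReal (Ae N k ε x ^ ((1-σ)/2) * ‖fderiv ℝ (fun x => ‖φ x‖ ^ twoStar N σ) x‖) =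
      ENNReal.ofReal (Ae N k ε x ^ ((1-σ)/2)) * ‖fderiv ℝ (fun x => ‖φ x‖ ^ twoStar N σ) x‖ₑ := fun x => by
    have := hA x
    rw [ENNReal.ofReal_mul (by positivity), ofReal_norm]
  simp_rw [e2]
  refine hcs2.trans_eq ?_
  congr 3
  unfold Ie
  refine lintegral_congr fun x => ?_
  have hAx := hA x
  have e3 : 2 * twoStar N σ - 2 = twoStar N (2 * σ - 2) := by
    have : (3:ℝ) ≤ (N:ℝ) := by exact_mod_cast hN
    have : (N:ℝ) - 2 ≠ 0 := by linarith
    unfold twoStar; field_simp; ring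
  rw [e3, ENNReal.ofReal_rpow_of_nonneg (by positivity) (by norm_num), ← Ae_eq, ← Real.rpow_mul hAx.le]
  rw [show (1-σ)/2*2 = -(2*σ-2)/2 by ring]

lemma ibp_reg {N k : ℕ} (hN : 3 ≤ N) {σ : ℝ} (h1 : 1 ≤ σ) (h2 : σ ≤ 2) (hd : σ < ((N - k : ℕ) : ℝ))
    (h : RegHS N k (2 * σ - 2)) : RegHS N k σ := by
  obtain ⟨K, hK⟩ := h
  have hp := ts_two_le hN (σ := σ) (by linarith)
  set D : ℝ≥0 := (((N - k : ℕ) : ℝ) - σ).toNNReal with hD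
  have hD0 : D ≠ 0 := by
    have : 0 < D := Real.toNNReal_pos.2 (by linarith)
    exact this.ne'
  set C2 : ℝ≥0 := (twoStar N σ).toNNReal with hC2
  refine ⟨D⁻¹ * (C2 * K ^ (1/2:ℝ)), fun ε hε φ hφ hcs => ?_⟩
  have hs := (ibp_step (k := k) hN h1 h2 hd hε hφ hcs).2
  change (D : ℝ≥0∞) * _ ≤ C2 * _ at hs
  have hK' := hK ε hε φ hφ hcs
  have e3 : twoStar N (2 * σ - 2) / 2 * (1/2) + 1/2 = twoStar N σ / 2 := by
    have : (3:ℝ) ≤ (N:ℝ) := by exact_mod_cast hN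
    have : (N:ℝ) - 2 ≠ 0 := by linarith
    unfold twoStar; field_simp; ring
  have hp' := ts_two_le hN (σ := 2 * σ - 2) (by linarith)
  have h3 : (D : ℝ≥0∞) * Ie N k σ ε φ ≤ C2 * K ^ (1/2:ℝ) * En N φ ^ (twoStar N σ / 2) := by
    refine hs.trans ?_
    calc _ ≤ (C2:ℝ≥0∞) * ((K * En N φ ^ (twoStar N (2 * σ - 2) / 2)) ^ (1/2:ℝ) * En N φ ^ (1/2:ℝ)) := by gcongr
      _ = _ := by
        rw [ENNReal.mul_rpow_of_nonneg _ _ (by norm_num), ← ENNReal.rpow_mul, mul_assoc,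
          ← ENNReal.rpow_add_of_nonneg _ _ (by linarith) (by norm_num), e3]
        ring
  rw [ENNReal.mul_le_iff_le_inv (by simpa using hD0) (by simp)] at h3
  refine h3.trans_eq ?_
  push_cast
  rw [ENNReal.coe_rpow_of_nonneg _ (by norm_num), ENNReal.coe_inv hD0]
  ring

lemma hardy_reg {N k : ℕ} (hN : 3 ≤ N) (hd : (2:ℝ) < ((N - k : ℕ) : ℝ)) : RegHS N k 2 := by
  set D : ℝ≥0 := (((N - k : ℕ) : ℝ) - 2).toNNReal with hD
  have hD0 : D ≠ 0 := by
    have : 0 < D := Real.toNNReal_pos.2 (by linarith)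
    exact this.ne'
  have hp2 : twoStar N 2 = 2 := by
    have : (3:ℝ) ≤ (N:ℝ) := by exact_mod_cast hN
    have : (N:ℝ) - 2 ≠ 0 := by linarith
    unfold twoStar; field_simp
  refine ⟨(D⁻¹ * 2) ^ 2, fun ε hε φ hφ hcs => ?_⟩
  obtain ⟨hf, hs⟩ := ibp_step (k := k) (σ := 2) hN (by norm_num) (by norm_num) hd hε hφ hcs
  change (D : ℝ≥0∞) * _ ≤ _ at hs
  norm_num [hp2] at hs ⊢
  set I := Ie N k 2 ε φ
  rcases eq_or_ne I 0 with h0 | h0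
  · rw [h0]; exact zero_le
  have hr0 : I ^ (1/2:ℝ) ≠ 0 := by simp [h0, hf]
  have hrt : I ^ (1/2:ℝ) ≠ ∞ := by simp [h0, hf]
  have hI : I = I ^ (1/2:ℝ) * I ^ (1/2:ℝ) := by
    rw [← ENNReal.rpow_add _ _ h0 hf]; norm_num
  have h4 : (D : ℝ≥0∞) * I ^ (1/2:ℝ) ≤ 2 * En N φ ^ (1/2:ℝ) := by
    rw [← ENNReal.mul_le_mul_iff_right hr0 hrt]
    calc _ = (D:ℝ≥0∞) * (I ^ (1/2:ℝ) * I ^ (1/2:ℝ)) := by ring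
      _ = D * I := by rw [← hI]
      _ ≤ _ := hs
      _ = _ := by ring
  rw [ENNReal.mul_le_iff_le_inv (by simpa using hD0) (by simp)] at h4
  have h5 := ENNReal.rpow_le_rpow h4 (show (0:ℝ) ≤ 2 by norm_num)
  rw [← ENNReal.rpow_mul, ← mul_assoc, ENNReal.mul_rpow_of_nonneg _ _ (by norm_num), ← ENNReal.rpow_mul] at h5
  norm_num at h5
  rw [ENNReal.coe_inv hD0]
  simpa using h5

lemma reg_iter {n k : ℕ} (hn : 2 ≤ n) (hk : k + 1 ≤ n) (m : ℕ) :
    ∀ σ : ℝ, 0 ≤ σ → 2 - σ ≥ (1/2) ^ m → RegHS (n+1) k σ := by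
  have hd : (2:ℝ) ≤ ((n + 1 - k : ℕ) : ℝ) := by
    have : 2 ≤ n + 1 - k := by omega
    exact_mod_cast this
  induction m with
  | zero =>
    intro σ h0 h2
    norm_num at h2
    rcases lt_or_ge σ 1 with h | h
    · exact caseC hn (by omega) h0 h
    · exact ibp_reg (by omega) h (by linarith) (by linarith) (caseC hn (by omega) (by linarith) (by linarith))
  | succ m ih =>
    intro σ h0 h2
    have : (0:ℝ) < (1/2)^(m+1) := by positivity
    rcases lt_or_ge σ 1 with h | h
    · exact caseC hn (by omega) h0 h
    · refine ibp_reg (by omega) h (by linarith) (by linarith) (ih _ (by linarith) ?_)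
      rw [pow_succ] at h2; linarith

lemma reg_all {n k : ℕ} (hn : 2 ≤ n) (hk : k ≤ n) {σ : ℝ} (h0 : 0 ≤ σ) (h2 : σ ≤ 2)
    (hexc : σ = 2 → k + 1 ≠ n) (hc : ¬ (k = n ∧ 1 ≤ σ)) : RegHS (n+1) k σ := by
  rcases lt_or_ge σ 1 with h | h
  · exact caseC hn hk h0 h
  have hk1 : k + 1 ≤ n := by
    rcases eq_or_ne k n with e | e
    · exact absurd ⟨e, h⟩ hc
    · omega
  rcases eq_or_ne σ 2 with e | e
  · subst e
    have := hexc rfl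
    refine hardy_reg (by omega) ?_
    have : 2 < n + 1 - k := by omega
    exact_mod_cast this
  · have : 0 < 2 - σ := by
      have := lt_of_le_of_ne h2 e
      linarith
    obtain ⟨m, hm⟩ := exists_pow_lt_of_lt_one this (show (1/2:ℝ) < 1 by norm_num)
    exact reg_iter hn hk1 m σ h0 hm.le

lemma En_eq (N : ℕ) (φ : Euc N → ℝ) : En N φ = eLpNorm (fderiv ℝ φ) 2 volume ^ (2:ℝ) := by
  rw [eLpNorm_eq_lintegral_rpow_enorm_toReal (by norm_num) (by norm_num), ← ENNReal.rpow_mul]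
  simp [En]

lemma fd_aesm (N : ℕ) (v : Euc N → ℝ) : AEStronglyMeasurable (fderiv ℝ v) volume :=
  (measurable_fderiv ℝ v).aestronglyMeasurable

lemma approx {N : ℕ} (hN : 3 ≤ N) {v : Euc N → ℝ} (hv : MemD12 N v)
    (hm : AEMeasurable (fun x => |v x|) volume) :
    ∃ φ : ℕ → Euc N → ℝ, (∀ n, ContDiff ℝ 1 (φ n) ∧ HasCompactSupport (φ n)) ∧
      (∀ᵐ x, Tendsto (fun n => |φ n x|) atTop (nhds |v x|)) ∧
      Tendsto (fun n => eLpNorm (fun x => fderiv ℝ v x - fderiv ℝ (φ n) x) 2 volume)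
      atTop (nhds 0) := by
  obtain ⟨φ, h1, h2, h3⟩ := hv
  have hN' : (3:ℝ) ≤ N := by exact_mod_cast hN
  have hQ : ENNReal.ofReal (2 * (N : ℝ) / ((N : ℝ) - 2)) ≠ 0 := by
    have : 0 < 2 * (N : ℝ) / ((N : ℝ) - 2) := div_pos (by linarith) (by linarith)
    simpa using this
  have hT : Tendsto (fun n => eLpNorm ((fun x => |φ n x|) - (fun x => |v x|))
      (ENNReal.ofReal (2 * (N : ℝ) / ((N : ℝ) - 2))) volume) atTop (nhds 0) := by
    refine tendsto_of_tendsto_of_tendsto_of_le_of_le tendsto_const_nhds h2 (fun _ => zero_le)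
      fun n => eLpNorm_mono fun x => ?_
    simp only [Pi.sub_apply, Real.norm_eq_abs]
    rw [abs_sub_comm (v x)]
    exact abs_abs_sub_abs_le_abs_sub _ _
  have hM := tendstoInMeasure_of_tendsto_eLpNorm hQ
    (fun n => ((h1 n).1.continuous.abs).aestronglyMeasurable) hm.aestronglyMeasurable hT
  obtain ⟨ns, hns, hae⟩ := hM.exists_seq_tendsto_ae
  exact ⟨fun n => φ (ns n), fun n => ⟨(h1 _).1.of_le (by exact_mod_cast le_top), (h1 _).2⟩, hae,
    h3.comp hns.tendsto_atTop⟩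

lemma En_v_ne_top {N : ℕ} {v : Euc N → ℝ} (hv : MemD12 N v) : En N v ≠ ∞ := by
  obtain ⟨φ, h1, h2, h3⟩ := hv
  rw [En_eq]
  obtain ⟨n, hn⟩ := (h3.eventually_lt_const (show (0:ℝ≥0∞) < 1 by norm_num)).exists
  have hφ := En_ne_top (φ := φ n) ((h1 n).1.of_le (by exact_mod_cast le_top)) (h1 n).2
  rw [En_eq] at hφ
  have h4 : eLpNorm (fderiv ℝ v) 2 volume ≤
      eLpNorm (fun x => fderiv ℝ v x - fderiv ℝ (φ n) x) 2 volume + eLpNorm (fderiv ℝ (φ n)) 2 volume := by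
    have := eLpNorm_add_le (μ := volume) (p := 2) ((fd_aesm N v).sub (fd_aesm N (φ n))) (fd_aesm N (φ n)) (by norm_num)
    rw [sub_add_cancel] at this
    exact this
  have h5 : eLpNorm (fderiv ℝ (φ n)) 2 volume ≠ ∞ := by
    intro h; rw [h] at hφ; simp at hφ
  refine ENNReal.rpow_ne_top_of_nonneg (by norm_num) (ne_top_of_le_ne_top ?_ h4)
  exact ENNReal.add_ne_top.2 ⟨hn.ne_top, h5⟩

lemma last_ne_zero_ae (n : ℕ) : ∀ᵐ x : Euc (n+1), x (Fin.last n) ≠ 0 := by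
  rw [ae_iff]
  have hms : MeasurableSet {x : Euc (n+1) | ¬ x (Fin.last n) ≠ 0} := by
    have : Measurable fun x : Euc (n+1) => x (Fin.last n) := by fun_prop
    have h0 := this (measurableSet_singleton 0)
    convert h0 using 1
    ext x; simp
  rw [← lintegral_indicator_one hms, mkPt_lintegral n _ (by
    exact (measurable_one.indicator hms).aemeasurable)]
  simp only [indicator, mem_ofPred_eq, mkPt_last]
  have : ∀ᵐ s : ℝ, (if ¬ s ≠ 0 then (1:ℝ≥0∞) else 0) = 0 := by
    filter_upwards [(volume : Measure ℝ).ae_ne 0] with s hs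
    simp [hs]
  change ∫⁻ _ : Fin n → ℝ, ∫⁻ s : ℝ, (if ¬ s ≠ 0 then (1:ℝ≥0∞) else 0) = 0
  rw [lintegral_congr_ae this]
  simp

lemma zNorm_pos_ae {n k : ℕ} (hk : k ≤ n) : ∀ᵐ x : Euc (n+1), 0 < zNorm (n+1) k x := by
  filter_upwards [last_ne_zero_ae n] with x hx
  exact (abs_pos.2 hx).trans_le (zNorm_ge n k hk x)

lemma limit {n k : ℕ} (hn : 2 ≤ n) (hk : k ≤ n) {σ : ℝ} (h2 : σ ≤ 2) {K : ℝ≥0}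
    (hK : ∀ ε, 0 < ε → ∀ φ, ContDiff ℝ 1 φ → HasCompactSupport φ →
      Ie (n+1) k σ ε φ ≤ K * En (n+1) φ ^ (twoStar (n+1) σ / 2))
    {v : Euc (n+1) → ℝ} (hv : MemD12 (n+1) v) (hm : AEMeasurable (fun x => |v x|) volume) :
    ∫⁻ x, ENNReal.ofReal (zNorm (n+1) k x ^ (-σ)) * ‖v x‖ₑ ^ twoStar (n+1) σ ≤
      K * En (n+1) v ^ (twoStar (n+1) σ / 2) := by
  obtain ⟨φ, h1, hae, h3⟩ := approx (by omega) hv hm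
  have hp := ts_two_le (N := n+1) (σ := σ) (by omega) h2
  set p := twoStar (n+1) σ
  have hEp : ∀ φ : Euc (n+1) → ℝ, En (n+1) φ ^ (p/2) = eLpNorm (fderiv ℝ φ) 2 volume ^ p := fun φ => by
    rw [En_eq, ← ENNReal.rpow_mul]; congr 1; ring
  have hEn := En_v_ne_top hv
  set ε : ℕ → ℝ := fun j => 1 / ((j:ℝ) + 1)
  have hε : ∀ j, 0 < ε j := fun j => by positivity
  have hε0 : Tendsto ε atTop (nhds 0) := tendsto_one_div_add_atTop_nhds_zero_nat
  set a := eLpNorm (fderiv ℝ v) 2 volume with ha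
  have hatop : a ≠ ∞ := by
    intro h; rw [En_eq, ← ha, h] at hEn; simp at hEn
  have hbd : ∀ j, Ie (n+1) k σ (ε j) (φ j) ≤
      K * (a + eLpNorm (fun x => fderiv ℝ v x - fderiv ℝ (φ j) x) 2 volume) ^ p := fun j => by
    refine (hK _ (hε j) _ (h1 j).1 (h1 j).2).trans ?_
    rw [hEp]
    gcongr
    have := eLpNorm_sub_le (μ := volume) (p := 2) (fd_aesm _ v) ((fd_aesm _ v).sub (fd_aesm _ (φ j)))  (by norm_num)
    rw [sub_sub_cancel] at this
    exact this
  have hlim : Tendsto (fun j => (K:ℝ≥0∞) * (a + eLpNorm (fun x => fderiv ℝ v x - fderiv ℝ (φ j) x) 2 volume) ^ p)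
      atTop (nhds (K * a ^ p)) := by
    have := ((ENNReal.continuous_rpow_const (y := p)).tendsto (a + 0)).comp (h3.const_add a)
    rw [add_zero] at this
    exact ENNReal.Tendsto.const_mul this (Or.inr (by simp))
  rw [hEp]
  have hcz := zNorm_cont (n+1) k
  calc _ ≤ ∫⁻ x, liminf (fun j => ENNReal.ofReal ((zNorm (n+1) k x ^ 2 + ε j ^ 2) ^ (-σ / 2)) * ‖φ j x‖ₑ ^ p) atTop := by
        refine lintegral_mono_ae ?_
        filter_upwards [hae, zNorm_pos_ae hk] with x hx hz
        refine le_of_eq (Tendsto.liminf_eq ?_).symm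
        have e1 : Tendsto (fun j => ENNReal.ofReal ((zNorm (n+1) k x ^ 2 + ε j ^ 2) ^ (-σ / 2))) atTop
            (nhds (ENNReal.ofReal (zNorm (n+1) k x ^ (-σ)))) := by
          refine (ENNReal.continuous_ofReal.tendsto _).comp ?_
          have : zNorm (n+1) k x ^ (-σ) = (zNorm (n+1) k x ^ 2 + 0 ^ 2) ^ (-σ/2) := by
            rw [zero_pow two_ne_zero, add_zero, ← Real.rpow_natCast, ← Real.rpow_mul hz.le]
            congr 1; push_cast; ring
          rw [this]
          exact ((hε0.pow 2).const_add _).rpow_const (Or.inl (by positivity))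
        have e2 : Tendsto (fun j => ‖φ j x‖ₑ ^ p) atTop (nhds (‖v x‖ₑ ^ p)) := by
          refine ((ENNReal.continuous_rpow_const (y := p)).tendsto _).comp ?_
          have := (ENNReal.continuous_ofReal.tendsto _).comp hx
          simpa [Function.comp_def, ← Real.norm_eq_abs, ofReal_norm] using this
        exact ENNReal.Tendsto.mul e1 (Or.inr (ENNReal.rpow_ne_top_of_nonneg (by linarith) (by simp))) e2
          (Or.inr (by simp))
    _ ≤ liminf (fun j => Ie (n+1) k σ (ε j) (φ j)) atTop := by
        refine lintegral_liminf_le' fun j => ?_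
        have := (h1 j).1.continuous.measurable
        have := hcz.measurable
        fun_prop
    _ ≤ liminf (fun j => (K:ℝ≥0∞) * (a + eLpNorm (fun x => fderiv ℝ v x - fderiv ℝ (φ j) x) 2 volume) ^ p) atTop :=
        liminf_le_liminf (Eventually.of_forall hbd)
    _ = _ := hlim.liminf_eq

lemma abs_aem {n k : ℕ} (hn : 2 ≤ n) (hk : k ≤ n) {σ : ℝ} (h2 : σ ≤ 2) {v : Euc (n+1) → ℝ}
    (h : Integrable (fun x => zNorm (n+1) k x ^ (-σ) * |v x| ^ twoStar (n+1) σ)) :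
    AEMeasurable (fun x => |v x|) volume := by
  have hp := ts_two_le (N := n+1) (σ := σ) (by omega) h2
  have h3 : AEMeasurable (fun x => (zNorm (n+1) k x ^ σ * (zNorm (n+1) k x ^ (-σ) * |v x| ^ twoStar (n+1) σ)) ^ (1 / twoStar (n+1) σ)) volume := by
    have := (zNorm_cont (n+1) k).measurable
    exact (((this.pow_const σ).aemeasurable).mul h.1.aemeasurable).pow_const _
  refine h3.congr ?_
  filter_upwards [zNorm_pos_ae hk] with x hz
  rw [← mul_assoc, ← Real.rpow_add hz, add_neg_cancel, Real.rpow_zero, one_mul,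
    ← Real.rpow_mul (abs_nonneg _), mul_one_div_cancel (by linarith), Real.rpow_one]

lemma final {n k : ℕ} (hn : 2 ≤ n) (hk : k ≤ n) {σ : ℝ} (h2 : σ ≤ 2) (K : ℝ≥0)
    (h : ∀ v : Euc (n+1) → ℝ, MemD12 (n+1) v → AEMeasurable (fun x => |v x|) volume →
      ∫⁻ x, ENNReal.ofReal (zNorm (n+1) k x ^ (-σ)) * ‖v x‖ₑ ^ twoStar (n+1) σ ≠ ∞ → 
      ∫⁻ x, ENNReal.ofReal (zNorm (n+1) k x ^ (-σ)) * ‖v x‖ₑ ^ twoStar (n+1) σ ≤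
      K * En (n+1) v ^ (twoStar (n+1) σ / 2)) :
    ∃ C : ℝ, 0 < C ∧ ∀ v : Euc (n+1) → ℝ, MemD12 (n+1) v →
      C * hsInt (n+1) k σ v ^ (2 / twoStar (n+1) σ) ≤ gradL2 (n+1) v := by
  have hp := ts_two_le (N := n+1) (σ := σ) (by omega) h2
  have hg : ∀ v, gradL2 (n+1) v = (En (n+1) v).toReal := fun v => by
    unfold gradL2 En
    rw [integral_eq_lintegral_of_nonneg_ae (Eventually.of_forall fun x => by positivity)
      (by have := measurable_fderiv ℝ v; exact (this.norm.pow_const 2).aestronglyMeasurable)]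
    congr 1
    refine lintegral_congr fun x => ?_
    rw [← ofReal_norm, ENNReal.ofReal_rpow_of_nonneg (norm_nonneg _) (by norm_num)]
    norm_num
  set p := twoStar (n+1) σ with hpdef
  set M : ℝ := (K:ℝ) + 1
  have hM : 0 < M := by positivity
  refine ⟨(M ^ (2/p))⁻¹, by positivity, fun v hv => ?_⟩
  have hgn : 0 ≤ gradL2 (n+1) v := by rw [hg]; positivity
  by_cases hint : Integrable (fun x => zNorm (n+1) k x ^ (-σ) * |v x| ^ p)
  · have hm := abs_aem hn hk h2 hint
    have hnn : ∀ x, 0 ≤ zNorm (n+1) k x ^ (-σ) * |v x| ^ p := fun x => by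
      have : 0 ≤ zNorm (n+1) k x := Real.sqrt_nonneg _
      positivity
    have e : ENNReal.ofReal (hsInt (n+1) k σ v) =
        ∫⁻ x, ENNReal.ofReal (zNorm (n+1) k x ^ (-σ)) * ‖v x‖ₑ ^ p := by
      unfold hsInt
      rw [ofReal_integral_eq_lintegral_ofReal hint (Eventually.of_forall hnn)]
      refine lintegral_congr fun x => ?_
      have : 0 ≤ zNorm (n+1) k x := Real.sqrt_nonneg _
      rw [aux_enorm_rpow _ (by linarith), ← ENNReal.ofReal_mul (by positivity)]
    have h3 := h v hv hm (by rw [← e]; simp)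
    rw [← e] at h3
    have hI : 0 ≤ hsInt (n+1) k σ v := integral_nonneg hnn
    have h4 : hsInt (n+1) k σ v ≤ M * gradL2 (n+1) v ^ (p/2) := by
      have := ENNReal.toReal_mono (ENNReal.mul_ne_top (by simp)
        (ENNReal.rpow_ne_top_of_nonneg (by linarith) (En_v_ne_top hv))) h3
      rw [ENNReal.toReal_ofReal hI, ENNReal.toReal_mul, ← ENNReal.toReal_rpow, ← hg] at this
      refine this.trans ?_
      gcongr
      simp [M]
    rw [inv_mul_le_iff₀ (by positivity)]
    calc _ ≤ (M * gradL2 (n+1) v ^ (p/2)) ^ (2/p) := by gcongr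
      _ = _ := by
        rw [Real.mul_rpow hM.le (by positivity), ← Real.rpow_mul hgn,
          show p/2 * (2/p) = 1 by field_simp, Real.rpow_one]
  · have : hsInt (n+1) k σ v = 0 := integral_undef hint
    rw [this, Real.zero_rpow (by positivity), mul_zero]
    exact hgn

lemma hardy_half (w G : ℝ → ℝ≥0∞) (hG : Measurable G) {σ p : ℝ} (hσ : 1 ≤ σ) (hp : 0 < p)
    (T : Set ℝ) (hT : ∀ᵐ s, s ∈ T)
    (hw : ∀ s' ∈ T, ∀ s ∈ T, s' < s → w s ≤ w s' + ∫⁻ r in Ioo s' s, G r)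
    (hfin : ∫⁻ s in Ioi (0:ℝ), ENNReal.ofReal (s ^ (-σ)) * w s ^ p ≠ ∞) :
    ∫⁻ s in Ioi (0:ℝ), ENNReal.ofReal (s ^ (-2:ℝ)) * w s ^ (2:ℝ) ≤ 4 * ∫⁻ r in Ioi 0, G r ^ (2:ℝ) := by
  refine le_trans ?_ (aux_hardy1 G hG)
  have h := aux_trace w G hσ hp T hT (fun s' hs' s hs h0 h1 => (hw s' hs' s hs h1).trans (by
    gcongr)) hfin
  refine lintegral_mono_ae ?_
  filter_upwards [ae_restrict_of_ae h, ae_restrict_mem measurableSet_Ioi] with s h1 h2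
  have := h1 h2
  gcongr

lemma lint_Ioo_neg (G : ℝ → ℝ≥0∞) (a b : ℝ) :
    ∫⁻ r in Ioo a b, G (-r) = ∫⁻ r in Ioo (-b) (-a), G r := by
  rw [← lintegral_indicator measurableSet_Ioo, ← lintegral_indicator measurableSet_Ioo,
    ← lintegral_neg_eq_self]
  refine lintegral_congr fun r => ?_
  simp only [indicator, mem_Ioo]
  have : (a < -r ∧ -r < b) ↔ (-b < r ∧ r < -a) := by constructor <;> rintro ⟨h1, h2⟩ <;> constructor <;> linarith
  simp [this]

lemma hardy_line (w G : ℝ → ℝ≥0∞) (hG : Measurable G) {σ p : ℝ} (hσ : 1 ≤ σ) (hp : 0 < p)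
    (T : Set ℝ) (hT : ∀ᵐ s, s ∈ T)
    (hw : ∀ s' ∈ T, ∀ s ∈ T, s' < s → w s ≤ w s' + ∫⁻ r in Ioo s' s, G r)
    (hw' : ∀ s' ∈ T, ∀ s ∈ T, s' < s → w s' ≤ w s + ∫⁻ r in Ioo s' s, G r)
    (hfin : ∫⁻ s, ENNReal.ofReal (|s| ^ (-σ)) * w s ^ p ≠ ∞) :
    ∫⁻ s, ENNReal.ofReal (|s| ^ (-2:ℝ)) * w s ^ (2:ℝ) ≤ 4 * ∫⁻ r, G r ^ (2:ℝ) := by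
  rw [aux_lint_symm] at hfin ⊢
  rw [aux_lint_symm (fun r => G r ^ (2:ℝ)), mul_add]
  rw [ENNReal.add_ne_top] at hfin
  have e : ∀ (τ q : ℝ) (u : ℝ → ℝ≥0∞), ∫⁻ s in Ioi (0:ℝ), ENNReal.ofReal (|s| ^ τ) * u s ^ q =
      ∫⁻ s in Ioi (0:ℝ), ENNReal.ofReal (s ^ τ) * u s ^ q := fun τ q u =>
    setLIntegral_congr_fun measurableSet_Ioi fun s hs => by
      simp only [abs_of_pos (mem_Ioi.1 hs)]
  simp_rw [abs_neg] at hfin ⊢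
  rw [e, e _ _ (fun s => w (-s))] at hfin
  rw [e, e _ _ (fun s => w (-s))]
  refine add_le_add (hardy_half w G hG hσ hp T hT hw hfin.1)
    (hardy_half (fun s => w (-s)) (fun s => G (-s)) (hG.comp measurable_neg) hσ hp {s | -s ∈ T}
      ?_ ?_ hfin.2)
  · exact (Measure.measurePreserving_neg (volume : Measure ℝ)).quasiMeasurePreserving.ae hT
  · intro s' hs' s hs h
    rw [lint_Ioo_neg]
    exact hw' (-s) hs (-s') hs' (by linarith)

lemma ftc_line {f : ℝ → ℝ} (hf : ContDiff ℝ 1 f) {a b : ℝ} (hab : a < b) :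
    ‖f b - f a‖ₑ ≤ ∫⁻ r in Ioo a b, ‖deriv f r‖ₑ := by
  have hc : Continuous (deriv f) := hf.continuous_deriv le_rfl
  rw [← intervalIntegral.integral_eq_sub_of_hasDerivAt
    (fun x _ => (hf.differentiable one_ne_zero x).hasDerivAt) (hc.intervalIntegrable _ _),
    intervalIntegral.integral_of_le hab.le, integral_Ioc_eq_integral_Ioo]
  exact enorm_integral_le_lintegral_enorm _

lemma cs_line {D : ℝ → ℝ≥0∞} (hD : Measurable D) (a b : ℝ) :
    ∫⁻ r in Ioo a b, D r ≤ (∫⁻ r, D r ^ (2:ℝ)) ^ (1/2:ℝ) * ENNReal.ofReal (b - a) ^ (1/2:ℝ) := by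
  have := ENNReal.lintegral_mul_le_Lp_mul_Lq (volume.restrict (Ioo a b)) (p := 2) (q := 2)
    Real.HolderConjugate.two_two hD.aemeasurable (g := fun _ => 1) aemeasurable_const
  simp only [Pi.mul_apply, mul_one] at this
  refine this.trans ?_
  simp only [ENNReal.one_rpow, lintegral_const, Measure.restrict_apply MeasurableSet.univ, univ_inter,
    Real.volume_Ioo, one_mul]
  gcongr
  exact Measure.restrict_le_self

lemma line_est {f : ℕ → ℝ → ℝ} (hf : ∀ j, ContDiff ℝ 1 (f j)) {u : ℝ → ℝ} {G : ℝ → ℝ≥0∞} {D : ℕ → ℝ → ℝ≥0∞}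
    (hD : ∀ j, Measurable (D j)) (hG : Measurable G) (hder : ∀ j r, ‖deriv (f j) r‖ₑ ≤ G r + D j r)
    (hA : Tendsto (fun j => ∫⁻ r, D j r ^ (2:ℝ)) atTop (nhds 0)) {a b s t : ℝ} (hab : a < b)
    (hst : (s = a ∧ t = b) ∨ (s = b ∧ t = a))
    (hs : Tendsto (fun j => |f j s|) atTop (nhds |u s|)) (ht : Tendsto (fun j => |f j t|) atTop (nhds |u t|)) :
    ‖u s‖ₑ ≤ ‖u t‖ₑ + ∫⁻ r in Ioo a b, G r := by
  have conv : ∀ x, Tendsto (fun j => |f j x|) atTop (nhds |u x|) →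
      Tendsto (fun j => ‖f j x‖ₑ) atTop (nhds ‖u x‖ₑ) := fun x hx => by
    have := (ENNReal.continuous_ofReal.tendsto _).comp hx
    simpa [Function.comp_def, ← Real.norm_eq_abs, ofReal_norm] using this
  have hA' : Tendsto (fun j => (∫⁻ r, D j r ^ (2:ℝ)) ^ (1/2:ℝ) * ENNReal.ofReal (b - a) ^ (1/2:ℝ)) atTop (nhds 0) := by
    have h1 := ((ENNReal.continuous_rpow_const (y := (1/2:ℝ))).tendsto 0).comp hA
    rw [ENNReal.zero_rpow_of_pos (by norm_num)] at h1
    have := ENNReal.Tendsto.mul_const (b := ENNReal.ofReal (b - a) ^ (1/2:ℝ)) h1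
      (Or.inr (ENNReal.rpow_ne_top_of_nonneg (by norm_num) (by simp)))
    simpa using this
  have hR := ((conv t ht).add_const (∫⁻ r in Ioo a b, G r)).add hA'
  rw [add_zero] at hR
  refine le_of_tendsto_of_tendsto' (conv s hs) hR fun j => ?_
  have h1 : ‖f j s - f j t‖ₑ ≤ ∫⁻ r in Ioo a b, ‖deriv (f j) r‖ₑ := by
    rcases hst with ⟨rfl, rfl⟩ | ⟨rfl, rfl⟩
    · rw [← enorm_neg, neg_sub]; exact ftc_line (hf j) hab
    · exact ftc_line (hf j) hab
  calc ‖f j s‖ₑ = ‖f j t + (f j s - f j t)‖ₑ := by congr 1; ring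
    _ ≤ ‖f j t‖ₑ + ‖f j s - f j t‖ₑ := enorm_add_le _ _
    _ ≤ ‖f j t‖ₑ + ∫⁻ r in Ioo a b, (G r + D j r) := by
        gcongr
        exact h1.trans (lintegral_mono fun r => hder j r)
    _ = ‖f j t‖ₑ + (∫⁻ r in Ioo a b, G r) + ∫⁻ r in Ioo a b, D j r := by
        rw [lintegral_add_left hG, add_assoc]
    _ ≤ _ := by gcongr; exact cs_line (hD j) a b

lemma approx2 {n : ℕ} (hn : 2 ≤ n) {v : Euc (n+1) → ℝ} (hv : MemD12 (n+1) v)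
    (hm : AEMeasurable (fun x => |v x|) volume) :
    ∃ φ : ℕ → Euc (n+1) → ℝ, (∀ j, ContDiff ℝ 1 (φ j)) ∧
      (∀ᵐ x, Tendsto (fun j => |φ j x|) atTop (nhds |v x|)) ∧
      ∀ᵐ y : Fin n → ℝ, Tendsto (fun j => ∫⁻ s, ‖fderiv ℝ v (mkPt n y s) - fderiv ℝ (φ j) (mkPt n y s)‖ₑ ^ (2:ℝ))
        atTop (nhds 0) := by
  obtain ⟨φ, h1, hae, h3⟩ := approx (by omega) hv hm
  obtain ⟨δ, hδ, hδs⟩ := ENNReal.exists_pos_sum_of_countable (ε := 1) one_ne_zero ℕ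
  have h4 : Tendsto (fun j => ∫⁻ x, ‖fderiv ℝ v x - fderiv ℝ (φ j) x‖ₑ ^ (2:ℝ)) atTop (nhds 0) := by
    have h5 := ((ENNReal.continuous_rpow_const (y := (2:ℝ))).tendsto 0).comp h3
    rw [ENNReal.zero_rpow_of_pos (by norm_num)] at h5
    refine h5.congr fun j => ?_
    simp only [Function.comp]
    rw [eLpNorm_eq_lintegral_rpow_enorm_toReal (by norm_num) (by norm_num), ← ENNReal.rpow_mul]
    simp
  obtain ⟨ns, hns, hb⟩ := extraction_forall_of_eventually' (fun j =>
    (eventually_atTop.1 (h4.eventually_le_const (show (0:ℝ≥0∞) < δ j by exact_mod_cast hδ j))))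
  refine ⟨fun j => φ (ns j), fun j => (h1 _).1, ?_, ?_⟩
  · filter_upwards [hae] with x hx
    exact hx.comp hns.tendsto_atTop
  have hmD : ∀ j, Measurable (fun x => ‖fderiv ℝ v x - fderiv ℝ (φ j) x‖ₑ ^ (2:ℝ)) := fun j =>
    (((measurable_fderiv ℝ v).sub (measurable_fderiv ℝ (φ j))).enorm).pow_const _
  have hmA : ∀ j, Measurable (fun y : Fin n → ℝ => ∫⁻ s, ‖fderiv ℝ v (mkPt n y s) - fderiv ℝ (φ j) (mkPt n y s)‖ₑ ^ (2:ℝ)) := fun j =>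
    Measurable.lintegral_prod_right' ((hmD j).comp (mkPt_measurable n))
  have hsum : ∫⁻ y : Fin n → ℝ, ∑' j, ∫⁻ s, ‖fderiv ℝ v (mkPt n y s) - fderiv ℝ (φ (ns j)) (mkPt n y s)‖ₑ ^ (2:ℝ) ≠ ∞ := by
    rw [lintegral_tsum fun j => (hmA _).aemeasurable]
    refine ne_top_of_le_ne_top hδs.ne_top (ENNReal.tsum_le_tsum fun j => ?_)
    rw [← mkPt_lintegral n _ (hmD (ns j)).aemeasurable]
    exact hb j
  filter_upwards [ae_lt_top (Measurable.ennreal_tsum fun j => hmA (ns j)) hsum] with y hy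
  exact ENNReal.tendsto_atTop_zero_of_tsum_ne_top hy.ne

lemma hardy_last {n : ℕ} (hn : 2 ≤ n) {σ p : ℝ} (hσ : 1 ≤ σ) (hp : 0 < p) {v : Euc (n+1) → ℝ} (hv : MemD12 (n+1) v)
    (hm : AEMeasurable (fun x => |v x|) volume)
    (hfin : ∫⁻ x : Euc (n+1), ENNReal.ofReal (|x (Fin.last n)| ^ (-σ)) * ‖v x‖ₑ ^ p ≠ ∞) :
    ∫⁻ x : Euc (n+1), ENNReal.ofReal (|x (Fin.last n)| ^ (-2:ℝ)) * ‖v x‖ₑ ^ (2:ℝ) ≤ 4 * En (n+1) v := by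
  obtain ⟨φ, h1, hae, h3⟩ := approx2 hn hv hm
  have hml : Measurable fun x : Euc (n+1) => x (Fin.last n) := by fun_prop
  have hme : AEMeasurable (fun x => ‖v x‖ₑ) volume := by
    have := hm.ennreal_ofReal
    simpa [← Real.norm_eq_abs, ofReal_norm] using this
  have hmi : ∀ τ q : ℝ, AEMeasurable (fun x : Euc (n+1) => ENNReal.ofReal (|x (Fin.last n)| ^ τ) * ‖v x‖ₑ ^ q) volume :=
    fun τ q => (((measurable_abs.comp hml).pow_const τ).ennreal_ofReal).aemeasurable.mul (hme.pow_const q)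
  have hfd := measurable_fderiv ℝ v
  rw [mkPt_lintegral n _ (hmi _ _)] at hfin ⊢
  unfold En
  rw [mkPt_lintegral n _ (by fun_prop), ← lintegral_const_mul'  _ _ (by norm_num)]
  have hfin2 : ∀ᵐ y : Fin n → ℝ, ∫⁻ s, ENNReal.ofReal (|mkPt n y s (Fin.last n)| ^ (-σ)) * ‖v (mkPt n y s)‖ₑ ^ p < ∞ := by
    refine ae_lt_top' ?_ hfin
    exact ((hmi (-σ) p).comp_quasiMeasurePreserving (mkPt_mp n).quasiMeasurePreserving).lintegral_prod_right'
  refine lintegral_mono_ae ?_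
  filter_upwards [hfin2, h3, mkPt_ae n hae] with y hy1 hy2 hy3
  simp only [mkPt_last] at hy1 ⊢
  have hmy : Measurable (mkPt n y) := (mkPt_isometry n y).continuous.measurable
  have hGm : Measurable (fun s => ‖fderiv ℝ v (mkPt n y s)‖ₑ) := (hfd.comp hmy).enorm
  have hDm : ∀ j, Measurable (fun s => ‖fderiv ℝ v (mkPt n y s) - fderiv ℝ (φ j) (mkPt n y s)‖ₑ) := fun j =>
    ((hfd.comp hmy).sub ((measurable_fderiv ℝ (φ j)).comp hmy)).enorm
  have hder : ∀ j r, ‖deriv (fun s => φ j (mkPt n y s)) r‖ₑ ≤ ‖fderiv ℝ v (mkPt n y r)‖ₑ +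
      ‖fderiv ℝ v (mkPt n y r) - fderiv ℝ (φ j) (mkPt n y r)‖ₑ := fun j r => by
    refine (mkPt_deriv n y r ((h1 j).differentiable one_ne_zero)).trans ?_
    calc _ = ‖fderiv ℝ v (mkPt n y r) - (fderiv ℝ v (mkPt n y r) - fderiv ℝ (φ j) (mkPt n y r))‖ₑ := by
          rw [sub_sub_cancel]
      _ ≤ _ := enorm_sub_le
  have key := fun {a b s t : ℝ} => line_est (f := fun j s => φ j (mkPt n y s)) (u := fun s => v (mkPt n y s))
    (fun j => (h1 j).comp (mkPt_contDiff n y)) hDm hGm hder hy2 (a := a) (b := b) (s := s) (t := t)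
  refine hardy_line (fun s => ‖v (mkPt n y s)‖ₑ) _ hGm hσ hp
    {s | Tendsto (fun j => |φ j (mkPt n y s)|) atTop (nhds |v (mkPt n y s)|)} hy3 ?_ ?_ hy1.ne
  · intro s' hs' s hs h
    exact key h (Or.inr ⟨rfl, rfl⟩) hs hs'
  · intro s' hs' s hs h
    exact key h (Or.inl ⟨rfl, rfl⟩) hs' hs

lemma zNorm_last (n : ℕ) (x : Euc (n+1)) : zNorm (n+1) n x = |x (Fin.last n)| := by
  unfold zNorm
  rw [Fin.sum_univ_castSucc]
  have : ∀ i : Fin n, ¬ (n ≤ (i:ℕ)) := fun i => by omega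
  simp [this, Real.sqrt_sq_eq_abs]

lemma caseC' {n : ℕ} (hn : 2 ≤ n) {σ : ℝ} (h1 : 1 ≤ σ) (h2 : σ ≤ 2) :
    ∃ K : ℝ≥0, ∀ v : Euc (n+1) → ℝ, MemD12 (n+1) v → AEMeasurable (fun x => |v x|) volume →
      ∫⁻ x, ENNReal.ofReal (zNorm (n+1) n x ^ (-σ)) * ‖v x‖ₑ ^ twoStar (n+1) σ ≠ ∞ → 
      ∫⁻ x, ENNReal.ofReal (zNorm (n+1) n x ^ (-σ)) * ‖v x‖ₑ ^ twoStar (n+1) σ ≤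
      K * En (n+1) v ^ (twoStar (n+1) σ / 2) := by
  obtain ⟨K0, hK0⟩ := caseC (k := n) hn le_rfl le_rfl (zero_lt_one)
  have hp := ts_two_le (N := n+1) (σ := σ) (by omega) h2
  have hq := ts_two_le (N := n+1) (σ := 0) (by omega) (by norm_num)
  refine ⟨4 ^ (σ/2) * K0 ^ (1 - σ/2), fun v hv hm hfin => ?_⟩
  have hS := limit hn le_rfl (by norm_num) hK0 hv hm
  simp only [neg_zero, Real.rpow_zero, ENNReal.ofReal_one, one_mul] at hS
  simp only [zNorm_last] at hfin ⊢
  have hH := hardy_last hn h1 (by linarith) hv hm hfin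
  have hml : Measurable fun x : Euc (n+1) => x (Fin.last n) := by fun_prop
  have hme : AEMeasurable (fun x => ‖v x‖ₑ) volume := by
    have := hm.ennreal_ofReal
    simpa [← Real.norm_eq_abs, ofReal_norm] using this
  have hmi : AEMeasurable (fun x : Euc (n+1) => ENNReal.ofReal (|x (Fin.last n)| ^ (-2:ℝ)) * ‖v x‖ₑ ^ (2:ℝ)) volume :=
    (((measurable_abs.comp hml).pow_const (-2:ℝ)).ennreal_ofReal).aemeasurable.mul (hme.pow_const 2)
  have hpq : σ + twoStar (n+1) 0 * (1 - σ/2) = twoStar (n+1) σ := by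
    have : (2:ℝ) ≤ (n:ℝ) := by exact_mod_cast hn
    have : ((n:ℝ) + 1) - 2 ≠ 0 := by linarith
    unfold twoStar; push_cast; field_simp; ring
  have hHol := ENNReal.lintegral_mul_norm_pow_le (μ := (volume : Measure (Euc (n+1)))) hmi
    (hme.pow_const (twoStar (n+1) 0)) (p := σ/2) (q := 1 - σ/2) (by linarith) (by linarith) (by ring)
  calc _ = ∫⁻ x : Euc (n+1), (ENNReal.ofReal (|x (Fin.last n)| ^ (-2:ℝ)) * ‖v x‖ₑ ^ (2:ℝ)) ^ (σ/2) *
        (‖v x‖ₑ ^ (twoStar (n+1) 0)) ^ (1 - σ/2) := by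
        refine lintegral_congr fun x => ?_
        rw [ENNReal.mul_rpow_of_nonneg _ _ (by linarith), ENNReal.ofReal_rpow_of_nonneg (by positivity) (by linarith),
          ← Real.rpow_mul (abs_nonneg _), ← ENNReal.rpow_mul, ← ENNReal.rpow_mul, mul_assoc,
          ← ENNReal.rpow_add_of_nonneg _ _ (by linarith) (mul_nonneg (by linarith) (by linarith)),
          show 2 * (σ/2) = σ by ring, show -2 * (σ/2) = -σ by ring, hpq]
    _ ≤ _ := hHol
    _ ≤ (4 * En (n+1) v) ^ (σ/2) * (K0 * En (n+1) v ^ (twoStar (n+1) 0 / 2)) ^ (1 - σ/2) := by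
        have : 0 ≤ 1 - σ/2 := by linarith
        gcongr
    _ = _ := by
        have h3 : 0 ≤ 1 - σ/2 := by linarith
        rw [ENNReal.mul_rpow_of_nonneg _ _ (by linarith), ENNReal.mul_rpow_of_nonneg _ _ h3, ← ENNReal.rpow_mul,
          mul_mul_mul_comm, ← ENNReal.rpow_add_of_nonneg _ _ (by linarith) (mul_nonneg (by linarith) h3),
          show σ/2 + twoStar (n+1) 0 / 2 * (1 - σ/2) = twoStar (n+1) σ / 2 by rw [← hpq]; ring]
        congr 1
        push_cast
        rw [ENNReal.coe_rpow_of_nonneg _ (by linarith), ENNReal.coe_rpow_of_nonneg _ h3]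
        norm_num

lemma main_thm (N k : ℕ) (σ : ℝ) (hN : 3 ≤ N) (hk : k ≤ N - 1)
    (hσ0 : 0 ≤ σ) (hσ2 : σ ≤ 2) (hexc : σ = 2 → k ≠ N - 2) :
    ∃ C : ℝ, 0 < C ∧ ∀ v : Euc N → ℝ, MemD12 N v →
      C * hsInt N k σ v ^ (2 / twoStar N σ) ≤ gradL2 N v := by
  obtain ⟨n, rfl⟩ : ∃ n, N = n + 1 := ⟨N - 1, by omega⟩
  have hn : 2 ≤ n := by omega
  have hk : k ≤ n := by omega
  by_cases hc : k = n ∧ 1 ≤ σ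
  · obtain ⟨rfl, h1⟩ := hc
    obtain ⟨K, hK⟩ := caseC' hn h1 hσ2
    exact final hn hk hσ2 K hK
  · obtain ⟨K, hK⟩ := reg_all hn hk hσ0 hσ2 (fun h => by have := hexc h; omega) hc
    exact final hn hk hσ2 K fun v hv hm _ => limit hn hk hσ2 hK hv hm

/-- Cylindrical Hardy–Sobolev inequality: for `N ≥ 3`, `0 ≤ k ≤ N-1`,
`0 ≤ σ ≤ 2` (with `k ≠ N-2` when `σ = 2`), there is a constant `C > 0`, depending only on
`N`, `k` and `σ`, such that `∫ |∇v|² ≥ C (∫ |z|^{-σ} |v|^{2*_σ})^{2/2*_σ}` for all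
`v ∈ D^{1,2}(ℝ^N)`. -/
theorem statement0 (N k : ℕ) (σ : ℝ) (hN : 3 ≤ N) (hk : k ≤ N - 1)
    (hσ0 : 0 ≤ σ) (hσ2 : σ ≤ 2) (hexc : σ = 2 → k ≠ N - 2) :
    ∃ C : ℝ, 0 < C ∧ ∀ v : Euc N → ℝ, MemD12 N v →
      C * hsInt N k σ v ^ (2 / twoStar N σ) ≤ gradL2 N v := by
  exact main_thm N k σ hN hk hσ0 hσ2 hexc
end
end

section
/- Let N ≥ 3 and 0 ≤ k ≤ N−1 with k ≠ N−2. The constant ((N−k−2)/2)² in the cylindrical Hardy inequality is optimal, i.e. ((N−k−2)/2)² = inf{ ∫_{ℝ^N} |∇v|² dx / ∫_{ℝ^N} |z|^{−2} v² dx : v ∈ D^{1,2}(ℝ^N), v ≠ 0 }, but it is never achieved: there is no nonzero v ∈ D^{1,2}(ℝ^N) with ∫_{ℝ^N} |∇v|² dx = ((N−k−2)/2)² ∫_{ℝ^N} |z|^{−2} v² dx. -/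
open MeasureTheory Filter Metric Set Bornology

noncomputable section

namespace Hardy

/-- squared norm of the z-component -/
def sq (N k : ℕ) (x : Euc N) : ℝ := ∑ i : Fin N, if k ≤ (i : ℕ) then (x i) ^ 2 else 0

/-- projection onto the z-component -/
def P (N k : ℕ) : Euc N →L[ℝ] Euc N :=
  ∑ i : Fin N, if k ≤ (i : ℕ) then
    (EuclideanSpace.proj i : Euc N →L[ℝ] ℝ).smulRight (EuclideanSpace.single i (1 : ℝ)) else 0

lemma P_apply (N k : ℕ) (x : Euc N) : P N k x =
    ∑ i : Fin N, if k ≤ (i : ℕ) then (x i) • EuclideanSpace.single i (1 : ℝ) else 0 := by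
  simp only [P, sum_apply]
  refine Finset.sum_congr rfl fun i _ => ?_
  split_ifs <;> simp

lemma P_coord (N k : ℕ) (x : Euc N) (j : Fin N) :
    P N k x j = if k ≤ (j : ℕ) then x j else 0 := by
  rw [P_apply, WithLp.ofLp_sum, Finset.sum_apply]
  rw [Finset.sum_eq_single j]
  · split_ifs <;> simp
  · intro b _ hb
    split_ifs <;> simp [Ne.symm hb]
  · simp

lemma norm_P_sq (N k : ℕ) (x : Euc N) : ‖P N k x‖ ^ 2 = sq N k x := by
  rw [EuclideanSpace.norm_sq_eq, sq]
  refine Finset.sum_congr rfl fun i _ => ?_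
  rw [P_coord]
  split_ifs <;> simp

lemma sq_nonneg' (N k : ℕ) (x : Euc N) : 0 ≤ sq N k x := by
  rw [← norm_P_sq]; positivity

lemma P_P (N k : ℕ) (x : Euc N) : P N k (P N k x) = P N k x := by
  ext j
  simp only [P_coord]
  split_ifs <;> rfl

lemma norm_P_le (N k : ℕ) (x : Euc N) : ‖P N k x‖ ≤ ‖x‖ := by
  have : ‖P N k x‖ ^ 2 ≤ ‖x‖ ^ 2 := by
    rw [norm_P_sq, EuclideanSpace.norm_sq_eq, sq]
    refine Finset.sum_le_sum fun i _ => ?_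
    split_ifs
    · simp
    · positivity
  exact (sq_le_sq₀ (norm_nonneg _) (norm_nonneg _)).1 this

lemma zNorm_eq (N k : ℕ) (x : Euc N) : zNorm N k x = ‖P N k x‖ := by
  rw [zNorm, ← sq, ← norm_P_sq, Real.sqrt_sq (norm_nonneg _)]

lemma zNorm_rpow (N k : ℕ) (x : Euc N) : zNorm N k x ^ (-(2 : ℝ)) = (sq N k x)⁻¹ := by
  rw [zNorm_eq, ← norm_P_sq, Real.rpow_neg (norm_nonneg _)]
  norm_cast

lemma sq_hasFDerivAt (N k : ℕ) (x : Euc N) :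
    HasFDerivAt (sq N k) (2 • (innerSL ℝ (P N k x)).comp (P N k)) x := by
  have h := (P N k).hasFDerivAt (x := x) |>.norm_sq
  have e : sq N k = fun x => ‖P N k x‖ ^ 2 := by ext y; rw [norm_P_sq]
  rw [e]
  exact h

lemma sq_contDiff (N k : ℕ) {n : WithTop ℕ∞} : ContDiff ℝ n (sq N k) := by
  have e : sq N k = fun x => ‖P N k x‖ ^ 2 := by ext y; rw [norm_P_sq]
  rw [e]
  exact (P N k).contDiff.norm_sq ℝ

lemma fderiv_sq_P (N k : ℕ) (x : Euc N) :
    fderiv ℝ (sq N k) x (P N k x) = 2 * sq N k x := by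
  rw [(sq_hasFDerivAt N k x).fderiv, ← norm_P_sq]
  simp [P_P]

lemma norm_fderiv_sq_le (N k : ℕ) (x : Euc N) :
    ‖fderiv ℝ (sq N k) x‖ ≤ 2 * ‖P N k x‖ := by
  refine ContinuousLinearMap.opNorm_le_bound _ (by positivity) fun y => ?_
  rw [(sq_hasFDerivAt N k x).fderiv]
  simp only [smul_apply, ContinuousLinearMap.comp_apply, innerSL_apply_apply, nsmul_eq_mul, norm_mul, Nat.cast_ofNat,
    Real.norm_ofNat]
  have h1 := norm_inner_le_norm (𝕜 := ℝ) (P N k x) (P N k y)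
  have h2 := norm_P_le N k y
  have := mul_le_mul_of_nonneg_left h2 (norm_nonneg (P N k x))
  rw [mul_assoc]; linarith

/-- volume of a box -/
lemma box_vol (N : ℕ) (a b : Fin N → ℝ) :
    volume {x : Euc N | ∀ i, x i ∈ Set.Icc (a i) (b i)} = ∏ i, ENNReal.ofReal (b i - a i) := by
  rw [← Real.volume_Icc_pi, ← (PiLp.volume_preserving_ofLp (Fin N)).measure_preimage
    measurableSet_Icc.nullMeasurableSet]
  congr 1
  ext x
  simp [Pi.le_def, forall_and]

lemma box_meas (N : ℕ) (a b : Fin N → ℝ) :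
    MeasurableSet {x : Euc N | ∀ i, x i ∈ Set.Icc (a i) (b i)} := by
  have : {x : Euc N | ∀ i, x i ∈ Set.Icc (a i) (b i)} = ⋂ i, {x | x i ∈ Set.Icc (a i) (b i)} := by
    ext; simp
  rw [this]
  refine MeasurableSet.iInter fun i => ?_
  exact (IsClosed.preimage (by fun_prop) isClosed_Icc).measurableSet

lemma sq_pos_ae (N k : ℕ) (hN : 3 ≤ N) (hk : k ≤ N - 1) : ∀ᵐ x : Euc N, 0 < sq N k x := by
  let i : Fin N := ⟨N - 1, by omega⟩
  let L : Euc N →L[ℝ] ℝ := EuclideanSpace.proj i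
  have hL : (LinearMap.ker (L : Euc N →ₗ[ℝ] ℝ)) ≠ ⊤ := by
    intro h
    have : EuclideanSpace.single i (1 : ℝ) ∈ LinearMap.ker (L : Euc N →ₗ[ℝ] ℝ) := by
      rw [h]; trivial
    simp [L] at this
  have h0 := Measure.addHaar_submodule (volume : Measure (Euc N)) _ hL
  rw [← compl_mem_ae_iff] at h0
  filter_upwards [h0] with x hx
  have hx' : x i ≠ 0 := by
    intro h; apply hx; simpa [L] using h
  rw [sq]
  refine Finset.sum_pos' (fun j _ => by split_ifs <;> positivity) ⟨i, Finset.mem_univ _, ?_⟩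
  have : k ≤ (i : ℕ) := hk
  rw [if_pos this]; positivity

lemma sum_ind (N k : ℕ) (hk : k ≤ N) (c : ℝ) :
    (∑ i : Fin N, if k ≤ (i : ℕ) then c else 0) = ((N : ℝ) - k) * c := by
  rw [Fin.sum_univ_eq_sum_range (fun i => if k ≤ i then c else 0) N, ← Finset.sum_filter,
    Finset.sum_const, nsmul_eq_mul]
  congr 1
  have : Finset.filter (fun i : ℕ => k ≤ i) (Finset.range N) = Finset.Ico k N := by
    ext; simp; tauto
  rw [this, Nat.card_Ico, Nat.cast_sub hk]

end Hardy
namespace Hardy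

lemma div_int (N k : ℕ) (hk : k ≤ N) (F : Euc N → ℝ) (hF : ContDiff ℝ 1 F)
    (hc : HasCompactSupport F) :
    ∫ x, (((N : ℝ) - k) * F x + fderiv ℝ F x (P N k x)) = 0 := by
  have hFi : Integrable F := hF.continuous.integrable_of_hasCompactSupport hc
  have hFd : Continuous (fderiv ℝ F) := hF.continuous_fderiv (by simp)
  have hcd : HasCompactSupport (fderiv ℝ F) := hc.fderiv ℝ
  have hI (i : Fin N) : Integrable (fun x : Euc N => x i * fderiv ℝ F x (EuclideanSpace.single i 1)) := by
    refine Continuous.integrable_of_hasCompactSupport (by fun_prop) ?_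
    refine hcd.mono ?_
    intro x hx
    simp only [Function.mem_support] at hx ⊢
    contrapose! hx
    simp [hx]
  have h1 (i : Fin N) : ∫ x : Euc N, x i * fderiv ℝ F x (EuclideanSpace.single i 1) = - ∫ x, F x := by
    have hx (x : Euc N) : HasFDerivAt (fun x : Euc N => x i) (EuclideanSpace.proj i : Euc N →L[ℝ] ℝ) x :=
      (EuclideanSpace.proj i : Euc N →L[ℝ] ℝ).hasFDerivAt
    have hd (x : Euc N) : fderiv ℝ (fun x : Euc N => x i) x (EuclideanSpace.single i 1) = 1 := by
      rw [(hx x).fderiv]; simp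
    rw [integral_mul_fderiv_eq_neg_fderiv_mul_of_integrable (f := fun x : Euc N => x i)]
    · simp only [hd, one_mul]
    · simpa only [hd, one_mul] using hFi
    · exact hI i
    · refine Continuous.integrable_of_hasCompactSupport (by fun_prop) hc.mul_left
    · intro x _; exact (hx x).differentiableAt
    · intro x _; exact (hF.differentiable (by simp)) x
  have h2 (x : Euc N) : fderiv ℝ F x (P N k x) =
      ∑ i : Fin N, if k ≤ (i : ℕ) then x i * fderiv ℝ F x (EuclideanSpace.single i 1) else 0 := by
    rw [P_apply, map_sum]
    refine Finset.sum_congr rfl fun i _ => ?_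
    split_ifs <;> simp
  have hI' (i : Fin N) : Integrable (fun x : Euc N => if k ≤ (i : ℕ) then
      x i * fderiv ℝ F x (EuclideanSpace.single i 1) else 0) := by
    by_cases h : k ≤ (i : ℕ)
    · simpa [h] using hI i
    · simp [h]
  simp only [h2]
  rw [integral_add (hFi.const_mul _) (integrable_finsetSum _ fun i _ => hI' i),
    integral_finsetSum _ fun i _ => hI' i, integral_const_mul]
  have : ∀ i : Fin N, (∫ x : Euc N, if k ≤ (i : ℕ) then
      x i * fderiv ℝ F x (EuclideanSpace.single i 1) else 0) =
      if k ≤ (i : ℕ) then - ∫ x, F x else 0 := by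
    intro i
    by_cases h : k ≤ (i : ℕ)
    · simp only [h, if_true]; exact h1 i
    · simp [h]
  simp only [this]
  rw [sum_ind N k hk]; ring

lemma l2_tendsto {α : Type*} [MeasurableSpace α] {μ : Measure α} {f g : ℕ → α → ℝ} {f' g' : α → ℝ}
    (hf : ∀ n, MemLp (f n) 2 μ) (hg : ∀ n, MemLp (g n) 2 μ) (hf' : MemLp f' 2 μ) (hg' : MemLp g' 2 μ)
    (h1 : Tendsto (fun n => eLpNorm (f n - f') 2 μ) atTop (nhds 0))
    (h2 : Tendsto (fun n => eLpNorm (g n - g') 2 μ) atTop (nhds 0)) :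
    Tendsto (fun n => ∫ x, f n x * g n x ∂μ) atTop (nhds (∫ x, f' x * g' x ∂μ)) := by
  have e {a b : α → ℝ} (ha : MemLp a 2 μ) (hb : MemLp b 2 μ) :
      ∫ x, a x * b x ∂μ = inner ℝ (hb.toLp b) (ha.toLp a) := by
    rw [L2.inner_def]
    refine integral_congr_ae ?_
    filter_upwards [ha.coeFn_toLp, hb.coeFn_toLp] with x h h'
    simp [h, h']
  rw [← Lp.tendsto_Lp_iff_tendsto_eLpNorm'' f hf f' hf'] at h1
  rw [← Lp.tendsto_Lp_iff_tendsto_eLpNorm'' g hg g' hg'] at h2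
  rw [e hf' hg']
  simp only [e (hf _) (hg _)]
  exact h2.inner h1

end Hardy
namespace Hardy

lemma core1 (N k : ℕ) (hN : 3 ≤ N) (hk : k ≤ N - 1) (v : Euc N → ℝ)
    (φ : ℕ → Euc N → ℝ) (p : ENNReal) (hp : p = ENNReal.ofReal (2 * (N : ℝ) / ((N : ℝ) - 2)))
    (hφ : ∀ n, ContDiff ℝ (⊤ : ℕ∞) (φ n) ∧ HasCompactSupport (φ n))
    (h1 : Tendsto (fun n => eLpNorm (fun x => v x - φ n x) p volume) atTop (nhds 0))
    (h2 : Tendsto (fun n => eLpNorm (fun x => fderiv ℝ v x - fderiv ℝ (φ n) x) 2 volume)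
      atTop (nhds 0))
    (hw : Integrable (fun x => (sq N k x)⁻¹ * v x ^ 2)) :
    ∃ ψ : Euc N → ℝ, MemLp ψ p ∧ (∀ᵐ x, ψ x ^ 2 = v x ^ 2) ∧
      Tendsto (fun n => eLpNorm (fun x => φ n x - ψ x) p volume) atTop (nhds 0) := by
  have hNr : (3 : ℝ) ≤ N := by exact_mod_cast hN
  have hq : 1 ≤ 2 * (N : ℝ) / ((N : ℝ) - 2) := by
    rw [le_div_iff₀ (by linarith)]; linarith
  have hp1 : 1 ≤ p := by
    rw [hp]; exact ENNReal.one_le_ofReal.2 hq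
  have hfact : Fact (1 ≤ p) := ⟨hp1⟩
  have hφ1 (n) : ContDiff ℝ 1 (φ n) := (hφ n).1.of_le (by exact_mod_cast le_top)
  have hφd (n) : Continuous (fderiv ℝ (φ n)) := (hφ1 n).continuous_fderiv (by simp)
  have hφp (n) : MemLp (φ n) p := (hφ n).1.continuous.memLp_of_hasCompactSupport (hφ n).2
  have hGm : AEStronglyMeasurable (fderiv ℝ v) volume :=
    (measurable_fderiv ℝ v).aestronglyMeasurable
  obtain ⟨C, hC⟩ : ∃ C : NNReal, ∀ n m, eLpNorm (φ n - φ m) p volume ≤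
      C * eLpNorm (fderiv ℝ (φ n - φ m)) 2 volume := by
    refine ⟨SNormLESNormFDerivOfEqConst ℝ (volume : Measure (Euc N)) 2, fun n m => ?_⟩
    rw [hp]
    refine eLpNorm_le_eLpNorm_fderiv_of_eq (F := ℝ) (p := 2) volume ((hφ1 n).sub (hφ1 m))
      ((hφ n).2.sub (hφ m).2) (by norm_num) (by simp; omega) ?_
    rw [Real.coe_toNNReal _ (by linarith)]
    simp only [finrank_euclideanSpace, Fintype.card_fin, NNReal.coe_inv, NNReal.coe_ofNat]
    have : (N : ℝ) - 2 ≠ 0 := by linarith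
    have : (N : ℝ) ≠ 0 := by linarith
    field_simp
  let a : ℕ → ENNReal := fun n => eLpNorm (fun x => fderiv ℝ v x - fderiv ℝ (φ n) x) 2 volume
  have hD (n m) : eLpNorm (fderiv ℝ (φ n - φ m)) 2 volume ≤ a n + a m := by
    have e : fderiv ℝ (φ n - φ m) = (fun x => fderiv ℝ v x - fderiv ℝ (φ m) x) -
        (fun x => fderiv ℝ v x - fderiv ℝ (φ n) x) := by
      ext1 x
      rw [fderiv_sub ((hφ1 n).differentiable (by simp) x) ((hφ1 m).differentiable (by simp) x)]
      simp
    rw [e, add_comm]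
    exact eLpNorm_sub_le (hGm.sub (hφd m).aestronglyMeasurable)
      (hGm.sub (hφd n).aestronglyMeasurable) (by norm_num)
  have hcauchy : CauchySeq (fun n => (hφp n).toLp (φ n)) := by
    rw [Lp.cauchySeq_Lp_iff_cauchySeq_eLpNorm]
    have hlim : Tendsto (fun n : ℕ × ℕ => C * (a n.1 + a n.2)) atTop (nhds 0) := by
      have t1 : Tendsto (fun n : ℕ × ℕ => a n.1) atTop (nhds 0) :=
        h2.comp (by rw [← prod_atTop_atTop_eq]; exact tendsto_fst)
      have t2 : Tendsto (fun n : ℕ × ℕ => a n.2) atTop (nhds 0) :=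
        h2.comp (by rw [← prod_atTop_atTop_eq]; exact tendsto_snd)
      have := ENNReal.Tendsto.const_mul (a := (C : ENNReal)) (t1.add t2) (Or.inr ENNReal.coe_ne_top)
      simpa using this
    refine tendsto_of_tendsto_of_tendsto_of_le_of_le tendsto_const_nhds hlim (fun _ => zero_le) ?_
    intro n
    have e : eLpNorm (⇑((hφp n.1).toLp (φ n.1)) - ⇑((hφp n.2).toLp (φ n.2))) p volume =
        eLpNorm (φ n.1 - φ n.2) p volume :=
      eLpNorm_congr_ae ((hφp n.1).coeFn_toLp.sub (hφp n.2).coeFn_toLp)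
    calc _ = _ := e
      _ ≤ _ := hC _ _
      _ ≤ _ := mul_le_mul' le_rfl (hD _ _)
  obtain ⟨ψ, hψ⟩ := cauchySeq_tendsto_of_complete hcauchy
  rw [Lp.tendsto_Lp_iff_tendsto_eLpNorm'] at hψ
  have hψ' : Tendsto (fun n => eLpNorm (fun x => φ n x - ψ x) p volume) atTop (nhds 0) := by
    refine hψ.congr fun n => ?_
    exact eLpNorm_congr_ae ((hφp n).coeFn_toLp.sub (EventuallyEq.refl _ _))
  refine ⟨ψ, Lp.memLp ψ, ?_, hψ'⟩
  have hpos := sq_pos_ae N k hN hk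
  have hvm : AEStronglyMeasurable (fun x => |v x|) volume := by
    have : AEStronglyMeasurable (fun x => √(sq N k x * ((sq N k x)⁻¹ * v x ^ 2))) volume := by
      refine Real.continuous_sqrt.comp_aestronglyMeasurable ?_
      exact (sq_contDiff N k (n := 0)).continuous.aestronglyMeasurable.mul hw.1
    refine this.congr ?_
    filter_upwards [hpos] with x hx
    rw [mul_inv_cancel_left₀ hx.ne', Real.sqrt_sq_eq_abs]
  have hψm : AEStronglyMeasurable (fun x => |ψ x|) volume :=
    continuous_abs.comp_aestronglyMeasurable (Lp.memLp ψ).1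
  have hz : eLpNorm (fun x => |v x| - |ψ x|) p volume = 0 := by
    have hb (n) : eLpNorm (fun x => |v x| - |ψ x|) p volume ≤
        eLpNorm (fun x => v x - φ n x) p volume + eLpNorm (fun x => φ n x - ψ x) p volume := by
      have hφm : AEStronglyMeasurable (fun x => |φ n x|) volume :=
        (hφ n).1.continuous.abs.aestronglyMeasurable
      calc eLpNorm (fun x => |v x| - |ψ x|) p volume
          = eLpNorm ((fun x => |v x| - |φ n x|) + (fun x => |φ n x| - |ψ x|)) p volume := by
            congr 1; ext x; simp
        _ ≤ _ := eLpNorm_add_le (hvm.sub hφm) (hφm.sub hψm) hp1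
        _ ≤ _ := by
            gcongr
            · refine eLpNorm_mono fun x => ?_
              exact abs_abs_sub_abs_le_abs_sub _ _
            · refine eLpNorm_mono fun x => ?_
              exact abs_abs_sub_abs_le_abs_sub _ _
    have hlim := h1.add hψ'
    rw [add_zero] at hlim
    exact le_antisymm (ge_of_tendsto' hlim hb) zero_le
  replace hz := (eLpNorm_eq_zero_iff (hvm.sub hψm) (zero_lt_one.trans_le hp1).ne').1 hz
  filter_upwards [hz] with x hx
  have : |v x| = |ψ x| := by
    simpa [sub_eq_zero] using hx
  rw [← sq_abs, ← this, sq_abs]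

lemma memLp_of_sub {α E : Type*} [MeasurableSpace α] {μ : Measure α} [NormedAddCommGroup E]
    {f g : α → E} {p : ENNReal} (h1 : MemLp (fun x => f x - g x) p μ) (h2 : MemLp g p μ) :
    MemLp f p μ := by
  have h := h1.add h2
  have e : (fun x => f x - g x) + g = f := by ext1 x; simp
  rwa [e] at h

lemma smooth_id (N k : ℕ) (hk : k ≤ N - 1) (f h : Euc N → ℝ) (hf1 : ContDiff ℝ 1 f)
    (hfc : HasCompactSupport f) (hh : ContDiff ℝ 1 h) (hhc : HasCompactSupport h) :
    ∫ x, f x * (2 * h x * fderiv ℝ f x (P N k x)) =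
      - ∫ x, f x * ((((N : ℝ) - k) * h x + fderiv ℝ h x (P N k x)) * f x) := by
  have hfd : Continuous (fderiv ℝ f) := hf1.continuous_fderiv (by simp)
  have hhd : Continuous (fderiv ℝ h) := hh.continuous_fderiv (by simp)
  have hF : ContDiff ℝ 1 (fun x => h x * f x ^ 2) := hh.mul (hf1.pow 2)
  have := div_int N k (by omega) (fun x => h x * f x ^ 2) hF hhc.mul_right
  have hder (x) : fderiv ℝ (fun x => h x * f x ^ 2) x (P N k x) =
      f x ^ 2 * fderiv ℝ h x (P N k x) +
        f x * (2 * h x * fderiv ℝ f x (P N k x)) := by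
    have a1 := (hh.differentiable (by simp) x).hasFDerivAt
    have a2 := (hf1.differentiable (by simp) x).hasFDerivAt
    have a3 : HasFDerivAt (fun x => h x * f x ^ 2) _ x := a1.mul (a2.pow 2)
    rw [a3.fderiv]
    simp
    ring
  simp only [hder] at this
  rw [eq_neg_iff_add_eq_zero, ← this, ← integral_add]
  · congr 1; ext x; ring
  · refine Continuous.integrable_of_hasCompactSupport ?_ hfc.mul_right
    have := hf1.continuous
    fun_prop
  · refine Continuous.integrable_of_hasCompactSupport ?_ hfc.mul_right
    have := hf1.continuous
    have := hh.continuous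
    fun_prop

set_option maxHeartbeats 1000000 in
lemma core2 (N k : ℕ) (hN : 3 ≤ N) (hk : k ≤ N - 1) (v : Euc N → ℝ)
    (hv : MemD12 N v)
    (hw : Integrable (fun x => (sq N k x)⁻¹ * v x ^ 2)) :
    ∃ ψ : Euc N → ℝ, AEStronglyMeasurable ψ volume ∧ (∀ᵐ x, ψ x ^ 2 = v x ^ 2) ∧
      MemLp (fderiv ℝ v) 2 volume ∧
      ∀ h : Euc N → ℝ, ContDiff ℝ 1 h → HasCompactSupport h →
        ∫ x, h x * (2 * ψ x * fderiv ℝ v x (P N k x)) =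
          - ∫ x, ψ x ^ 2 * (((N : ℝ) - k) * h x + fderiv ℝ h x (P N k x)) := by
  obtain ⟨φ, hφ, h1, h2⟩ := hv
  obtain ⟨p, hp⟩ : ∃ p, p = ENNReal.ofReal (2 * (N : ℝ) / ((N : ℝ) - 2)) := ⟨_, rfl⟩
  rw [← hp] at h1
  obtain ⟨ψ, hψp, hψv, hψ⟩ := core1 N k hN hk v φ p hp hφ h1 h2 hw
  have hNr : (3 : ℝ) ≤ N := by exact_mod_cast hN
  have hp2 : 2 ≤ p := by
    rw [hp, show (2 : ENNReal) = ENNReal.ofReal 2 by simp]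
    apply ENNReal.ofReal_le_ofReal
    rw [le_div_iff₀ (by linarith)]; linarith
  have hφ1 (n) : ContDiff ℝ 1 (φ n) := (hφ n).1.of_le (by exact_mod_cast le_top)
  have hφd (n) : Continuous (fderiv ℝ (φ n)) := (hφ1 n).continuous_fderiv (by simp)
  have hφ2 (n) : MemLp (φ n) 2 := (hφ n).1.continuous.memLp_of_hasCompactSupport (hφ n).2
  have hDφ2 (n) : MemLp (fderiv ℝ (φ n)) 2 :=
    (hφd n).memLp_of_hasCompactSupport ((hφ n).2.fderiv ℝ)
  have hGm : AEStronglyMeasurable (fderiv ℝ v) volume :=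
    (measurable_fderiv ℝ v).aestronglyMeasurable
  have hG2 : MemLp (fderiv ℝ v) 2 volume := by
    obtain ⟨n, hn⟩ := (ENNReal.tendsto_nhds_zero.1 h2 1 one_pos).exists
    have : MemLp (fun x => fderiv ℝ v x - fderiv ℝ (φ n) x) 2 volume :=
      ⟨hGm.sub (hφd n).aestronglyMeasurable, hn.trans_lt ENNReal.one_lt_top⟩
    exact memLp_of_sub this (hDφ2 n)
  refine ⟨ψ, hψp.1, hψv, hG2, fun h hh hhc => ?_⟩
  have hhd : Continuous (fderiv ℝ h) := hh.continuous_fderiv (by simp)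
  have hid (n) := smooth_id N k hk (φ n) h (hφ1 n) (hφ n).2 hh hhc
  set K := tsupport h with hKdef
  have hK : IsCompact K := hhc
  let μ : Measure (Euc N) := volume.restrict K
  have hfin : IsFiniteMeasure μ := ⟨by simpa [μ] using hK.measure_lt_top⟩
  have hsupp (x) (hx : x ∉ K) : h x = 0 ∧ fderiv ℝ h x = 0 := by
    refine ⟨image_eq_zero_of_notMem_tsupport hx, ?_⟩
    by_contra hne
    exact hx (support_fderiv_subset ℝ hne)
  have hrestr (f : Euc N → ℝ) (hf : ∀ x, x ∉ K → f x = 0) : ∫ x, f x = ∫ x, f x ∂μ := by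
    rw [setIntegral_eq_integral_of_forall_compl_eq_zero hf]
  have hψ2 : MemLp ψ 2 μ := (hψp.restrict K).mono_exponent hp2
  have hexp : 0 ≤ 1 / ENNReal.toReal 2 - 1 / p.toReal := by
    have : (2 : ENNReal).toReal ≤ p.toReal := ENNReal.toReal_mono (by simp [hp]) hp2
    have h0 : 0 < (2 : ENNReal).toReal := by simp
    exact sub_nonneg.2 (one_div_le_one_div_of_le h0 this)
  have hconv : Tendsto (fun n => eLpNorm (φ n - ψ) 2 μ) atTop (nhds 0) := by
    have hb (n) : eLpNorm (φ n - ψ) 2 μ ≤ eLpNorm (fun x => φ n x - ψ x) p volume *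
        μ univ ^ (1 / ENNReal.toReal 2 - 1 / p.toReal) := by
      refine (eLpNorm_le_eLpNorm_mul_rpow_measure_univ hp2 ?_).trans ?_
      · exact (((hφ n).1.continuous.aestronglyMeasurable).sub hψp.1).restrict
      · gcongr
        exact eLpNorm_mono_measure _ Measure.restrict_le_self
    have hlim : Tendsto (fun n => eLpNorm (fun x => φ n x - ψ x) p volume *
        μ univ ^ (1 / ENNReal.toReal 2 - 1 / p.toReal)) atTop (nhds 0) := by
      have := ENNReal.Tendsto.mul_const (b := μ univ ^ (1 / ENNReal.toReal 2 - 1 / p.toReal)) hψ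
        (Or.inr ?_)
      · simpa using this
      · refine ENNReal.rpow_ne_top_of_nonneg ?_ (measure_ne_top _ _)
        exact hexp
    exact tendsto_of_tendsto_of_tendsto_of_le_of_le tendsto_const_nhds hlim (fun _ => zero_le) hb
  have hPx : Continuous fun x => P N k x := (P N k).continuous
  have hhcont := hh.continuous
  obtain ⟨M, hM⟩ : ∃ M : ℝ, ∀ x, ‖2 * h x * ‖P N k x‖‖ ≤ M := by
    refine Continuous.bounded_above_of_compact_support (f := fun x => 2 * h x * ‖P N k x‖)
      (by fun_prop) ?_
    exact (HasCompactSupport.mul_left hhc).mul_right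
  set q : Euc N → ℝ := fun x => ((N : ℝ) - k) * h x + fderiv ℝ h x (P N k x) with hqdef
  have hqc : Continuous q := by simp only [hqdef]; fun_prop
  obtain ⟨M', hM'⟩ : ∃ M : ℝ, ∀ x, ‖q x‖ ≤ M := by
    refine Continuous.bounded_above_of_compact_support hqc ?_
    refine HasCompactSupport.intro hK fun x hx => ?_
    simp [hqdef, hsupp x hx]
  have happ {G : Euc N → Euc N →L[ℝ] ℝ} (hG : AEStronglyMeasurable G μ) :
      AEStronglyMeasurable (fun x => 2 * h x * G x (P N k x)) μ := by
    refine (Continuous.aestronglyMeasurable (by fun_prop)).mul ?_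
    exact isBoundedBilinearMap_apply.continuous.comp_aestronglyMeasurable
      (hG.prodMk hPx.aestronglyMeasurable)
  have hbd (G : Euc N →L[ℝ] ℝ) (x : Euc N) : ‖2 * h x * G (P N k x)‖ ≤ M * ‖G‖ := by
    calc ‖2 * h x * G (P N k x)‖ ≤ ‖2 * h x‖ * (‖G‖ * ‖P N k x‖) := by
          rw [norm_mul]; gcongr; exact G.le_opNorm _
      _ = ‖2 * h x * ‖P N k x‖‖ * ‖G‖ := by rw [norm_mul _ ‖P N k x‖, norm_norm]; ring
      _ ≤ _ := by gcongr; exact hM x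
  have hlp {G : Euc N → Euc N →L[ℝ] ℝ} (hG : MemLp G 2 volume) :
      MemLp (fun x => 2 * h x * G x (P N k x)) 2 μ :=
    (hG.restrict K).of_le_mul (c := M) (happ (hG.restrict K).1) (ae_of_all _ fun x => hbd (G x) x)
  have hqlp {f : Euc N → ℝ} (hf : MemLp f 2 μ) : MemLp (fun x => q x * f x) 2 μ :=
    hf.of_le_mul (c := M') (hqc.aestronglyMeasurable.mul hf.1) (ae_of_all _ fun x => by
      rw [norm_mul]; gcongr; exact hM' x)
  have T1 : Tendsto (fun n => ∫ x, φ n x * (2 * h x * fderiv ℝ (φ n) x (P N k x)) ∂μ) atTop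
      (nhds (∫ x, ψ x * (2 * h x * fderiv ℝ v x (P N k x)) ∂μ)) := by
    refine l2_tendsto (fun n => (hφ2 n).restrict K) (fun n => hlp (hDφ2 n)) hψ2 (hlp hG2) hconv ?_
    have hlim := ENNReal.Tendsto.const_mul (a := ENNReal.ofReal M) h2
      (Or.inr ENNReal.ofReal_ne_top)
    rw [mul_zero] at hlim
    refine tendsto_of_tendsto_of_tendsto_of_le_of_le tendsto_const_nhds hlim (fun _ => zero_le) ?_
    intro n
    refine (eLpNorm_le_mul_eLpNorm_of_ae_le_mul
      (g := fun x => fderiv ℝ v x - fderiv ℝ (φ n) x) (c := M) (ae_of_all _ fun x => ?_) 2).trans ?_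
    · have := hbd (fderiv ℝ (φ n) x - fderiv ℝ v x) x
      rw [norm_sub_rev (fderiv ℝ v x)]
      refine le_trans (le_of_eq ?_) this
      simp only [Pi.sub_apply, sub_apply]
      rw [mul_sub]
    · exact mul_le_mul' le_rfl (eLpNorm_mono_measure _ Measure.restrict_le_self)
  have T2 : Tendsto (fun n => ∫ x, φ n x * (q x * φ n x) ∂μ) atTop
      (nhds (∫ x, ψ x * (q x * ψ x) ∂μ)) := by
    refine l2_tendsto (fun n => (hφ2 n).restrict K) (fun n => hqlp ((hφ2 n).restrict K)) hψ2
      (hqlp hψ2) hconv ?_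
    have hlim := ENNReal.Tendsto.const_mul (a := ENNReal.ofReal M') hconv
      (Or.inr ENNReal.ofReal_ne_top)
    rw [mul_zero] at hlim
    refine tendsto_of_tendsto_of_tendsto_of_le_of_le tendsto_const_nhds hlim (fun _ => zero_le) ?_
    intro n
    refine eLpNorm_le_mul_eLpNorm_of_ae_le_mul (ae_of_all _ fun x => ?_) 2
    simp only [Pi.sub_apply]
    rw [← mul_sub, norm_mul]; gcongr; exact hM' x
  have R1 (n) : ∫ x, φ n x * (2 * h x * fderiv ℝ (φ n) x (P N k x)) ∂μ =
      - ∫ x, φ n x * (q x * φ n x) ∂μ := by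
    rw [← hrestr, ← hrestr]
    · exact hid n
    · intro x hx; simp [hqdef, hsupp x hx]
    · intro x hx; simp [hsupp x hx]
  have := tendsto_nhds_unique T1 ((T2.neg).congr fun n => (R1 n).symm)
  rw [← hrestr, ← hrestr] at this
  · convert this using 2
    · ext x; ring
    · refine integral_congr_ae (ae_of_all _ fun x => ?_); simp only [hqdef]; ring
  · intro x hx; simp [hqdef, hsupp x hx]
  · intro x hx; simp [hsupp x hx]

end Hardy
namespace Hardy

lemma exists_cutoff (N : ℕ) : ∃ χ : Euc N → ℝ, ContDiff ℝ (⊤ : ℕ∞) χ ∧ HasCompactSupport χ ∧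
    (∀ x, ‖x‖ ≤ 1 → χ x = 1) ∧ (∀ x, 2 ≤ ‖x‖ → χ x = 0) ∧ (∀ x, 0 ≤ χ x) ∧ (∀ x, χ x ≤ 1) := by
  let b : ContDiffBump (0 : Euc N) := ⟨1, 2, one_pos, one_lt_two⟩
  refine ⟨b, b.contDiff, b.hasCompactSupport, fun x hx => ?_, fun x hx => ?_,
    fun x => b.nonneg, fun x => b.le_one⟩
  · exact b.one_of_mem_closedBall (by simpa [b] using hx)
  · exact b.zero_of_le_dist (by simpa [b] using hx)

lemma lim_id (N k : ℕ) (hN : 3 ≤ N) (hk : k ≤ N - 1) (ψ : Euc N → ℝ)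
    (G : Euc N → Euc N →L[ℝ] ℝ)
    (hψ : AEStronglyMeasurable ψ volume)
    (hw : Integrable (fun x => (sq N k x)⁻¹ * ψ x ^ 2)) (hG : MemLp G 2 volume)
    (hid : ∀ h : Euc N → ℝ, ContDiff ℝ 1 h → HasCompactSupport h →
        ∫ x, h x * (2 * ψ x * G x (P N k x)) =
          - ∫ x, ψ x ^ 2 * (((N : ℝ) - k) * h x + fderiv ℝ h x (P N k x)))
    (ε : ℕ → ℝ) (e : ℝ) (hε : ∀ n, 0 < ε n) (he : 0 ≤ e) (hlim : Tendsto ε atTop (nhds e)) :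
    ∫ x, (sq N k x + e)⁻¹ * (2 * ψ x * G x (P N k x)) =
      - ∫ x, ψ x ^ 2 * (((N : ℝ) - k) * (sq N k x + e)⁻¹
          - 2 * sq N k x * ((sq N k x + e) ^ 2)⁻¹) := by
  obtain ⟨χ, hχs, hχc, hχ1, -, hχ0, hχle⟩ := exists_cutoff N
  have hχ1' : ContDiff ℝ 1 χ := hχs.of_le (by exact_mod_cast le_top)
  have hχd : Continuous (fderiv ℝ χ) := hχ1'.continuous_fderiv (by simp)
  have hχcont := hχ1'.continuous
  obtain ⟨C, hC⟩ : ∃ C : ℝ, ∀ x, ‖‖fderiv ℝ χ x‖ * ‖x‖‖ ≤ C := by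
    refine Continuous.bounded_above_of_compact_support (by fun_prop) ?_
    exact ((hχc.fderiv ℝ).norm).mul_right
  have hC0 : 0 ≤ C := (norm_nonneg _).trans (hC 0)
  let c : ℕ → ℝ := fun n => ((n : ℝ) + 1)⁻¹
  have hcpos (n) : 0 < c n := by positivity
  have hclim : Tendsto c atTop (nhds 0) := by
    simpa [c] using tendsto_one_div_add_atTop_nhds_zero_nat (𝕜 := ℝ)
  let s : Euc N → ℝ := sq N k
  have hs0 (x) : 0 ≤ s x := sq_nonneg' N k x
  have hscont : Continuous s := (sq_contDiff N k (n := 0)).continuous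
  let h : ℕ → Euc N → ℝ := fun n x => χ (c n • x) * (s x + ε n)⁻¹
  have hpos (n x) : 0 < s x + ε n := add_pos_of_nonneg_of_pos (hs0 x) (hε n)
  have hh (n) : ContDiff ℝ 1 (h n) := by
    refine ContDiff.mul (hχ1'.comp (contDiff_const_smul _)) (ContDiff.inv ?_ fun x => (hpos n x).ne')
    exact (sq_contDiff N k).add contDiff_const
  have hhc (n) : HasCompactSupport (h n) := by
    refine HasCompactSupport.mul_right (f := fun x => χ (c n • x)) ?_
    exact hχc.comp_smul (hcpos n).ne'
  have hder (n x) : fderiv ℝ (h n) x (P N k x) =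
      fderiv ℝ χ (c n • x) (c n • P N k x) * (s x + ε n)⁻¹
        - χ (c n • x) * (2 * s x * ((s x + ε n) ^ 2)⁻¹) := by
    have a1 : HasFDerivAt (fun x => χ (c n • x)) (c n • fderiv ℝ χ (c n • x)) x := by
      have b1 : HasFDerivAt (fun x : Euc N => c n • x) (c n • ContinuousLinearMap.id ℝ (Euc N)) x :=
        (hasFDerivAt_id x).const_smul (c n)
      have b2 := ((hχ1'.differentiable (by simp)) (c n • x)).hasFDerivAt.comp x b1
      convert! b2 using 1
      ext y; simp
    have a2 : HasFDerivAt (fun x => s x + ε n) (fderiv ℝ (sq N k) x) x :=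
      (((sq_contDiff N k (n := 1)).differentiable (by simp)) x).hasFDerivAt.add_const _
    have a3 := (hasDerivAt_inv (hpos n x).ne').comp_hasFDerivAt x a2
    have a4 : HasFDerivAt (h n) _ x := a1.mul a3
    rw [a4.fderiv]
    have := fderiv_sq_P N k x
    simp [this, s]
    ring
  have hmain (n) := hid (h n) (hh n) (hhc n)
  simp only [hder] at hmain
  have hae := sq_pos_ae N k hN hk
  have hPc : Continuous fun x => P N k x := (P N k).continuous
  have happ : AEStronglyMeasurable (fun x => G x (P N k x)) volume :=
    isBoundedBilinearMap_apply.continuous.comp_aestronglyMeasurable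
      (hG.1.prodMk hPc.aestronglyMeasurable)
  have hG2 : Integrable (fun x => ‖G x‖ ^ 2) := hG.integrable_norm_pow (by norm_num)
  have hcx (x : Euc N) : Tendsto (fun n => c n • x) atTop (nhds 0) := by
    simpa using hclim.smul_const x
  have hχlim (x : Euc N) : Tendsto (fun n => χ (c n • x)) atTop (nhds 1) := by
    have := (hχcont.tendsto 0).comp (hcx x)
    rwa [hχ1 0 (by simp)] at this
  have hilim (x : Euc N) (hx : 0 < s x) : Tendsto (fun n => (s x + ε n)⁻¹) atTop
      (nhds (s x + e)⁻¹) :=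
    (hlim.const_add (s x)).inv₀ (by positivity)
  have hdlim (x : Euc N) : Tendsto (fun n => fderiv ℝ χ (c n • x) (c n • P N k x)) atTop
      (nhds 0) := by
    have h1 : Tendsto (fun n => fderiv ℝ χ (c n • x)) atTop (nhds (fderiv ℝ χ 0)) :=
      (hχd.tendsto 0).comp (hcx x)
    have h2 := (isBoundedBilinearMap_apply (𝕜 := ℝ) (E := Euc N) (F := ℝ)).continuous.tendsto
      (fderiv ℝ χ 0, 0) |>.comp (h1.prodMk_nhds (hcx (P N k x)))
    simpa [Function.comp_def] using h2
  have hinv (n x) (hx : 0 < s x) : (s x + ε n)⁻¹ ≤ (s x)⁻¹ :=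
    inv_anti₀ hx (by linarith [hε n])
  have L1 : Tendsto (fun n => ∫ x, h n x * (2 * ψ x * G x (P N k x))) atTop
      (nhds (∫ x, (s x + e)⁻¹ * (2 * ψ x * G x (P N k x)))) := by
    refine tendsto_integral_of_dominated_convergence
      (fun x => (sq N k x)⁻¹ * ψ x ^ 2 + ‖G x‖ ^ 2) (fun n => ?_) (hw.add hG2) (fun n => ?_) ?_
    · exact (hh n).continuous.aestronglyMeasurable.mul ((hψ.const_mul 2).mul happ)
    · filter_upwards [hae] with x hx
      have h1 : ‖h n x‖ ≤ (s x)⁻¹ := by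
        rw [norm_mul, Real.norm_of_nonneg (hχ0 _), Real.norm_of_nonneg (inv_pos.2 (hpos n x)).le]
        calc _ ≤ 1 * (s x + ε n)⁻¹ := by
              gcongr
              · exact (inv_pos.2 (hpos n x)).le
              · exact hχle _
          _ ≤ _ := by rw [one_mul]; exact hinv n x hx
      have hPpos : ‖P N k x‖ ≠ 0 := by
        intro h0
        have := norm_P_sq N k x
        rw [h0] at this; simp at this; linarith
      calc ‖h n x * (2 * ψ x * G x (P N k x))‖
          = ‖h n x‖ * (2 * |ψ x| * ‖G x (P N k x)‖) := by simp [norm_mul]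
        _ ≤ (s x)⁻¹ * (2 * |ψ x| * (‖G x‖ * ‖P N k x‖)) := by
            gcongr
            exact (G x).le_opNorm _
        _ = 2 * (|ψ x| / ‖P N k x‖) * ‖G x‖ := by
            simp only [s]; rw [← norm_P_sq]; field_simp
        _ ≤ (|ψ x| / ‖P N k x‖) ^ 2 + ‖G x‖ ^ 2 := two_mul_le_add_sq _ _
        _ = _ := by rw [← norm_P_sq, div_pow, sq_abs]; ring
    · filter_upwards [hae] with x hx
      refine Tendsto.mul_const _ ?_
      simpa using (hχlim x).mul (hilim x hx)
  have L2 : Tendsto (fun n => ∫ x, ψ x ^ 2 * (((N : ℝ) - k) * h n x +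
      (fderiv ℝ χ (c n • x) (c n • P N k x) * (s x + ε n)⁻¹
        - χ (c n • x) * (2 * s x * ((s x + ε n) ^ 2)⁻¹)))) atTop
      (nhds (∫ x, ψ x ^ 2 * (((N : ℝ) - k) * (sq N k x + e)⁻¹
          - 2 * sq N k x * ((sq N k x + e) ^ 2)⁻¹))) := by
    refine tendsto_integral_of_dominated_convergence
      (fun x => (|(N : ℝ) - k| + C + 2) * ((sq N k x)⁻¹ * ψ x ^ 2)) (fun n => ?_)
      (hw.const_mul _) (fun n => ?_) ?_
    · refine (hψ.pow 2).mul (Continuous.aestronglyMeasurable ?_)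
      have := (hh n).continuous
      have hp := fun x => (hpos n x).ne'
      have hp2 := fun x => (pow_pos (hpos n x) 2).ne'
      fun_prop (disch := assumption)
    · filter_upwards [hae] with x hx
      have i0 := (inv_pos.2 (hpos n x)).le
      have d1 : |fderiv ℝ χ (c n • x) (c n • P N k x)| ≤ C := by
        calc _ ≤ ‖fderiv ℝ χ (c n • x)‖ * ‖c n • P N k x‖ := (fderiv ℝ χ (c n • x)).le_opNorm _
          _ ≤ ‖fderiv ℝ χ (c n • x)‖ * ‖c n • x‖ := by
              gcongr ?_ * ?_
              rw [norm_smul, norm_smul]; gcongr; exact norm_P_le N k x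
          _ ≤ _ := (le_abs_self _).trans (hC _)
      have hs1 : s x * (s x + ε n)⁻¹ ≤ 1 := by
        rw [← div_eq_mul_inv, div_le_one (hpos n x)]; linarith [hε n]
      have key : |((N : ℝ) - k) * h n x +
          (fderiv ℝ χ (c n • x) (c n • P N k x) * (s x + ε n)⁻¹
          - χ (c n • x) * (2 * s x * ((s x + ε n) ^ 2)⁻¹))| ≤
          (|(N : ℝ) - k| + C + 2) * (s x + ε n)⁻¹ := by
        have e1 : ((N : ℝ) - k) * h n x +
          (fderiv ℝ χ (c n • x) (c n • P N k x) * (s x + ε n)⁻¹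
          - χ (c n • x) * (2 * s x * ((s x + ε n) ^ 2)⁻¹)) =
          (((N : ℝ) - k) * χ (c n • x) + fderiv ℝ χ (c n • x) (c n • P N k x)
            - χ (c n • x) * (2 * (s x * (s x + ε n)⁻¹))) * (s x + ε n)⁻¹ := by
          simp only [h]; rw [← inv_pow]; ring
        rw [e1, abs_mul, abs_of_nonneg i0]
        gcongr
        refine (abs_sub _ _).trans (add_le_add ((abs_add_le _ _).trans (add_le_add ?_ d1)) ?_)
        · rw [abs_mul, abs_of_nonneg (hχ0 _)]
          exact mul_le_of_le_one_right (abs_nonneg _) (hχle _)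
        · have : 0 ≤ s x * (s x + ε n)⁻¹ := mul_nonneg (hs0 x) i0
          rw [abs_of_nonneg (mul_nonneg (hχ0 _) (by linarith))]
          nlinarith [hχ0 (c n • x), hχle (c n • x)]
      rw [norm_mul, Real.norm_eq_abs, Real.norm_eq_abs, abs_of_nonneg (by positivity)]
      calc _ ≤ ψ x ^ 2 * ((|(N : ℝ) - k| + C + 2) * (s x + ε n)⁻¹) := by gcongr
        _ ≤ ψ x ^ 2 * ((|(N : ℝ) - k| + C + 2) * (s x)⁻¹) := by gcongr; exact le_add_of_nonneg_right (hε n).le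
        _ = _ := by simp only [s]; ring
    · filter_upwards [hae] with x hx
      have t1 := (((hχlim x).mul (hilim x hx)).const_mul ((N : ℝ) - k))
      have t2 := (hdlim x).mul (hilim x hx)
      have t3 := (hχlim x).mul (((hilim x hx).pow 2).const_mul (2 * s x))
      have := (t1.add (t2.sub t3)).const_mul (ψ x ^ 2)
      simp only [inv_pow] at this
      convert! this using 2
      simp only [s]; ring
  exact tendsto_nhds_unique L1 (L2.neg.congr fun n => (hmain n).symm)

end Hardy
namespace Hardy

lemma part1 (N k : ℕ) (hN : 3 ≤ N) (hk : k ≤ N - 1) (v : Euc N → ℝ)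
    (hv : MemD12 N v)
    (hw : Integrable (fun x => (sq N k x)⁻¹ * v x ^ 2)) :
    ((((N : ℝ) - k - 2) / 2) ^ 2) * ∫ x, (sq N k x)⁻¹ * v x ^ 2 ≤ gradL2 N v ∧
    (gradL2 N v = ((((N : ℝ) - k - 2) / 2) ^ 2) * ∫ x, (sq N k x)⁻¹ * v x ^ 2 →
      v =ᵐ[volume] (0 : Euc N → ℝ)) := by
  obtain ⟨ψ, hψ, hψv, hG, hid⟩ := core2 N k hN hk v hv hw
  obtain ⟨G, hGe⟩ : ∃ G, G = fderiv ℝ v := ⟨_, rfl⟩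
  rw [gradL2]
  rw [← hGe] at hG hid ⊢
  obtain ⟨α, hα⟩ : ∃ α, α = ((N : ℝ) - k - 2) / 2 := ⟨_, rfl⟩
  rw [← hα]
  have hw' : Integrable (fun x => (sq N k x)⁻¹ * ψ x ^ 2) := by
    refine hw.congr ?_
    filter_upwards [hψv] with x hx
    rw [hx]
  have hW : ∫ x, (sq N k x)⁻¹ * v x ^ 2 = ∫ x, (sq N k x)⁻¹ * ψ x ^ 2 := by
    refine integral_congr_ae ?_
    filter_upwards [hψv] with x hx
    rw [hx]
  rw [hW]
  have hae := sq_pos_ae N k hN hk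
  have hPc : Continuous fun x => P N k x := (P N k).continuous
  have hscont : Continuous (sq N k) := (sq_contDiff N k (n := 0)).continuous
  have happ : AEStronglyMeasurable (fun x => G x (P N k x)) volume :=
    isBoundedBilinearMap_apply.continuous.comp_aestronglyMeasurable
      (hG.1.prodMk hPc.aestronglyMeasurable)
  have hG2 : Integrable (fun x => ‖G x‖ ^ 2) := hG.integrable_norm_pow (by norm_num)
  have i0 := lim_id N k hN hk ψ G hψ hw' hG hid (fun n => ((n : ℝ) + 1)⁻¹) 0
    (fun n => by positivity) le_rfl
    (by simpa using tendsto_one_div_add_atTop_nhds_zero_nat (𝕜 := ℝ))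
  have i1 := lim_id N k hN hk ψ G hψ hw' hG hid (fun n => 1) 1
    (fun n => by positivity) zero_le_one tendsto_const_nhds
  simp only [add_zero] at i0
  have hbd (x : Euc N) (hx : 0 < sq N k x) : (sq N k x)⁻¹ * (G x (P N k x)) ^ 2 ≤ ‖G x‖ ^ 2 := by
    have h1 : (G x (P N k x)) ^ 2 ≤ ‖G x‖ ^ 2 * sq N k x := by
      rw [← norm_P_sq, ← mul_pow, ← sq_abs]
      gcongr
      exact (G x).le_opNorm _
    rw [inv_mul_le_iff₀ hx]; linarith
  have hA : Integrable (fun x => (sq N k x)⁻¹ * (2 * ψ x * G x (P N k x))) := by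
    refine (hw'.add hG2).mono' ?_ ?_
    · exact hscont.measurable.inv.aestronglyMeasurable.mul ((hψ.const_mul 2).mul happ)
    · filter_upwards [hae] with x hx
      have h1 := hbd x hx
      have h2 : 0 < (sq N k x)⁻¹ := inv_pos.2 hx
      simp only [Pi.add_apply]
      rw [Real.norm_eq_abs, abs_le]
      constructor
      · nlinarith [mul_nonneg h2.le (sq_nonneg (ψ x + G x (P N k x)))]
      · nlinarith [mul_nonneg h2.le (sq_nonneg (ψ x - G x (P N k x)))]
  have i0' : ∫ x, (sq N k x)⁻¹ * (2 * ψ x * G x (P N k x)) =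
      - (2 * α) * ∫ x, (sq N k x)⁻¹ * ψ x ^ 2 := by
    rw [i0, neg_mul, ← integral_const_mul]
    congr 1
    refine integral_congr_ae ?_
    filter_upwards [hae] with x hx
    rw [hα]
    field_simp
  have hQ : Integrable (fun x => ‖G x‖ ^ 2 + α * ((sq N k x)⁻¹ * (2 * ψ x * G x (P N k x))) +
      α ^ 2 * ((sq N k x)⁻¹ * ψ x ^ 2)) :=
    (hG2.add (hA.const_mul α)).add (hw'.const_mul (α ^ 2))
  have hQi : ∫ x, (‖G x‖ ^ 2 + α * ((sq N k x)⁻¹ * (2 * ψ x * G x (P N k x))) +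
      α ^ 2 * ((sq N k x)⁻¹ * ψ x ^ 2)) =
      (∫ x, ‖G x‖ ^ 2) - α ^ 2 * ∫ x, (sq N k x)⁻¹ * ψ x ^ 2 := by
    have hsum : Integrable (fun x => ‖G x‖ ^ 2 +
      α * ((sq N k x)⁻¹ * (2 * ψ x * G x (P N k x)))) := hG2.add (hA.const_mul α)
    rw [integral_add hsum (hw'.const_mul (α ^ 2)),
      integral_add hG2 (hA.const_mul α), integral_const_mul, integral_const_mul, i0']
    ring
  have hQge : ∀ᵐ x, (sq N k x)⁻¹ * (G x (P N k x) + α * ψ x) ^ 2 ≤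
      ‖G x‖ ^ 2 + α * ((sq N k x)⁻¹ * (2 * ψ x * G x (P N k x))) +
      α ^ 2 * ((sq N k x)⁻¹ * ψ x ^ 2) := by
    filter_upwards [hae] with x hx
    have := hbd x hx
    linarith
  have hQ0 : 0 ≤ᵐ[volume] (fun x => ‖G x‖ ^ 2 + α * ((sq N k x)⁻¹ * (2 * ψ x * G x (P N k x))) +
      α ^ 2 * ((sq N k x)⁻¹ * ψ x ^ 2)) := by
    filter_upwards [hQge, hae] with x hx h0
    exact le_trans (by positivity) hx
  refine ⟨?_, fun heq => ?_⟩
  · have := integral_nonneg_of_ae hQ0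
    rw [hQi] at this; linarith
  · rw [heq, sub_self] at hQi
    have hz := (integral_eq_zero_iff_of_nonneg_ae hQ0 hQ).1 hQi
    have hGP : ∀ᵐ x, G x (P N k x) = - α * ψ x := by
      filter_upwards [hz, hQge, hae] with x h1 h2 h3
      simp only [Pi.zero_apply] at h1
      rw [h1] at h2
      have h4 : 0 < (sq N k x)⁻¹ := inv_pos.2 h3
      have h5 : (G x (P N k x) + α * ψ x) ^ 2 ≤ 0 := by
        by_contra h
        push Not at h
        have := mul_pos h4 h
        linarith
      have h6 := pow_eq_zero_iff (two_ne_zero) |>.1 (le_antisymm h5 (_root_.sq_nonneg _))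
      linarith
    have hp1 (x) : 0 < sq N k x + 1 := by have := sq_nonneg' N k x; linarith
    have hV : Integrable (fun x => (sq N k x + 1)⁻¹ * ψ x ^ 2) := by
      refine hw'.mono' ?_ ?_
      · exact (hscont.measurable.add_const 1).inv.aestronglyMeasurable.mul (hψ.pow 2)
      · filter_upwards [hae] with x hx
        have := hp1 x
        rw [Real.norm_of_nonneg (by positivity)]
        gcongr
        linarith
    have hV2 : Integrable (fun x => ((sq N k x + 1)^2)⁻¹ * ψ x ^ 2) := by
      refine hV.mono' ?_ ?_
      · exact ((hscont.measurable.add_const 1).pow_const 2).inv.aestronglyMeasurable.mul (hψ.pow 2)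
      · filter_upwards [hae] with x hx
        have := hp1 x
        rw [Real.norm_of_nonneg (by positivity)]
        gcongr
        nlinarith
    have j1 : ∫ x, (sq N k x + 1)⁻¹ * (2 * ψ x * G x (P N k x)) =
        - (2 * α) * ∫ x, (sq N k x + 1)⁻¹ * ψ x ^ 2 := by
      rw [← integral_const_mul]
      refine integral_congr_ae ?_
      filter_upwards [hGP] with x hx
      rw [hx]; ring
    have j2 : ∫ x, ψ x ^ 2 * (((N : ℝ) - k) * (sq N k x + 1)⁻¹
          - 2 * sq N k x * ((sq N k x + 1) ^ 2)⁻¹) =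
        (2 * α) * (∫ x, (sq N k x + 1)⁻¹ * ψ x ^ 2) +
          2 * ∫ x, ((sq N k x + 1) ^ 2)⁻¹ * ψ x ^ 2 := by
      rw [← integral_const_mul, ← integral_const_mul,
        ← integral_add (hV.const_mul _) (hV2.const_mul _)]
      refine integral_congr_ae (Eventually.of_forall fun x => ?_)
      have := (hp1 x).ne'
      simp only [hα]
      field_simp
      ring
    rw [j1, j2] at i1
    have hzero : ∫ x, ((sq N k x + 1) ^ 2)⁻¹ * ψ x ^ 2 = 0 := by linarith
    have hz2 := (integral_eq_zero_iff_of_nonneg_ae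
      (Eventually.of_forall fun x => by
        have := hp1 x
        simp only [Pi.zero_apply]; positivity) hV2).1 hzero
    filter_upwards [hz2, hψv] with x h1 h2
    have := hp1 x
    simp only [Pi.zero_apply, mul_eq_zero, inv_eq_zero] at h1
    rcases h1 with h1 | h1
    · exact absurd h1 (by positivity)
    · rw [h1] at h2
      simpa using h2.symm

lemma part1a (N k : ℕ) (hN : 3 ≤ N) (hk : k ≤ N - 1) (v : Euc N → ℝ) (hv : MemD12 N v) :
    ((((N : ℝ) - k - 2) / 2) ^ 2) * ∫ x, (sq N k x)⁻¹ * v x ^ 2 ≤ gradL2 N v := by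
  by_cases hw : Integrable (fun x => (sq N k x)⁻¹ * v x ^ 2)
  · exact (part1 N k hN hk v hv hw).1
  · rw [integral_undef hw, mul_zero]
    exact integral_nonneg fun x => by positivity

end Hardy
namespace Hardy

lemma prod_ind (N k : ℕ) (a : ℝ) :
    (∏ i : Fin N, if k ≤ (i : ℕ) then a else 1) = a ^ (N - k) := by
  rw [Fin.prod_univ_eq_prod_range (fun i => if k ≤ i then a else 1) N, ← Finset.prod_filter,
    Finset.prod_const]
  have : Finset.filter (fun i : ℕ => k ≤ i) (Finset.range N) = Finset.Ico k N := by
    ext; simp; tauto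
  rw [this, Nat.card_Ico]

lemma coord_ne_ae (N : ℕ) : ∀ᵐ x : Euc N, ∀ i, x i ≠ 0 := by
  rw [ae_all_iff]
  intro i
  let L : Euc N →L[ℝ] ℝ := EuclideanSpace.proj i
  have hL : (LinearMap.ker (L : Euc N →ₗ[ℝ] ℝ)) ≠ ⊤ := by
    intro h
    have : EuclideanSpace.single i (1 : ℝ) ∈ LinearMap.ker (L : Euc N →ₗ[ℝ] ℝ) := by
      rw [h]; trivial
    simp [L] at this
  have h0 := Measure.addHaar_submodule (volume : Measure (Euc N)) _ hL
  rw [← compl_mem_ae_iff] at h0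
  filter_upwards [h0] with x hx
  intro h; apply hx; simpa [L] using h

/-- coordinate box -/
def box (N : ℕ) (a b : Fin N → ℝ) : Set (Euc N) := {x : Euc N | ∀ i, x i ∈ Set.Icc (a i) (b i)}

lemma box_real (N : ℕ) (a b : Fin N → ℝ) (h : ∀ i, a i ≤ b i) :
    volume.real (box N a b) = ∏ i, (b i - a i) := by
  rw [measureReal_def, box, box_vol, ENNReal.toReal_prod]
  exact Finset.prod_congr rfl fun i _ => ENNReal.toReal_ofReal (by linarith [h i])

lemma box_fin (N : ℕ) (a b : Fin N → ℝ) : volume (box N a b) < ⊤ := by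
  rw [box, box_vol]
  exact ENNReal.prod_lt_top fun i _ => ENNReal.ofReal_lt_top

lemma sq_ge_coord (N k : ℕ) (x : Euc N) (i : Fin N) (hi : k ≤ (i : ℕ)) : (x i) ^ 2 ≤ sq N k x := by
  rw [sq]
  have := Finset.single_le_sum (f := fun i : Fin N => if k ≤ (i : ℕ) then (x i) ^ 2 else 0)
    (fun j _ => by split_ifs <;> positivity) (Finset.mem_univ i)
  simpa [hi] using this

lemma integ_one (β : ℝ) (hβ : β < 1) :
    Integrable (Set.indicator (Set.Icc (-2 : ℝ) 2) (fun t => |t| ^ (-β))) := by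
  rw [integrable_indicator_iff measurableSet_Icc]
  have h1 : IntegrableOn (fun t : ℝ => |t| ^ (-β)) (Set.Icc 0 2) := by
    have := (intervalIntegral.intervalIntegrable_rpow' (a := 0) (b := 2) (r := -β) (by linarith))
    rw [intervalIntegrable_iff_integrableOn_Icc_of_le (by norm_num)] at this
    refine this.congr_fun (fun t ht => ?_) measurableSet_Icc
    simp [abs_of_nonneg ht.1]
  have h2 : IntegrableOn (fun t : ℝ => |t| ^ (-β)) (Set.Icc (-2) 0) := by
    have := h1.comp_neg
    simpa using this
  have := h2.union h1
  rwa [Set.Icc_union_Icc_eq_Icc (by norm_num) (by norm_num)] at this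

/-- local integrability of `|z|^{1-m}` -/
lemma integ_z (N k : ℕ) (hN : 3 ≤ N) (hk : k ≤ N - 1) :
    Integrable (Set.indicator (box N (fun _ => -2) (fun _ => 2))
      (fun x => sq N k x ^ (-((N : ℝ) - k - 1) / 2))) := by
  have hkN : (k : ℝ) + 1 ≤ N := by
    have : k + 1 ≤ N := by omega
    exact_mod_cast this
  obtain ⟨m, hm⟩ : ∃ m : ℝ, m = (N : ℝ) - k := ⟨_, rfl⟩
  have hm1 : 1 ≤ m := by linarith
  let g : Fin N → ℝ → ℝ := fun i =>
    Set.indicator (Set.Icc (-2 : ℝ) 2) (fun t => |t| ^ (-(if k ≤ (i : ℕ) then (m - 1) / m else 0)))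
  have hg (i) : Integrable (g i) := by
    refine integ_one _ ?_
    split_ifs
    · rw [div_lt_one (by linarith)]; linarith
    · norm_num
  have h1 : Integrable (fun x : Fin N → ℝ => ∏ i, g i (x i)) := Integrable.fintype_prod hg
  have h2 : Integrable (fun x : Euc N => ∏ i, g i (x i)) :=
    (PiLp.volume_preserving_ofLp (Fin N)).integrable_comp_of_integrable h1
  refine h2.mono' ?_ ?_
  · have hs : Measurable (sq N k) := (sq_contDiff N k (n := 0)).continuous.measurable
    exact ((hs.pow_const _).indicator (box_meas N _ _)).aestronglyMeasurable
  · filter_upwards [coord_ne_ae N, sq_pos_ae N k hN hk] with x hx hs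
    by_cases hb : x ∈ box N (fun _ => -2) (fun _ => 2)
    · rw [Set.indicator_of_mem hb, Real.norm_of_nonneg (by positivity)]
      have e1 (i : Fin N) : g i (x i) = |x i| ^ (-(if k ≤ (i : ℕ) then (m - 1) / m else 0)) :=
        Set.indicator_of_mem (hb i) _
      simp only [e1]
      have e2 : sq N k x ^ (-((N : ℝ) - k - 1) / 2) =
          ∏ i : Fin N, sq N k x ^ (if k ≤ (i : ℕ) then -((m - 1) / (2 * m)) else 0) := by
        rw [← Real.rpow_sum_of_pos hs, sum_ind N k (by omega), ← hm]
        congr 1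
        field_simp
      rw [e2]
      refine Finset.prod_le_prod (fun i _ => by positivity) fun i _ => ?_
      split_ifs with hi
      · have hxi : 0 < (x i) ^ 2 := by have := hx i; positivity
        calc sq N k x ^ (-((m - 1) / (2 * m))) ≤ ((x i) ^ 2) ^ (-((m - 1) / (2 * m))) := by
              refine Real.rpow_le_rpow_of_nonpos hxi (sq_ge_coord N k x i hi) ?_
              have : 0 ≤ (m - 1) / (2 * m) := div_nonneg (by linarith) (by linarith)
              linarith
          _ = _ := by
              rw [← sq_abs, ← Real.rpow_natCast, ← Real.rpow_mul (abs_nonneg _)]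
              congr 1
              push_cast
              field_simp
      · simp
    · rw [Set.indicator_of_notMem hb, norm_zero]
      refine Finset.prod_nonneg fun i _ => Set.indicator_nonneg (fun t _ => by positivity) _

lemma exists_theta : ∃ (Θ : ℝ → ℝ) (L : ℝ), ContDiff ℝ (⊤ : ℕ∞) Θ ∧ (∀ y, 0 ≤ Θ y) ∧
    (∀ y, Θ y ≤ 1) ∧ (∀ y, y ≤ 1 → Θ y = 0) ∧ (∀ y, 2 ≤ y → Θ y = 1) ∧ 0 ≤ L ∧
    (∀ y, |2 * y * deriv Θ y| ≤ L) ∧ (∀ y, y ∉ Set.Icc (1 : ℝ) 2 → deriv Θ y = 0) := by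
  let Θ : ℝ → ℝ := fun y => Real.smoothTransition (y - 1)
  have hs : ContDiff ℝ (⊤ : ℕ∞) Θ := Real.smoothTransition.contDiff.comp (by fun_prop)
  have hd : Continuous (deriv Θ) := hs.continuous_deriv (by exact_mod_cast le_top)
  have h0 : ∀ y, y ≤ 1 → Θ y = 0 := fun y hy =>
    Real.smoothTransition.zero_of_nonpos (by linarith)
  have h1 : ∀ y, 2 ≤ y → Θ y = 1 := fun y hy =>
    Real.smoothTransition.one_of_one_le (by linarith)
  have hz : ∀ y, y ∉ Set.Icc (1 : ℝ) 2 → deriv Θ y = 0 := by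
    intro y hy
    rw [Set.mem_Icc, not_and_or, not_le, not_le] at hy
    rcases hy with hy | hy
    · have : Θ =ᶠ[nhds y] fun _ => 0 := by
        filter_upwards [Iio_mem_nhds hy] with t ht using h0 t (le_of_lt ht)
      rw [this.deriv_eq]; simp
    · have : Θ =ᶠ[nhds y] fun _ => 1 := by
        filter_upwards [Ioi_mem_nhds hy] with t ht using h1 t (le_of_lt ht)
      rw [this.deriv_eq]; simp
  obtain ⟨L, hL⟩ := (isCompact_Icc (a := (1 : ℝ)) (b := 2)).exists_bound_of_continuousOn
    (f := fun y => 2 * y * deriv Θ y) (by fun_prop)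
  have hL0 : 0 ≤ L := (norm_nonneg _).trans (hL 1 (by simp))
  refine ⟨Θ, L, hs, fun y => Real.smoothTransition.nonneg _, fun y => Real.smoothTransition.le_one _,
    h0, h1, hL0, fun y => ?_, hz⟩
  by_cases hy : y ∈ Set.Icc (1 : ℝ) 2
  · exact hL y hy
  · rw [hz y hy]; simpa using hL0

end Hardy
namespace Hardy

/-- test functions -/
def tf (N k : ℕ) (Θ : ℝ → ℝ) (χ : Euc N → ℝ) (η : ℝ) (x : Euc N) : ℝ :=
  sq N k x ^ (-(((N : ℝ) - k - 2) / 2) / 2) * Θ (sq N k x / η) * χ x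

lemma tf_zero (N k : ℕ) (Θ : ℝ → ℝ) (χ : Euc N → ℝ) (η : ℝ) (hη : 0 < η)
    (h0 : ∀ y, y ≤ 1 → Θ y = 0) (x : Euc N) (hx : sq N k x ≤ η) : tf N k Θ χ η x = 0 := by
  rw [tf, h0 _ (by rwa [div_le_one hη])]; simp

lemma tf_contDiff (N k : ℕ) (Θ : ℝ → ℝ) (χ : Euc N → ℝ) (η : ℝ) (hη : 0 < η)
    (hΘ : ContDiff ℝ (⊤ : ℕ∞) Θ) (hχ : ContDiff ℝ (⊤ : ℕ∞) χ)
    (h0 : ∀ y, y ≤ 1 → Θ y = 0) : ContDiff ℝ (⊤ : ℕ∞) (tf N k Θ χ η) := by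
  rw [contDiff_iff_contDiffAt]
  intro x
  have hs : ContDiff ℝ (⊤ : ℕ∞) (sq N k) := sq_contDiff N k
  by_cases hx : sq N k x = 0
  · have : tf N k Θ χ η =ᶠ[nhds x] fun _ => 0 := by
      have h1 : ∀ᶠ y in nhds x, sq N k y < η :=
        hs.continuous.continuousAt.eventually_lt continuousAt_const (by rw [hx]; exact hη)
      filter_upwards [h1] with y hy using tf_zero N k Θ χ η hη h0 y hy.le
    exact contDiffAt_const.congr_of_eventuallyEq this
  · exact ((hs.contDiffAt.rpow_const_of_ne hx).mul
      (hΘ.contDiffAt.comp x (hs.contDiffAt.div_const η))).mul hχ.contDiffAt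

lemma tf_deriv (N k : ℕ) (Θ : ℝ → ℝ) (χ : Euc N → ℝ) (η : ℝ) (hη : 0 < η)
    (hΘ : ContDiff ℝ (⊤ : ℕ∞) Θ) (hχ : ContDiff ℝ (⊤ : ℕ∞) χ) (x : Euc N)
    (hx : 0 < sq N k x) (a q : ℝ) (ha : a = sq N k x ^ (-(((N : ℝ) - k - 2) / 2) / 2))
    (hq : q = ‖P N k x‖) :
    ‖fderiv ℝ (tf N k Θ χ η) x‖ ≤
      |- (((N : ℝ) - k - 2) / 2) * Θ (sq N k x / η) +
        2 * (sq N k x / η) * deriv Θ (sq N k x / η)| * (a / q) * |χ x| +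
      |a * Θ (sq N k x / η)| * ‖fderiv ℝ χ x‖ := by
  obtain ⟨α, hα⟩ : ∃ α, α = ((N : ℝ) - k - 2) / 2 := ⟨_, rfl⟩
  have hΘd : Differentiable ℝ Θ := hΘ.differentiable (by simp)
  have hχd : Differentiable ℝ χ := hχ.differentiable (by simp)
  have hsd : HasFDerivAt (sq N k) (fderiv ℝ (sq N k) x) x :=
    ((sq_contDiff N k (n := 1)).differentiable (by simp) x).hasFDerivAt
  obtain ⟨y, hy⟩ : ∃ y, y = sq N k x := ⟨_, rfl⟩
  have hy0 : 0 < y := by rw [hy]; exact hx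
  have d1 : HasDerivAt (fun t : ℝ => t ^ (-α / 2)) ((-α / 2) * y ^ (-α / 2 - 1)) y :=
    Real.hasDerivAt_rpow_const (Or.inl hy0.ne')
  have d2 : HasDerivAt (fun t : ℝ => Θ (t / η)) (deriv Θ (y / η) * (1 / η)) y :=
    (hΘd (y / η)).hasDerivAt.comp y ((hasDerivAt_id y).div_const η)
  have d3 : HasDerivAt (fun t : ℝ => t ^ (-α / 2) * Θ (t / η))
    ((-α / 2) * y ^ (-α / 2 - 1) * Θ (y / η) + y ^ (-α / 2) * (deriv Θ (y / η) * (1 / η))) y :=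
    d1.mul d2
  rw [hy] at d3
  have d4 := d3.comp_hasFDerivAt x hsd
  have d5 := d4.mul (hχd x).hasFDerivAt
  have d6 := d5.congr_of_eventuallyEq (f₁ := tf N k Θ χ η)
    (Eventually.of_forall fun z => by simp [tf, hα])
  rw [d6.fderiv]
  have hq2 : q ^ 2 = y := by rw [hq, hy, norm_P_sq]
  have hqn : 0 ≤ q := by rw [hq]; positivity
  have hq0 : 0 < q := lt_of_le_of_ne hqn (by rintro rfl; simp at hq2; linarith)
  rw [← hα] at ha ⊢
  rw [← hy] at ha ⊢
  have ha0 : 0 < a := by rw [ha]; positivity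
  have e1 : y ^ (-α / 2 - 1) = a / y := by rw [Real.rpow_sub_one hy0.ne', ha]
  rw [add_comm]
  refine (norm_add_le _ _).trans (add_le_add ?_ ?_)
  · rw [norm_smul, norm_smul, ← ha, e1]
    have h1 : ‖fderiv ℝ (sq N k) x‖ ≤ 2 * q := by rw [hq]; exact norm_fderiv_sq_le N k x
    have h2 : -α / 2 * (a / y) * Θ (y / η) + a * (deriv Θ (y / η) * (1 / η)) =
      (-α * Θ (y / η) + 2 * (y / η) * deriv Θ (y / η)) * (a / q) * (1 / (2 * q)) := by
      rw [← hq2]; field_simp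
    rw [h2, Real.norm_eq_abs, Real.norm_eq_abs, abs_mul, abs_mul _ (a / q),
      abs_of_pos (div_pos ha0 hq0), abs_of_pos (show 0 < 1 / (2 * q) by positivity)]
    calc _ ≤ |χ x| * (|-α * Θ (y / η) + 2 * (y / η) * deriv Θ (y / η)| * (a / q) * (1 / (2 * q)) *
          (2 * q)) := by gcongr
      _ = _ := by field_simp
  · rw [norm_smul, Real.norm_eq_abs]
    simp only [Function.comp_apply, ← hy, ← ha]
    exact le_rfl

set_option maxHeartbeats 1000000 in
lemma tf_bound (N k : ℕ) (Θ : ℝ → ℝ) (χ : Euc N → ℝ) (L C : ℝ)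
    (hk : k ≤ N - 1) (hN : 3 ≤ N)
    (hΘ : ContDiff ℝ (⊤ : ℕ∞) Θ) (hχ : ContDiff ℝ (⊤ : ℕ∞) χ)
    (t0 : ∀ y, 0 ≤ Θ y) (t1 : ∀ y, Θ y ≤ 1) (h0 : ∀ y, y ≤ 1 → Θ y = 0) (hL0 : 0 ≤ L)
    (hL : ∀ y, |2 * y * deriv Θ y| ≤ L) (hd : ∀ y, y ∉ Set.Icc (1 : ℝ) 2 → deriv Θ y = 0)
    (c0 : ∀ x, 0 ≤ χ x) (c1 : ∀ x, χ x ≤ 1) (c2 : ∀ x, 2 ≤ ‖x‖ → χ x = 0)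
    (hC0 : 0 ≤ C) (hC : ∀ x, ‖fderiv ℝ χ x‖ ≤ C) (α : ℝ) (hα : α = ((N : ℝ) - k - 2) / 2) :
    ∀ η : ℝ, 0 < η → ∀ x, ‖fderiv ℝ (tf N k Θ χ η) x‖ ^ 2 ≤
      α ^ 2 * ((sq N k x)⁻¹ * tf N k Θ χ η x ^ 2) +
      (2 * |α| * L + L ^ 2) * (Set.indicator (box N (fun i => -(if k ≤ (i : ℕ) then √(2 * η) else 2))
        (fun i => if k ≤ (i : ℕ) then √(2 * η) else 2)) (fun _ => η ^ (-((N : ℝ) - k) / 2)) x) +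
      (2 * (|α| + L) * C + 2 * C ^ 2) * (Set.indicator (box N (fun _ => -2) (fun _ => 2))
      (fun x => sq N k x ^ (-((N : ℝ) - k - 1) / 2)) x) := by
  intro η hη x
  have hkN : (k : ℝ) + 1 ≤ N := by
    have : k + 1 ≤ N := by omega
    exact_mod_cast this
  have hs0 := sq_nonneg' N k x
  have T1 : 0 ≤ α ^ 2 * ((sq N k x)⁻¹ * tf N k Θ χ η x ^ 2) := by positivity
  have T2 : 0 ≤ Set.indicator (box N (fun i => -(if k ≤ (i : ℕ) then √(2 * η) else 2))
        (fun i => if k ≤ (i : ℕ) then √(2 * η) else 2)) (fun _ => η ^ (-((N : ℝ) - k) / 2)) x :=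
    Set.indicator_nonneg (fun _ _ => by positivity) _
  have T3 : 0 ≤ Set.indicator (box N (fun _ => -2) (fun _ => 2))
      (fun x => sq N k x ^ (-((N : ℝ) - k - 1) / 2)) x :=
    Set.indicator_nonneg (fun x _ => Real.rpow_nonneg (sq_nonneg' N k x) _) _
  have K1 : 0 ≤ 2 * |α| * L + L ^ 2 := by positivity
  have K2 : 0 ≤ 2 * (|α| + L) * C + 2 * C ^ 2 := by positivity
  have hscont : Continuous (sq N k) := (sq_contDiff N k (n := 0)).continuous
  have zcase : tf N k Θ χ η =ᶠ[nhds x] (fun _ => 0) → ‖fderiv ℝ (tf N k Θ χ η) x‖ ^ 2 = 0 := by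
    intro h; rw [h.fderiv_eq]; simp
  by_cases hx2 : 2 < ‖x‖
  · rw [zcase ?_]
    · positivity
    · filter_upwards [continuous_norm.continuousAt.eventually (lt_mem_nhds hx2)] with y hy
      rw [tf, c2 y (le_of_lt hy)]; simp
  by_cases hsη : sq N k x < η
  · rw [zcase ?_]
    · positivity
    · filter_upwards [hscont.continuousAt.eventually (gt_mem_nhds hsη)] with y hy
      exact tf_zero N k Θ χ η hη h0 y (le_of_lt hy)
  push Not at hx2 hsη
  have hs : 0 < sq N k x := by linarith
  obtain ⟨y, hy⟩ : ∃ y, y = sq N k x := ⟨_, rfl⟩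
  obtain ⟨a, ha⟩ : ∃ a, a = sq N k x ^ (-(((N : ℝ) - k - 2) / 2) / 2) := ⟨_, rfl⟩
  obtain ⟨q, hq⟩ : ∃ q, q = ‖P N k x‖ := ⟨_, rfl⟩
  have hder := tf_deriv N k Θ χ η hη hΘ hχ x hs a q ha hq
  have htf : tf N k Θ χ η x = a * Θ (y / η) * χ x := by rw [tf, ← ha, hy]
  have hq2 : q ^ 2 = y := by rw [hq, hy, norm_P_sq]
  have hqle : q ≤ 2 := by rw [hq]; exact (norm_P_le N k x).trans hx2
  have hy0 : 0 < y := by rw [hy]; exact hs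
  have hqn : 0 ≤ q := by rw [hq]; positivity
  have hq0 : 0 < q := lt_of_le_of_ne hqn (by rintro rfl; simp at hq2; linarith)
  have hqr : q = y ^ (1 / 2 : ℝ) := by
    rw [← hq2, ← Real.rpow_natCast, ← Real.rpow_mul hqn]; norm_num
  have ha0 : 0 < a := by rw [ha]; positivity
  rw [← hα, ← hy] at ha hder
  have hbox : x ∈ box N (fun _ => -2) (fun _ => 2) := by
    intro i
    have := (PiLp.norm_apply_le x i).trans hx2
    rw [Real.norm_eq_abs, abs_le] at this
    exact this
  have E2 : a ^ 2 / q = y ^ (-((N : ℝ) - k - 1) / 2) := by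
    rw [ha, hqr, ← Real.rpow_natCast, ← Real.rpow_mul hy0.le, ← Real.rpow_sub hy0]
    congr 1
    rw [hα]; push_cast; ring
  have E1 : a ^ 2 / q ^ 2 = y ^ (-((N : ℝ) - k) / 2) := by
    rw [ha, hqr, ← Real.rpow_natCast, ← Real.rpow_natCast, ← Real.rpow_mul hy0.le,
      ← Real.rpow_mul hy0.le, ← Real.rpow_sub hy0]
    congr 1
    rw [hα]; push_cast; ring
  rw [Set.indicator_of_mem hbox, htf, ← hy, ← E2]
  obtain ⟨Λ, hΛ⟩ : ∃ Λ, Λ = 2 * (y / η) * deriv Θ (y / η) := ⟨_, rfl⟩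
  obtain ⟨θ, hθ⟩ : ∃ θ, θ = Θ (y / η) := ⟨_, rfl⟩
  have hΛL : |Λ| ≤ L := by rw [hΛ]; exact hL _
  have hθ0 : 0 ≤ θ := by rw [hθ]; exact t0 _
  have hθ1 : θ ≤ 1 := by rw [hθ]; exact t1 _
  rw [← hΛ, ← hθ] at hder
  rw [← hθ]
  have hχ0 := c0 x
  have hχ1 := c1 x
  rw [abs_of_nonneg hχ0, abs_of_nonneg (mul_nonneg ha0.le hθ0)] at hder
  have hAab : |-α * θ + Λ| ≤ |α| + L := by
    refine (abs_add_le _ _).trans (add_le_add ?_ hΛL)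
    rw [abs_mul, abs_neg, abs_of_nonneg hθ0]
    exact mul_le_of_le_one_right (abs_nonneg _) hθ1
  have hB : a * θ * ‖fderiv ℝ χ x‖ ≤ a * C := by
    have := hC x
    calc _ ≤ a * 1 * C := by gcongr
      _ = _ := by ring
  have S1 : ‖fderiv ℝ (tf N k Θ χ η) x‖ ^ 2 ≤
      (-α * θ + Λ) ^ 2 * (a ^ 2 / q ^ 2) * χ x ^ 2 + (2 * (|α| + L) * C + 2 * C ^ 2) * (a ^ 2 / q) := by
    calc _ ≤ (|-α * θ + Λ| * (a / q) * χ x + a * C) ^ 2 := by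
          gcongr
          linarith
      _ = (-α * θ + Λ) ^ 2 * (a ^ 2 / q ^ 2) * χ x ^ 2 + 2 * |-α * θ + Λ| * C * χ x * (a ^ 2 / q) +
          C ^ 2 * q * (a ^ 2 / q) := by
          rw [← sq_abs (-α * θ + Λ)]
          field_simp
          ring
      _ ≤ (-α * θ + Λ) ^ 2 * (a ^ 2 / q ^ 2) * χ x ^ 2 + 2 * (|α| + L) * C * 1 * (a ^ 2 / q) +
          C ^ 2 * 2 * (a ^ 2 / q) := by gcongr
      _ = _ := by ring
  have S2 : (-α * θ + Λ) ^ 2 * (a ^ 2 / q ^ 2) * χ x ^ 2 ≤ α ^ 2 * (y⁻¹ * (a * θ * χ x) ^ 2) +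
      (2 * |α| * L + L ^ 2) * (Set.indicator (box N (fun i => -(if k ≤ (i : ℕ) then √(2 * η) else 2))
        (fun i => if k ≤ (i : ℕ) then √(2 * η) else 2)) (fun _ => η ^ (-((N : ℝ) - k) / 2)) x) := by
    by_cases hyη : y / η ∈ Set.Icc (1 : ℝ) 2
    · have hmem : x ∈ box N (fun i => -(if k ≤ (i : ℕ) then √(2 * η) else 2))
        (fun i => if k ≤ (i : ℕ) then √(2 * η) else 2) := by
        intro i
        rw [Set.mem_Icc, ← abs_le]
        split_ifs with hi
        · apply Real.abs_le_sqrt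
          have := sq_ge_coord N k x i hi
          have h3 := hyη.2
          rw [div_le_iff₀ hη] at h3
          linarith
        · exact (PiLp.norm_apply_le x i).trans hx2
      rw [Set.indicator_of_mem hmem]
      have hE : a ^ 2 / q ^ 2 ≤ η ^ (-((N : ℝ) - k) / 2) := by
        rw [E1]
        refine Real.rpow_le_rpow_of_nonpos hη (by linarith) (by linarith)
      have hsqr : (-α * θ + Λ) ^ 2 ≤ α ^ 2 * θ ^ 2 + (2 * |α| * L + L ^ 2) := by
        have g1 : -(α * θ * Λ) ≤ |α| * L := by
          refine (neg_le_abs _).trans ?_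
          rw [abs_mul, abs_mul, abs_of_nonneg hθ0]
          calc |α| * θ * |Λ| ≤ |α| * 1 * L := by gcongr
            _ = _ := by ring
        have g2 : Λ ^ 2 ≤ L ^ 2 := by rw [← sq_abs]; gcongr
        have g3 : (-α * θ + Λ) ^ 2 = α ^ 2 * θ ^ 2 + 2 * (-(α * θ * Λ)) + Λ ^ 2 := by ring
        rw [g3]; linarith
      calc _ ≤ (α ^ 2 * θ ^ 2 + (2 * |α| * L + L ^ 2)) * (a ^ 2 / q ^ 2) * χ x ^ 2 := by gcongr
        _ = α ^ 2 * (y⁻¹ * (a * θ * χ x) ^ 2) +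
            (2 * |α| * L + L ^ 2) * (a ^ 2 / q ^ 2) * χ x ^ 2 := by
            rw [← hq2]; field_simp
        _ ≤ α ^ 2 * (y⁻¹ * (a * θ * χ x) ^ 2) +
            (2 * |α| * L + L ^ 2) * (η ^ (-((N : ℝ) - k) / 2)) * 1 ^ 2 := by gcongr
        _ = _ := by ring
    · have : Λ = 0 := by rw [hΛ, hd _ hyη]; ring
      rw [this]
      have e : (-α * θ + 0) ^ 2 * (a ^ 2 / q ^ 2) * χ x ^ 2 = α ^ 2 * (y⁻¹ * (a * θ * χ x) ^ 2) := by
        rw [← hq2]; field_simp; ring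
      rw [e]
      have := mul_nonneg K1 T2
      linarith
  linarith

end Hardy
namespace Hardy

lemma memD12_smooth (N : ℕ) (f : Euc N → ℝ) (h1 : ContDiff ℝ (⊤ : ℕ∞) f)
    (h2 : HasCompactSupport f) : MemD12 N f := by
  refine ⟨fun _ => f, fun _ => ⟨h1, h2⟩, by simp, ?_⟩
  have hz : ∀ p : ENNReal, eLpNorm (fun x : Euc N => fderiv ℝ f x - fderiv ℝ f x) p volume = 0 := by
    intro p
    refine (eLpNorm_congr_norm_ae (g := fun _ => (0 : ℝ)) (Eventually.of_forall fun x => ?_)).trans ?_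
    · rw [sub_self, norm_zero, norm_zero]
    · exact eLpNorm_zero'
  simp_rw [hz 2]
  exact tendsto_const_nhds

lemma measBox (N : ℕ) (a b : Fin N → ℝ) : MeasurableSet (box N a b) := box_meas N a b

lemma tf_int (N k : ℕ) (Θ : ℝ → ℝ) (χ : Euc N → ℝ) (η : ℝ) (hη : 0 < η)
    (hΘ : ContDiff ℝ (⊤ : ℕ∞) Θ) (hχ : ContDiff ℝ (⊤ : ℕ∞) χ) (hc : HasCompactSupport χ)
    (h0 : ∀ y, y ≤ 1 → Θ y = 0) :
    HasCompactSupport (tf N k Θ χ η) ∧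
    Integrable (fun x => (sq N k x)⁻¹ * tf N k Θ χ η x ^ 2) := by
  have hcs : HasCompactSupport (tf N k Θ χ η) := hc.mul_left
  have hsm := tf_contDiff N k Θ χ η hη hΘ hχ h0
  refine ⟨hcs, ?_⟩
  have hi : Integrable (fun x => tf N k Θ χ η x ^ 2) := by
    refine Continuous.integrable_of_hasCompactSupport (hsm.continuous.pow 2) ?_
    simp only [pow_two]
    exact hcs.mul_left
  have hs : Measurable (sq N k) := (sq_contDiff N k (n := 0)).continuous.measurable
  refine (hi.const_mul η⁻¹).mono' ?_ (Eventually.of_forall fun x => ?_)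
  · exact (hs.inv.mul (hsm.continuous.measurable.pow_const 2)).aestronglyMeasurable
  · have h1 := sq_nonneg' N k x
    rw [Real.norm_of_nonneg (by positivity)]
    by_cases hx : sq N k x ≤ η
    · rw [tf_zero N k Θ χ η hη h0 x hx]; simp
    · push Not at hx
      gcongr

lemma lower (N k : ℕ) (hN : 3 ≤ N) (hk : k ≤ N - 1) (Θ : ℝ → ℝ) (χ : Euc N → ℝ)
    (hΘ : ContDiff ℝ (⊤ : ℕ∞) Θ) (hχ : ContDiff ℝ (⊤ : ℕ∞) χ) (hc : HasCompactSupport χ)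
    (h0 : ∀ y, y ≤ 1 → Θ y = 0) (h1 : ∀ y, 2 ≤ y → Θ y = 1) (c1 : ∀ x, ‖x‖ ≤ 1 → χ x = 1) :
    ∃ c0 : ℝ, 0 < c0 ∧ ∀ J : ℕ, ∃ η : ℝ, 0 < η ∧
      J * c0 ≤ ∫ x, (sq N k x)⁻¹ * tf N k Θ χ η x ^ 2 := by
  have hkN : (k : ℝ) + 1 ≤ N := by
    have : k + 1 ≤ N := by omega
    exact_mod_cast this
  have hNr : (3 : ℝ) ≤ N := by exact_mod_cast hN
  obtain ⟨m, hm⟩ : ∃ m : ℝ, m = (N : ℝ) - k := ⟨_, rfl⟩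
  have hm1 : 1 ≤ m := by linarith
  have hmN : ((N - k : ℕ) : ℝ) = m := by rw [hm, Nat.cast_sub (by omega)]
  obtain ⟨ρ, hρ⟩ : ∃ ρ : ℝ, ρ = 1 / N := ⟨_, rfl⟩
  have hρ0 : 0 < ρ := by rw [hρ]; positivity
  have hρN : N * ρ ^ 2 ≤ 1 := by
    rw [hρ, show (N : ℝ) * (1 / N) ^ 2 = 1 / N by field_simp, div_le_one (by linarith)]
    linarith
  let r : ℕ → ℝ := fun j => ρ * (1 / 4) ^ j
  have hr0 (j) : 0 < r j := by positivity
  have hrρ (j) : r j ≤ ρ := mul_le_of_le_one_right hρ0.le (pow_le_one₀ (by norm_num) (by norm_num))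
  have hranti {i j : ℕ} (h : i ≤ j) : r j ≤ r i :=
    mul_le_mul_of_nonneg_left (pow_le_pow_of_le_one (by norm_num) (by norm_num) h) hρ0.le
  let lo : ℕ → Fin N → ℝ := fun j i => if k ≤ (i : ℕ) then r j / 2 else -ρ
  let hi : ℕ → Fin N → ℝ := fun j i => if k ≤ (i : ℕ) then r j else ρ
  let B : ℕ → Set (Euc N) := fun j => box N (lo j) (hi j)
  let i₀ : Fin N := ⟨N - 1, by omega⟩
  have hi₀ : k ≤ (i₀ : ℕ) := hk
  have hBi {j : ℕ} {x : Euc N} (hx : x ∈ B j) (i : Fin N) (h : k ≤ (i : ℕ)) :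
      r j / 2 ≤ x i ∧ x i ≤ r j := by
    have := hx i
    simpa [lo, hi, h] using this
  have hdisj : Pairwise fun i j => Disjoint (B i) (B j) := by
    have key : ∀ i j, i < j → Disjoint (B i) (B j) := by
      intro i j hij
      rw [Set.disjoint_left]
      intro x h1 h2
      have a1 := (hBi h1 i₀ hi₀).1
      have a2 := (hBi h2 i₀ hi₀).2
      have a3 : r j ≤ r (i + 1) := hranti hij
      have a4 : r (i + 1) = r i / 4 := by simp only [r, pow_succ]; ring
      have := hr0 i
      linarith
    intro i j hij
    rcases lt_or_gt_of_ne hij with h | h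
    · exact key i j h
    · exact (key j i h).symm
  obtain ⟨V, hV⟩ : ∃ V : ℝ, V = ∏ i : Fin N, (if k ≤ (i : ℕ) then (1 / 2 : ℝ) else 2 * ρ) := ⟨_, rfl⟩
  have hV0 : 0 < V := by
    rw [hV]
    exact Finset.prod_pos fun i _ => by split_ifs <;> positivity
  have hvol (j) : volume.real (B j) = V * r j ^ (N - k) := by
    rw [box_real, hV, ← prod_ind, ← Finset.prod_mul_distrib]
    · refine Finset.prod_congr rfl fun i _ => ?_
      simp only [lo, hi]
      split_ifs <;> ring
    · intro i
      have := hr0 j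
      simp only [lo, hi]
      split_ifs <;> linarith
  have hnorm {j : ℕ} {x : Euc N} (hx : x ∈ B j) : ‖x‖ ≤ 1 := by
    have : ‖x‖ ^ 2 ≤ 1 := by
      rw [EuclideanSpace.norm_sq_eq]
      refine le_trans ?_ hρN
      have : ∀ i ∈ Finset.univ, ‖x i‖ ^ 2 ≤ ρ ^ 2 := by
        intro i _
        have a := hx i
        have b := hrρ j
        have b0 := hr0 j
        rw [Real.norm_eq_abs, sq_le_sq₀ (abs_nonneg _) hρ0.le, abs_le]
        simp only [lo, hi, Set.mem_Icc] at a
        split_ifs at a <;> constructor <;> linarith [a.1, a.2]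
      simpa using Finset.sum_le_sum this
    nlinarith [norm_nonneg x]
  have hsle {j : ℕ} {x : Euc N} (hx : x ∈ B j) : sq N k x ≤ m * r j ^ 2 := by
    rw [hm, ← sum_ind N k (by omega), sq]
    refine Finset.sum_le_sum fun i _ => ?_
    split_ifs with h
    · have := hBi hx i h
      have := hr0 j
      exact pow_le_pow_left₀ (by linarith) (by linarith) 2
    · exact le_rfl
  have hsge {j : ℕ} {x : Euc N} (hx : x ∈ B j) : r j ^ 2 / 4 ≤ sq N k x := by
    have a := (hBi hx i₀ hi₀).1
    have := hr0 j
    refine le_trans ?_ (sq_ge_coord N k x i₀ hi₀)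
    calc r j ^ 2 / 4 = (r j / 2) ^ 2 := by ring
      _ ≤ _ := pow_le_pow_left₀ (by linarith) a 2
  refine ⟨m ^ (-m / 2) * V, by positivity, fun J => ?_⟩
  refine ⟨r J ^ 2 / 8, by have := hr0 J; positivity, ?_⟩
  obtain ⟨η, hη⟩ : ∃ η, η = r J ^ 2 / 8 := ⟨_, rfl⟩
  have hη0 : 0 < η := by have := hr0 J; rw [hη]; positivity
  rw [← hη]
  have hintg := (tf_int N k Θ χ η hη0 hΘ hχ hc h0).2
  have hpt (j) (hj : j < J) (x) (hx : x ∈ B j) : (m * r j ^ 2) ^ (-m / 2) ≤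
      (sq N k x)⁻¹ * tf N k Θ χ η x ^ 2 := by
    have hrj := hr0 j
    have g := hsge hx
    have hs : 0 < sq N k x := lt_of_lt_of_le (by positivity) g
    have hθ : Θ (sq N k x / η) = 1 := by
      apply h1
      rw [le_div_iff₀ hη0, hη]
      have : r J ^ 2 ≤ r j ^ 2 := pow_le_pow_left₀ (hr0 J).le (hranti hj.le) 2
      linarith
    have e : (sq N k x)⁻¹ * tf N k Θ χ η x ^ 2 = sq N k x ^ (-m / 2) := by
      rw [tf, hθ, c1 x (hnorm hx), mul_one, mul_one, ← Real.rpow_natCast, ← Real.rpow_mul hs.le,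
        ← Real.rpow_neg_one, ← Real.rpow_add hs]
      congr 1
      rw [hm]; push_cast; ring
    rw [e]
    exact Real.rpow_le_rpow_of_nonpos hs (hsle hx) (by linarith)
  have hU : ∫ x in ⋃ j ∈ Finset.range J, B j, (sq N k x)⁻¹ * tf N k Θ χ η x ^ 2 ≤
      ∫ x, (sq N k x)⁻¹ * tf N k Θ χ η x ^ 2 := by
    refine setIntegral_le_integral hintg (Eventually.of_forall fun x => ?_)
    have := sq_nonneg' N k x
    simp only [Pi.zero_apply]
    positivity
  refine le_trans ?_ hU
  rw [integral_biUnion_finset _ (fun j _ => measBox N _ _) (fun i _ j _ hij => hdisj hij)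
    (fun j _ => hintg.integrableOn)]
  have hterm : ∀ j ∈ Finset.range J, m ^ (-m / 2) * V ≤
      ∫ x in B j, (sq N k x)⁻¹ * tf N k Θ χ η x ^ 2 := by
    intro j hj
    have hrj := hr0 j
    have e : m ^ (-m / 2) * V = ∫ x in B j, (m * r j ^ 2) ^ (-m / 2) := by
      rw [setIntegral_const, hvol, smul_eq_mul, Real.mul_rpow (by linarith) (by positivity),
        ← Real.rpow_natCast (r j) 2, ← Real.rpow_natCast (r j) (N - k), hmN, ← Real.rpow_mul hrj.le]
      have : r j ^ m * r j ^ (((2 : ℕ) : ℝ) * (-m / 2)) = 1 := by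
        rw [← Real.rpow_add hrj]
        have : m + ((2 : ℕ) : ℝ) * (-m / 2) = 0 := by push_cast; ring
        rw [this, Real.rpow_zero]
      linear_combination (-(m ^ (-m / 2) * V)) * this
    rw [e]
    exact setIntegral_mono_on (integrableOn_const (box_fin N _ _).ne) hintg.integrableOn
      (measBox N _ _) (fun x hx => hpt j (Finset.mem_range.1 hj) x hx)
  simpa using Finset.sum_le_sum hterm

set_option maxHeartbeats 1000000 in
lemma optimal (N k : ℕ) (hN : 3 ≤ N) (hk : k ≤ N - 1) (c : ℝ)
    (h : ∀ v : Euc N → ℝ, MemD12 N v → c * ∫ x, (sq N k x)⁻¹ * v x ^ 2 ≤ gradL2 N v) :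
    c ≤ (((N : ℝ) - k - 2) / 2) ^ 2 := by
  obtain ⟨Θ, L, hΘ, t0, t1, h0, h1, hL0, hL, hd⟩ := exists_theta
  obtain ⟨χ, hχ, hχc, c1, c2, c0, cle⟩ := exists_cutoff N
  have hχd : Continuous (fderiv ℝ χ) := hχ.continuous_fderiv (by simp)
  obtain ⟨C, hC⟩ := hχd.bounded_above_of_compact_support (hχc.fderiv ℝ)
  have hC0 : 0 ≤ C := (norm_nonneg _).trans (hC 0)
  obtain ⟨α, hα⟩ : ∃ α, α = ((N : ℝ) - k - 2) / 2 := ⟨_, rfl⟩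
  have hb := tf_bound N k Θ χ L C hk hN hΘ hχ t0 t1 h0 hL0 hL hd c0 cle c2 hC0 hC α hα
  obtain ⟨d, hd0, hlow⟩ := lower N k hN hk Θ χ hΘ hχ hχc h0 h1 c1
  rw [← hα]
  by_contra hcon
  push Not at hcon
  obtain ⟨Z, hZ⟩ : ∃ Z, Z = ∫ x, (Set.indicator (box N (fun _ => -2) (fun _ => 2))
      (fun x => sq N k x ^ (-((N : ℝ) - k - 1) / 2)) x) := ⟨_, rfl⟩
  obtain ⟨V, hV⟩ : ∃ V : ℝ, V = ∏ i : Fin N, (if k ≤ (i : ℕ) then 2 * √2 else 4) := ⟨_, rfl⟩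
  obtain ⟨K1, hK1⟩ : ∃ K1, K1 = 2 * |α| * L + L ^ 2 := ⟨_, rfl⟩
  obtain ⟨K2, hK2⟩ : ∃ K2, K2 = 2 * (|α| + L) * C + 2 * C ^ 2 := ⟨_, rfl⟩
  rw [← hK1, ← hK2] at hb
  have main : ∀ η : ℝ, 0 < η → (c - α ^ 2) * ∫ x, (sq N k x)⁻¹ * tf N k Θ χ η x ^ 2 ≤
      K1 * V + K2 * Z := by
    intro η hη
    have hsm := tf_contDiff N k Θ χ η hη hΘ hχ h0
    obtain ⟨hcs, hintg⟩ := tf_int N k Θ χ η hη hΘ hχ hχc h0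
    have hmem : MemD12 N (tf N k Θ χ η) :=
      memD12_smooth N _ hsm hcs
    have hle := h _ hmem
    have hshell : volume.real (box N (fun i => -(if k ≤ (i : ℕ) then √(2 * η) else 2))
        (fun i => if k ≤ (i : ℕ) then √(2 * η) else 2)) = V * √η ^ (N - k) := by
      rw [box_real, hV, ← prod_ind, ← Finset.prod_mul_distrib]
      · refine Finset.prod_congr rfl fun i _ => ?_
        rw [Real.sqrt_mul (by norm_num)]
        split_ifs <;> ring
      · intro i
        have : 0 ≤ (if k ≤ (i : ℕ) then √(2 * η) else 2) := by split_ifs <;> positivity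
        linarith
    have i2 : Integrable (Set.indicator (box N (fun i => -(if k ≤ (i : ℕ) then √(2 * η) else 2))
        (fun i => if k ≤ (i : ℕ) then √(2 * η) else 2)) (fun _ => η ^ (-((N : ℝ) - k) / 2))) := by
      rw [integrable_indicator_iff (measBox N _ _)]
      exact integrableOn_const (box_fin N _ _).ne
    have i2v : ∫ x, Set.indicator (box N (fun i => -(if k ≤ (i : ℕ) then √(2 * η) else 2))
        (fun i => if k ≤ (i : ℕ) then √(2 * η) else 2)) (fun _ => η ^ (-((N : ℝ) - k) / 2)) x = V := by
      rw [integral_indicator (measBox N _ _), setIntegral_const, smul_eq_mul]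
      rw [hshell, Real.sqrt_eq_rpow, ← Real.rpow_natCast (η ^ (1 / 2 : ℝ)) (N - k),
        ← Real.rpow_mul hη.le, mul_assoc, ← Real.rpow_add hη, Nat.cast_sub (by omega)]
      rw [show (1 / 2 : ℝ) * ((N : ℝ) - k) + -((N : ℝ) - k) / 2 = 0 by ring, Real.rpow_zero, mul_one]
    have i3 := integ_z N k hN hk
    have hsum : Integrable (fun x => α ^ 2 * ((sq N k x)⁻¹ * tf N k Θ χ η x ^ 2) +
      K1 * (Set.indicator (box N (fun i => -(if k ≤ (i : ℕ) then √(2 * η) else 2))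
        (fun i => if k ≤ (i : ℕ) then √(2 * η) else 2)) (fun _ => η ^ (-((N : ℝ) - k) / 2)) x)) :=
      (hintg.const_mul _).add (i2.const_mul _)
    have hgr : gradL2 N (tf N k Θ χ η) ≤
        α ^ 2 * (∫ x, (sq N k x)⁻¹ * tf N k Θ χ η x ^ 2) + K1 * V + K2 * Z := by
      rw [gradL2, hZ]
      conv_rhs => rw [← i2v]
      rw [← integral_const_mul, ← integral_const_mul, ← integral_const_mul,
        ← integral_add (hintg.const_mul _) (i2.const_mul _),
        ← integral_add hsum (i3.const_mul _)]
      refine integral_mono_of_nonneg (Eventually.of_forall fun x => by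
        simp only [Pi.zero_apply]; positivity) (hsum.add (i3.const_mul _)) 
        (Eventually.of_forall fun x => hb η hη x)
    linarith
  obtain ⟨J, hJ⟩ := exists_nat_gt ((K1 * V + K2 * Z) / ((c - α ^ 2) * d))
  obtain ⟨η, hη, hJη⟩ := hlow J
  have hm := main η hη
  have hpos : 0 < c - α ^ 2 := by linarith
  rw [div_lt_iff₀ (mul_pos hpos hd0)] at hJ
  have := mul_le_mul_of_nonneg_left hJη hpos.le
  nlinarith

end Hardy
/-- The constant `((N-k-2)/2)²` in the cylindrical Hardy inequality is
optimal — it is the largest constant `c` such that `∫ |∇v|² ≥ c ∫ |z|^{-2} v²` for all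
`v ∈ D^{1,2}(ℝ^N)` (equivalently, it equals the infimum of the corresponding Rayleigh
quotients) — but it is never achieved: no nonzero `v ∈ D^{1,2}(ℝ^N)` realizes equality. -/
theorem statement2 (N k : ℕ) (hN : 3 ≤ N) (hk : k ≤ N - 1) (hexc : k ≠ N - 2) :
    IsGreatest {c : ℝ | ∀ v : Euc N → ℝ, MemD12 N v →
        c * ∫ x, zNorm N k x ^ (-(2 : ℝ)) * v x ^ 2 ≤ gradL2 N v}
      ((((N : ℝ) - k - 2) / 2) ^ 2) ∧
    ¬ ∃ v : Euc N → ℝ, MemD12 N v ∧ ¬ (v =ᵐ[volume] (0 : Euc N → ℝ)) ∧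
        Integrable (fun x => zNorm N k x ^ (-(2 : ℝ)) * v x ^ 2) ∧
        gradL2 N v =
          (((N : ℝ) - k - 2) / 2) ^ 2 * ∫ x, zNorm N k x ^ (-(2 : ℝ)) * v x ^ 2 := by
  simp only [Hardy.zNorm_rpow]
  refine ⟨⟨fun v hv => Hardy.part1a N k hN hk v hv, fun c hc => Hardy.optimal N k hN hk c hc⟩, ?_⟩
  rintro ⟨v, hv, hne, hi, heq⟩
  exact hne ((Hardy.part1 N k hN hk v hv hi).2 heq)
end
end
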